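/- arXiv:math/9412212 — 15 statements merged into one kernel-verified Lean document; each statement's English description precedes it below -/
import Mathlib

section
/- Let S be a compact Hausdorff space and let T : C(S) → C(S) be a bounded linear operator, where C(S) is the Banach space of real-valued continuous functions on S with the supremum norm. Then max(‖I + T‖, ‖I − T‖) = 1 + ‖T‖, where I is the identity operator. -/
open MeasureTheory Topology

/-!
Let `M` be the maximum on the left. If `‖g‖ ≤ 1` and `g s = ±1`, then one of the values
`(g ± T g) s` has modulus `1 + |T g s|`, so `|T g s| ≤ M - 1`. A general `f` in the unit ball is,
for each point `s`, within `δ` of a convex combination of two such functions: with `a = f s` and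
`φ = max 0 (1 - |f - a| / δ)`, a cutoff equal to `1` at `s` and vanishing where `|f - a| ≥ δ`, put
`g± = (1 - φ) f ± φ`. Then `f = (1 + a)/2 • g₊ + (1 - a)/2 • g₋ + φ (f - a)` and
`‖φ (f - a)‖ ≤ δ`. Hence `|T f s| ≤ M - 1 + δ ‖T‖`, and `δ → 0` gives `‖T‖ ≤ M - 1`.
-/

lemma one_add_abs_apply_le_max {S : Type*} [TopologicalSpace S] [CompactSpace S]
    (T : C(S, ℝ) →L[ℝ] C(S, ℝ)) (g : C(S, ℝ)) (hg : ‖g‖ ≤ 1) (s : S) (hs : |g s| = 1) :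
    1 + |T g s| ≤ max ‖ContinuousLinearMap.id ℝ C(S, ℝ) + T‖
      ‖ContinuousLinearMap.id ℝ C(S, ℝ) - T‖ := by
  have h1 : |g s + T g s| ≤ ‖ContinuousLinearMap.id ℝ C(S, ℝ) + T‖ :=
    (((ContinuousLinearMap.id ℝ C(S, ℝ) + T) g).norm_coe_le_norm s).trans
      (ContinuousLinearMap.unit_le_opNorm _ g hg)
  have h2 : |g s - T g s| ≤ ‖ContinuousLinearMap.id ℝ C(S, ℝ) - T‖ :=
    (((ContinuousLinearMap.id ℝ C(S, ℝ) - T) g).norm_coe_le_norm s).trans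
      (ContinuousLinearMap.unit_le_opNorm _ g hg)
  rw [abs_le] at h1 h2
  rw [le_max_iff]
  rcases (abs_eq zero_le_one).1 hs with h | h <;> rcases abs_cases (T g s) with h' | h' <;>
    first
    | (left; linarith)
    | (right; linarith)

/-- Every `f` in the unit ball is, up to an error of norm at most `δ`, a convex combination of two
elements of the unit ball having modulus `1` at the prescribed point `s`. -/
lemma exists_convex_approx {S : Type*} [TopologicalSpace S] [CompactSpace S]
    (f : C(S, ℝ)) (hf : ‖f‖ ≤ 1) (s : S) {δ : ℝ} (hδ : 0 < δ) :
    ∃ (g h r : C(S, ℝ)) (u v : ℝ), ‖g‖ ≤ 1 ∧ ‖h‖ ≤ 1 ∧ ‖r‖ ≤ δ ∧ |g s| = 1 ∧ |h s| = 1 ∧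
      0 ≤ u ∧ 0 ≤ v ∧ u + v = 1 ∧ f = u • g + v • h + r := by
  have hfx : ∀ x, |f x| ≤ 1 := fun x => (f.norm_coe_le_norm x).trans hf
  have hs := abs_le.1 (hfx s)
  let φ : C(S, ℝ) := ⟨fun x => max 0 (1 - |f x - f s| / δ), by fun_prop⟩
  have hφ : ∀ x, φ x = max 0 (1 - |f x - f s| / δ) := fun _ => rfl
  have hφs : φ s = 1 := by simp [hφ]
  have h0 : ∀ x, 0 ≤ φ x := fun x => le_max_left _ _
  have h1 : ∀ x, φ x ≤ 1 := fun x => max_le zero_le_one (by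
    have : 0 ≤ |f x - f s| / δ := by positivity
    linarith)
  refine ⟨(1 - φ) * f + φ, (1 - φ) * f - φ, φ * (f - ContinuousMap.const S (f s)),
    (1 + f s) / 2, (1 - f s) / 2, ?_, ?_, ?_, ?_, ?_, by linarith, by linarith, by ring, ?_⟩
  · refine (ContinuousMap.norm_le _ zero_le_one).2 fun x => ?_
    have := abs_le.1 (hfx x)
    simp only [ContinuousMap.add_apply, ContinuousMap.mul_apply, ContinuousMap.sub_apply,
      ContinuousMap.one_apply, Real.norm_eq_abs, abs_le]
    constructor <;> nlinarith [h0 x, h1 x]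
  · refine (ContinuousMap.norm_le _ zero_le_one).2 fun x => ?_
    have := abs_le.1 (hfx x)
    simp only [ContinuousMap.mul_apply, ContinuousMap.sub_apply,
      ContinuousMap.one_apply, Real.norm_eq_abs, abs_le]
    constructor <;> nlinarith [h0 x, h1 x]
  · refine (ContinuousMap.norm_le _ hδ.le).2 fun x => ?_
    simp only [ContinuousMap.mul_apply, ContinuousMap.sub_apply, ContinuousMap.const_apply,
      Real.norm_eq_abs, abs_mul, abs_of_nonneg (h0 x)]
    by_cases hx : |f x - f s| ≤ δ
    · exact (mul_le_of_le_one_left (abs_nonneg _) (h1 x)).trans hx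
    · have : φ x = 0 := by
        rw [hφ, max_eq_left]
        rw [sub_nonpos, one_le_div hδ]
        exact (not_le.1 hx).le
      simp [this, hδ.le]
  · simp [hφs]
  · simp [hφs]
  · ext x
    simp only [ContinuousMap.add_apply, ContinuousMap.mul_apply, ContinuousMap.sub_apply,
      ContinuousMap.one_apply, ContinuousMap.const_apply, ContinuousMap.smul_apply, smul_eq_mul]
    ring

theorem daugavet_max {S : Type*} [TopologicalSpace S] [CompactSpace S] [T2Space S] [Nonempty S]
    (T : C(S, ℝ) →L[ℝ] C(S, ℝ)) :
    max ‖ContinuousLinearMap.id ℝ C(S, ℝ) + T‖ ‖ContinuousLinearMap.id ℝ C(S, ℝ) - T‖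
      = 1 + ‖T‖ := by
  apply le_antisymm
  · have hid : ‖ContinuousLinearMap.id ℝ C(S, ℝ)‖ ≤ 1 := ContinuousLinearMap.norm_id_le
    exact max_le ((norm_add_le (ContinuousLinearMap.id ℝ C(S, ℝ)) T).trans (add_le_add_left hid _))
      ((norm_sub_le (ContinuousLinearMap.id ℝ C(S, ℝ)) T).trans (add_le_add_left hid _))
  · have hT := one_add_abs_apply_le_max T
    set M := max ‖ContinuousLinearMap.id ℝ C(S, ℝ) + T‖ ‖ContinuousLinearMap.id ℝ C(S, ℝ) - T‖
    have key : ∀ f : C(S, ℝ), ‖f‖ ≤ 1 → ∀ s, |T f s| ≤ M - 1 := by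
      intro f hf s
      have hδ : ∀ δ : ℝ, 0 < δ → |T f s| ≤ M - 1 + ‖T‖ * δ := by
        intro δ hδ
        obtain ⟨g, h, r, u, v, hg, hh, hr, hgs, hhs, hu, hv, huv, hfe⟩ :=
          exists_convex_approx f hf s hδ
        have e : T f s = u * T g s + v * T h s + T r s := by
          rw [hfe]
          simp
        have hTg := hT g hg s hgs
        have hTh := hT h hh s hhs
        have hTr : |T r s| ≤ ‖T‖ * δ :=
          ((T r).norm_coe_le_norm s).trans (T.le_opNorm_of_le hr)
        calc |T f s| ≤ |u * T g s| + |v * T h s| + |T r s| := by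
              rw [e]
              exact abs_add_three _ _ _
          _ = u * |T g s| + v * |T h s| + |T r s| := by
              rw [abs_mul, abs_mul, abs_of_nonneg hu, abs_of_nonneg hv]
          _ ≤ u * (M - 1) + v * (M - 1) + ‖T‖ * δ := by
              gcongr <;> linarith
          _ = M - 1 + ‖T‖ * δ := by rw [← add_mul, huv, one_mul]
      refine le_of_forall_pos_le_add fun ε hε => ?_
      -- Dividing by `‖T‖ + 1` keeps the denominator positive when `T = 0`.
      have hpos : 0 < ‖T‖ + 1 := by positivity
      refine (hδ (ε / (‖T‖ + 1)) (by positivity)).trans ?_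
      gcongr
      rw [mul_div_assoc', div_le_iff₀ hpos]
      nlinarith [norm_nonneg T]
    have hM : 0 ≤ M - 1 := by
      simpa using key 0 (by simp) (Classical.arbitrary S)
    have : ‖T‖ ≤ M - 1 :=
      ContinuousLinearMap.opNorm_le_of_unit_norm hM fun f hf =>
        (ContinuousMap.norm_le _ hM).2 fun s => key f hf.le s
    linarith
end

section
/- Let (Ω, Σ, μ) be a measure space and let T : L¹(μ) → L¹(μ) be a bounded linear operator on the real Banach space L¹(μ). Then max(‖I + T‖, ‖I − T‖) = 1 + ‖T‖, where I is the identity operator. -/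
open MeasureTheory

/-!
Let `M` be the maximum. It suffices to show `‖f‖ + ‖T f‖ ≤ M * ‖f‖` for every `f`.
Split `f = a + b`, where `a` is the restriction of `f` to the set `{f * T f ≥ 0}` and `b` is the
restriction to the complement. On that set `b = 0`, so
`|f| + |T f| = |f + T f| = |(a + T a) - (b - T b)|`; off it `a = 0` and
`|f| + |T f| = |f - T f| = |(b - T b) - (a + T a)|`. Either way
`|f| + |T f| ≤ |a + T a| + |b - T b|` almost everywhere. Integrating,
`‖f‖ + ‖T f‖ ≤ ‖a + T a‖ + ‖b - T b‖ ≤ M * (‖a‖ + ‖b‖) = M * ‖f‖`.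
-/

/-- The splitting of `f` according to whether its sign agrees with that of `y`. The last
property integrates the pointwise inequality `|f| + |y| ≤ |a + u| + |b - v|`, valid for any `u + v = y`. -/
lemma exists_sign_split {Ω : Type*} [MeasurableSpace Ω] {μ : Measure Ω} (f y : Lp ℝ 1 μ) :
    ∃ a b : Lp ℝ 1 μ, a + b = f ∧ ‖a‖ + ‖b‖ = ‖f‖ ∧
      ∀ u v : Lp ℝ 1 μ, u + v = y → ‖f‖ + ‖y‖ ≤ ‖a + u‖ + ‖b - v‖ := by
  set S : Set Ω := {x | 0 ≤ f x * y x} with hS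
  have hSm : MeasurableSet S :=
    measurableSet_le measurable_const
      ((Lp.stronglyMeasurable f).measurable.mul (Lp.stronglyMeasurable y).measurable)
  have ha : MemLp (S.indicator f) 1 μ := (Lp.memLp f).indicator hSm
  have hb : MemLp (Sᶜ.indicator f) 1 μ := (Lp.memLp f).indicator hSm.compl
  have hi (g : Lp ℝ 1 μ) : Integrable (fun x => ‖g x‖) μ := (L1.integrable_coeFn g).norm
  refine ⟨ha.toLp, hb.toLp, ?_, ?_, ?_⟩
  · apply Lp.ext
    filter_upwards [Lp.coeFn_add ha.toLp hb.toLp, ha.coeFn_toLp, hb.coeFn_toLp] with x h h1 h2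
    rw [h, Pi.add_apply, h1, h2]
    exact Set.indicator_self_add_compl_apply S f x
  · simp only [L1.norm_eq_integral_norm]
    rw [← integral_add (hi _) (hi _)]
    apply integral_congr_ae
    filter_upwards [ha.coeFn_toLp, hb.coeFn_toLp] with x h1 h2
    rw [h1, h2]
    by_cases hx : x ∈ S <;> simp [hx]
  · intro u v huv
    simp only [L1.norm_eq_integral_norm]
    rw [← integral_add (hi _) (hi _), ← integral_add (hi _) (hi _)]
    apply integral_mono_ae ((hi _).add (hi _)) ((hi _).add (hi _))
    filter_upwards [ha.coeFn_toLp, hb.coeFn_toLp, Lp.coeFn_add ha.toLp u,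
      Lp.coeFn_sub hb.toLp v, Lp.coeFn_add u v] with x h1 h2 h3 h4 h5
    rw [huv] at h5
    simp only [h3, h4, Pi.add_apply, Pi.sub_apply, h1, h2, Real.norm_eq_abs] at h5 ⊢
    by_cases hx : x ∈ S
    · simp only [Set.indicator_of_mem hx, Set.indicator_of_notMem (Set.notMem_compl_iff.2 hx)]
      have h : |f x + y x| = |f x| + |y x| := abs_add_eq_add_abs_iff _ _ |>.2
        (mul_nonneg_iff.1 hx)
      calc |f x| + |y x| = |(f x + u x) - (0 - v x)| := by rw [← h, h5]; ring_nf
        _ ≤ _ := abs_sub _ _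
    · simp only [Set.indicator_of_notMem hx, Set.indicator_of_mem (Set.mem_compl hx)]
      have h : |f x + -y x| = |f x| + |-y x| := abs_add_eq_add_abs_iff _ _ |>.2
        (mul_nonneg_iff.1 (by simp only [hS, Set.mem_ofPred_eq, not_le] at hx; linarith))
      calc |f x| + |y x| = |(f x - v x) - (0 + u x)| := by rw [← abs_neg (y x), ← h, h5]; ring_nf
        _ ≤ _ := (abs_sub _ _).trans (add_comm _ _).le

theorem daugavet_max_L1 {Ω : Type*} [MeasurableSpace Ω] (μ : Measure Ω)
    [Nontrivial (Lp ℝ 1 μ)] (T : Lp ℝ 1 μ →L[ℝ] Lp ℝ 1 μ) :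
    max ‖ContinuousLinearMap.id ℝ (Lp ℝ 1 μ) + T‖ ‖ContinuousLinearMap.id ℝ (Lp ℝ 1 μ) - T‖
      = 1 + ‖T‖ := by
  have hid : ‖ContinuousLinearMap.id ℝ (Lp ℝ 1 μ)‖ = 1 := ContinuousLinearMap.norm_id
  apply le_antisymm
  · rw [← hid]
    exact max_le (norm_add_le _ _) (norm_sub_le _ _)
  set M := max ‖ContinuousLinearMap.id ℝ (Lp ℝ 1 μ) + T‖
    ‖ContinuousLinearMap.id ℝ (Lp ℝ 1 μ) - T‖
  have key (f : Lp ℝ 1 μ) : ‖f‖ + ‖T f‖ ≤ M * ‖f‖ := by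
    obtain ⟨a, b, hab, hn, h⟩ := exists_sign_split f (T f)
    have h1 : ‖a + T a‖ ≤ M * ‖a‖ :=
      (ContinuousLinearMap.id ℝ (Lp ℝ 1 μ) + T).le_of_opNorm_le (le_max_left _ _) a
    have h2 : ‖b - T b‖ ≤ M * ‖b‖ :=
      (ContinuousLinearMap.id ℝ (Lp ℝ 1 μ) - T).le_of_opNorm_le (le_max_right _ _) b
    have h3 := h (T a) (T b) (by rw [← map_add, hab])
    rw [← hn, mul_add]
    linarith
  have hM : 0 ≤ M - 1 := by
    obtain ⟨f, hf⟩ := exists_ne (0 : Lp ℝ 1 μ)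
    have hf' : 0 < ‖f‖ := norm_pos_iff.2 hf
    have := key f
    have := norm_nonneg (T f)
    by_contra hc
    nlinarith
  have := T.opNorm_le_bound hM fun f => by linarith [key f]
  linarith
end

section
/- Let S be a compact Hausdorff space and T : C(S) → C(S) a bounded linear operator with representing kernel (μ_s)_{s∈S}. If for every nonempty open set U ⊂ S one has sup_{s∈U} μ_s({s}) ≥ 0, then ‖I + T‖ = 1 + ‖T‖. -/
/-!
The upper bound is the triangle inequality. For the lower bound fix `ε > 0` and choose `f` in the
unit ball of `C(S)` for which the open set `U = {s | ‖T‖ - ε < T f s}` is nonempty. By hypothesis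
some `s ∈ U` satisfies `-ε < μ s {s}`, and by regularity `s` has an open neighbourhood `V` with
`|μ s| (V \ {s}) < ε`. Take a Urysohn function `φ` with `φ s = 1` vanishing off `V`, and put
`g = f + φ (1 - f)`. Pointwise `g` is a convex combination of `f` and `1`, so `‖g‖ ≤ 1`; moreover
`g s = 1`, and passing from `f` to `g` lowers the value of `∫ · dμ_s` by at most `4 ε`, since the
difference `φ (1 - f)` is between `0` and `2`, lives on `V`, and the mass of `μ s` at `s` is almost
nonnegative (`SignedMeasure.integral_bump_ge`). Hence `‖I + T‖ ≥ (g + T g) s ≥ 1 + ‖T‖ - 5 ε`.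
-/

open MeasureTheory Topology

/-- The integral of a real function against a signed measure, defined via the Jordan
decomposition. -/
noncomputable def SignedMeasure.integral {S : Type*} [MeasurableSpace S]
    (μ : SignedMeasure S) (f : S → ℝ) : ℝ :=
  ∫ x, f x ∂μ.toJordanDecomposition.posPart - ∫ x, f x ∂μ.toJordanDecomposition.negPart

open MeasureTheory.Measure in
/-- A signed measure evaluates on a measurable set as the difference of the masses of its Jordan
parts. -/
lemma SignedMeasure.apply_eq_sub {S : Type*} [MeasurableSpace S] (μ : SignedMeasure S) {A : Set S}
    (hA : MeasurableSet A) :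
    μ A = μ.toJordanDecomposition.posPart.real A - μ.toJordanDecomposition.negPart.real A := by
  conv_lhs => rw [← μ.toSignedMeasure_toJordanDecomposition]
  simp [JordanDecomposition.toSignedMeasure, toSignedMeasure_apply, hA]

lemma ContinuousMap.integrable_of_compactSpace {S : Type*} [TopologicalSpace S] [CompactSpace S]
    [MeasurableSpace S] [BorelSpace S] (P : Measure S) [IsFiniteMeasure P] (h : C(S, ℝ)) :
    Integrable h P :=
  h.continuous.integrable_of_hasCompactSupport (HasCompactSupport.of_compactSpace _)

/-- Integrating a bump `0 ≤ h ≤ 2` that lives on `V` against `μ` costs at most the point mass at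
`s`, weighted by `h s`, plus twice the variation of `μ` on `V \ {s}`. -/
lemma SignedMeasure.integral_bump_ge {S : Type*} [TopologicalSpace S] [CompactSpace S] [T2Space S]
    [MeasurableSpace S] [BorelSpace S] (μ : SignedMeasure S) (s : S) (h : C(S, ℝ)) (V : Set S)
    (hV : IsOpen V) (hsV : s ∈ V) (h0 : ∀ x, 0 ≤ h x) (h2 : ∀ x, h x ≤ 2)
    (hoff : ∀ x, x ∉ V → h x = 0) :
    h s * μ {s} - 2 * μ.totalVariation.real (V \ {s}) ≤ SignedMeasure.integral μ h := by
  have hms : MeasurableSet ({s} : Set S) := isClosed_singleton.measurableSet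
  rw [SignedMeasure.apply_eq_sub μ hms, SignedMeasure.integral]
  have hvar : μ.toJordanDecomposition.negPart.real (V \ {s}) ≤
      μ.totalVariation.real (V \ {s}) := by
    rw [SignedMeasure.totalVariation, measureReal_add_apply]
    linarith [measureReal_nonneg (μ := μ.toJordanDecomposition.posPart) (s := V \ {s})]
  set P := μ.toJordanDecomposition.posPart
  set N := μ.toJordanDecomposition.negPart
  have hP : h s * P.real {s} ≤ ∫ x, h x ∂P := by
    have := setIntegral_le_integral (s := {s}) (h.integrable_of_compactSpace P)
      (Filter.Eventually.of_forall h0)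
    rw [integral_singleton' h.continuous.stronglyMeasurable, smul_eq_mul] at this
    linarith
  have hN : ∫ x, h x ∂N ≤ h s * N.real {s} + 2 * N.real (V \ {s}) := by
    have e1 : ∫ x in V, h x ∂N = ∫ x, h x ∂N :=
      setIntegral_eq_integral_of_forall_compl_eq_zero hoff
    have e2 : ∫ x in V, h x ∂N = (∫ x in {s}, h x ∂N) + ∫ x in V \ {s}, h x ∂N := by
      rw [← setIntegral_union Set.disjoint_sdiff_right (hV.measurableSet.diff hms)
        (h.integrable_of_compactSpace N).integrableOn
        (h.integrable_of_compactSpace N).integrableOn,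
        Set.union_sdiff_cancel (Set.singleton_subset_iff.2 hsV)]
    have e3 : ∫ x in V \ {s}, h x ∂N ≤ ∫ _ in V \ {s}, (2 : ℝ) ∂N :=
      integral_mono (h.integrable_of_compactSpace N).integrableOn (integrable_const _) h2
    rw [integral_singleton' h.continuous.stronglyMeasurable, smul_eq_mul] at e2
    rw [setIntegral_const, smul_eq_mul] at e3
    linarith
  linarith

/-- Outer regularity at a point: arbitrarily small punctured open neighbourhoods. -/
lemma exists_isOpen_measureReal_diff_singleton_lt {S : Type*} [TopologicalSpace S] [T2Space S]
    [MeasurableSpace S] [BorelSpace S] (P : Measure S) [IsFiniteMeasure P] [P.OuterRegular]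
    (s : S) {ε : ℝ} (hε : 0 < ε) :
    ∃ V : Set S, IsOpen V ∧ s ∈ V ∧ P.real (V \ {s}) < ε := by
  obtain ⟨V, hsub, hV, -, hlt⟩ := MeasurableSet.exists_isOpen_sdiff_lt (μ := P)
    (isClosed_singleton (x := s)).measurableSet (measure_ne_top _ _)
    (ENNReal.ofReal_pos.2 hε).ne'
  refine ⟨V, hV, hsub rfl, ?_⟩
  rw [measureReal_def]
  exact (ENNReal.lt_ofReal_iff_toReal_lt (measure_ne_top _ _)).1 hlt

theorem daugavet_of_sup_nonneg {S : Type*} [TopologicalSpace S] [CompactSpace S] [T2Space S]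
    [Nonempty S] [MeasurableSpace S] [BorelSpace S]
    (T : C(S, ℝ) →L[ℝ] C(S, ℝ)) (μ : S → SignedMeasure S)
    (hreg : ∀ s, (μ s).totalVariation.Regular)
    (hker : ∀ (f : C(S, ℝ)) (s : S), T f s = SignedMeasure.integral (μ s) f)
    (hsup : ∀ U : Set S, IsOpen U → U.Nonempty → 0 ≤ sSup ((fun s => μ s {s}) '' U)) :
    ‖ContinuousLinearMap.id ℝ C(S, ℝ) + T‖ = 1 + ‖T‖ := by
  apply le_antisymm
  · refine (norm_add_le (ContinuousLinearMap.id ℝ C(S, ℝ)) T).trans ?_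
    gcongr
    exact ContinuousLinearMap.norm_id_le
  refine le_of_forall_pos_le_add fun δ hδ => ?_
  obtain ⟨ε, hε, hεδ⟩ : ∃ ε : ℝ, 0 < ε ∧ 5 * ε = δ := ⟨δ / 5, by positivity, by ring⟩
  obtain ⟨f, hf, s₀, hs₀⟩ : ∃ f : C(S, ℝ), ‖f‖ ≤ 1 ∧ ∃ s₀, ‖T‖ - ε < T f s₀ := by
    obtain ⟨f, hf, hTf⟩ := T.exists_lt_apply_of_lt_opNorm (sub_lt_self ‖T‖ hε)
    obtain ⟨s₀, hs₀⟩ : ∃ s₀, ‖T‖ - ε < |T f s₀| := by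
      by_contra! hcon
      exact hTf.not_ge ((ContinuousMap.norm_le_of_nonempty _).2 hcon)
    rcases lt_abs.1 hs₀ with h | h
    · exact ⟨f, hf.le, s₀, h⟩
    · exact ⟨-f, by simpa using hf.le, s₀, by simpa using h⟩
  have hUo : IsOpen {s | ‖T‖ - ε < T f s} := isOpen_lt continuous_const (T f).continuous
  obtain ⟨s, hsU, hs⟩ : ∃ s, ‖T‖ - ε < T f s ∧ -ε < μ s {s} := by
    -- If all point masses on `U` were `≤ -ε`, the supremum would be a genuine one and negative.
    by_contra! hcon
    have hle : sSup ((fun s => μ s {s}) '' {s | ‖T‖ - ε < T f s}) ≤ -ε := by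
      apply csSup_le (Set.Nonempty.image _ ⟨s₀, hs₀⟩)
      rintro _ ⟨s, hs, rfl⟩
      exact hcon s hs
    linarith [hsup _ hUo ⟨s₀, hs₀⟩]
  have := hreg s
  have : IsFiniteMeasure (μ s).totalVariation := by
    rw [SignedMeasure.totalVariation]; infer_instance
  obtain ⟨V, hVo, hsV, hVlt⟩ :=
    exists_isOpen_measureReal_diff_singleton_lt (μ s).totalVariation s hε
  obtain ⟨φ, hφ0, hφ1, hφ⟩ := exists_continuous_zero_one_of_isClosed hVo.isClosed_compl
    (isClosed_singleton (x := s)) (by simpa using hsV)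
  have hφs : φ s = 1 := hφ1 rfl
  have hfx (x : S) : -1 ≤ f x ∧ f x ≤ 1 := abs_le.1 ((f.norm_coe_le_norm x).trans hf)
  have hbump := SignedMeasure.integral_bump_ge (μ s) s (φ * (1 - f)) V hVo hsV
    (fun x => by
      simpa using mul_nonneg (hφ x).1 (sub_nonneg.2 (hfx x).2))
    (fun x => by
      have := mul_le_mul (hφ x).2 (show 1 - f x ≤ 2 by linarith [(hfx x).1])
        (sub_nonneg.2 (hfx x).2) zero_le_one
      simpa using this)
    (fun x hx => by simp [show φ x = 0 from hφ0 hx])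
  rw [← hker] at hbump
  have hpoint : -(2 * ε) ≤ (φ * (1 - f)) s * μ s {s} := by
    have : (φ * (1 - f)) s = 1 - f s := by simp [hφs]
    rw [this]
    nlinarith [hfx s]
  set g : C(S, ℝ) := f + φ * (1 - f) with hg
  have hgnorm : ‖g‖ ≤ 1 := by
    refine (ContinuousMap.norm_le _ zero_le_one).2 fun x => abs_le.2 ?_
    have hgx : g x = f x + φ x * (1 - f x) := by simp [hg]
    have h1 := hφ x
    have h2 := hfx x
    rw [hgx]
    constructor <;> nlinarith [h1.1, h1.2, h2.1, h2.2]
  have hgs : g s = 1 := by simp [hg, hφs]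
  have hTg : T g s = T f s + T (φ * (1 - f)) s := by simp [hg, map_add]
  have hval : g s + T g s ≤ ‖ContinuousLinearMap.id ℝ C(S, ℝ) + T‖ := calc
    g s + T g s = ((ContinuousLinearMap.id ℝ C(S, ℝ) + T) g) s := by simp
    _ ≤ ‖(ContinuousLinearMap.id ℝ C(S, ℝ) + T) g‖ :=
      ContinuousMap.apply_le_norm _ s
    _ ≤ _ := ContinuousLinearMap.unit_le_opNorm _ _ hgnorm
  linarith
end

section
/- Let S be a compact Hausdorff space and T : C(S) → C(S) a bounded linear operator with representing kernel (μ_s)_{s∈S}. Then ‖I + T‖ = 1 + ‖T‖ holds if and only if for every ε > 0 one has sup { μ_s({s}) : s ∈ S, ‖μ_s‖ > ‖T‖ − ε } ≥ 0. -/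
open MeasureTheory Topology

/-!
Write `a = μ_s {s}`. The norm of `T` is the supremum of the `‖μ_s‖`
(`abs_integral_le_totalVariation`, `totalVariation_le_opNorm`, `exists_opNorm_lt`).

If `‖I + T‖ = 1 + ‖T‖`, take `f` in the unit ball and `s` with `f s + (T f) s > 1 + ‖T‖ - δ`
(after a change of sign). Then `f s > 1 - δ` and `∫ f dμ_s > ‖T‖ - δ`. A negative atom `a` of `μ_s`
at `s` costs `∫ f dμ_s ≤ ‖μ_s‖ + (2 - δ) a`, so `a > -δ` (`integral_le_of_atom_neg`).

Conversely, if `‖μ_s‖` is close to `‖T‖` and `a` is not much below `0`, then inner regularity and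
Urysohn's lemma, applied to a Hahn decomposition of `μ_s` with the point `s` moved to the positive
side, give `f` in the unit ball with `f s = 1` and `∫ f dμ_s` almost `‖μ_s‖`
(`exists_continuous_approx`), so that `(f + T f) s` is almost `1 + ‖T‖`.
-/

set_option linter.unusedSectionVars false

namespace Daugavet

/-! ### Continuous functions and finite measures -/

lemma mul_sub_le_integral {S : Type*} [MeasurableSpace S] (P : Measure S) [IsFiniteMeasure P]
    {g : S → ℝ} (hg : Integrable g P) (h1 : ∀ x, |g x| ≤ 1) {K : Set S} (hK : MeasurableSet K)
    {c : ℝ} (hc : ∀ x ∈ K, c ≤ g x) :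
    c * P.real K - P.real Kᶜ ≤ ∫ x, g x ∂P := by
  rw [← integral_add_compl hK hg]
  have e1 : c * P.real K ≤ ∫ x in K, g x ∂P :=
    setIntegral_ge_of_const_le_real hK (measure_ne_top P K) hc hg.integrableOn
  have e2 : (-1) * P.real Kᶜ ≤ ∫ x in Kᶜ, g x ∂P :=
    setIntegral_ge_of_const_le_real hK.compl (measure_ne_top P _)
      (fun x _ => (abs_le.1 (h1 x)).1) hg.integrableOn
  linarith

section

variable {S : Type*} [TopologicalSpace S] [CompactSpace S] [T2Space S]
  [MeasurableSpace S] [BorelSpace S]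

lemma integrable_continuousMap (P : Measure S) [IsFiniteMeasure P] (f : C(S, ℝ)) :
    Integrable f P :=
  f.continuous.integrable_of_hasCompactSupport (HasCompactSupport.of_compactSpace f)

lemma abs_le_one {f : C(S, ℝ)} (hf : ‖f‖ ≤ 1) (x : S) : |f x| ≤ 1 :=
  (f.norm_coe_le_norm x).trans hf

/-- A continuous approximation of the sign function `1` on `A`, `-1` on `Aᶜ`, equal to `1` at a
prescribed point of `A`. -/
lemma exists_continuous_approx (P N : Measure S) [IsFiniteMeasure P] [IsFiniteMeasure N]
    (hreg : (P + N).Regular) {A : Set S} (hA : MeasurableSet A) (s : S) {ε : ℝ} (hε : 0 < ε) :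
    ∃ f : C(S, ℝ), ‖f‖ ≤ 1 ∧ (s ∈ A → f s = 1) ∧
      P.real A + N.real Aᶜ - P.real Aᶜ - N.real A - 4 * ε
        ≤ ∫ x, f x ∂P - ∫ x, f x ∂N := by
  have hε' : ENNReal.ofReal ε ≠ 0 := by simpa using hε
  obtain ⟨K₀, hK₀A, hK₀c, hK₀⟩ := hA.exists_isCompact_sdiff_lt (measure_ne_top (P + N) A) hε'
  obtain ⟨L, hLA, hLc, hL⟩ :=
    hA.compl.exists_isCompact_sdiff_lt (measure_ne_top (P + N) Aᶜ) hε'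
  obtain ⟨K, hKA, hKc, hK, hsK⟩ : ∃ K ⊆ A, IsCompact K ∧
      (P + N) (A \ K) < ENNReal.ofReal ε ∧ (s ∈ A → s ∈ K) := by
    by_cases hs : s ∈ A
    · refine ⟨insert s K₀, Set.insert_subset hs hK₀A, hK₀c.insert s, ?_, fun _ => by simp⟩
      exact (measure_mono (Set.sdiff_subset_sdiff_right (Set.subset_insert _ _))).trans_lt hK₀
    · exact ⟨K₀, hK₀A, hK₀c, hK₀, fun h => absurd h hs⟩
  have hdisj : Disjoint L K :=
    Set.disjoint_left.2 fun x hx hx' => hLA hx (hKA hx')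
  obtain ⟨u, hu0, hu1, hu⟩ := exists_continuous_zero_one_of_isClosed hLc.isClosed hKc.isClosed hdisj
  have hKm := hKc.isClosed.measurableSet
  have hLm := hLc.isClosed.measurableSet
  set f : C(S, ℝ) := (2 : ℝ) • u - 1 with hf
  have hfx : ∀ x, f x = 2 * u x - 1 := fun x => by simp [hf]
  have hfb : ∀ x, |f x| ≤ 1 := fun x => by
    have := hu x
    rw [hfx, abs_le]
    constructor <;> linarith [this.1, this.2]
  have hfK : ∀ x ∈ K, f x = 1 := fun x hx => by
    have : u x = 1 := hu1 hx
    rw [hfx, this]; norm_num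
  have hfL : ∀ x ∈ L, f x = -1 := fun x hx => by
    have : u x = 0 := hu0 hx
    rw [hfx, this]; norm_num
  have toReal : ∀ E : Set S, (P + N) E < ENNReal.ofReal ε → P.real E + N.real E < ε := by
    intro E hE
    have h2 := (ENNReal.lt_ofReal_iff_toReal_lt (measure_ne_top _ _)).1 hE
    rwa [Measure.add_apply, ENNReal.toReal_add (measure_ne_top _ _) (measure_ne_top _ _)] at h2
  have rK := toReal _ hK
  have rL := toReal _ hL
  refine ⟨f, (ContinuousMap.norm_le _ zero_le_one).2 hfb, fun hs => hfK s (hsK hs), ?_⟩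
  have eP := mul_sub_le_integral P (integrable_continuousMap P f) hfb hKm
    (c := 1) (fun x hx => (hfK x hx).ge)
  have eN := mul_sub_le_integral N (integrable_continuousMap N f).neg
    (fun x => by simpa using hfb x) hLm
    (c := 1) (fun x hx => by simp [hfL x hx])
  simp only [Pi.neg_apply, integral_neg] at eN
  have p1 := measureReal_sdiff_add_inter (μ := P) (s := A) hKm
  have p2 := measureReal_sdiff_add_inter (μ := N) (s := Aᶜ) hLm
  rw [Set.inter_eq_self_of_subset_right hKA] at p1
  rw [Set.inter_eq_self_of_subset_right hLA] at p2
  have q1 := measureReal_compl (μ := P) hKm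
  have q2 := measureReal_compl (μ := N) hLm
  have r1 := measureReal_compl (μ := P) hA
  have r2 := measureReal_compl (μ := N) hA
  have n1 : 0 ≤ N.real (A \ K) := measureReal_nonneg
  have n2 : 0 ≤ P.real (Aᶜ \ L) := measureReal_nonneg
  linarith

/-! ### Signed measures -/

lemma totalVariation_univ_toReal (μ : SignedMeasure S) :
    (μ.totalVariation Set.univ).toReal =
      μ.toJordanDecomposition.posPart.real Set.univ +
        μ.toJordanDecomposition.negPart.real Set.univ := by
  rw [SignedMeasure.totalVariation, Measure.add_apply,
    ENNReal.toReal_add (measure_ne_top _ _) (measure_ne_top _ _)]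
  rfl

lemma apply_singleton (μ : SignedMeasure S) (s : S) :
    μ {s} = μ.toJordanDecomposition.posPart.real {s} -
      μ.toJordanDecomposition.negPart.real {s} := by
  conv_lhs => rw [← μ.toSignedMeasure_toJordanDecomposition]
  rw [JordanDecomposition.toSignedMeasure, _root_.sub_apply,
    Measure.toSignedMeasure_apply_measurable (measurableSet_singleton s),
    Measure.toSignedMeasure_apply_measurable (measurableSet_singleton s)]

lemma abs_integral_le_totalVariation (μ : SignedMeasure S) {f : S → ℝ} {C : ℝ}
    (hf : ∀ x, |f x| ≤ C) :
    |SignedMeasure.integral μ f| ≤ C * (μ.totalVariation Set.univ).toReal := by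
  rw [totalVariation_univ_toReal, SignedMeasure.integral]
  have e1 := norm_integral_le_of_norm_le_const (μ := μ.toJordanDecomposition.posPart)
    (f := f) (C := C) (.of_forall hf)
  have e2 := norm_integral_le_of_norm_le_const (μ := μ.toJordanDecomposition.negPart)
    (f := f) (C := C) (.of_forall hf)
  have e3 := norm_sub_le (∫ x, f x ∂μ.toJordanDecomposition.posPart)
    (∫ x, f x ∂μ.toJordanDecomposition.negPart)
  simp only [Real.norm_eq_abs] at e1 e2 e3
  linarith

/-- If `μ` has a negative atom at `s`, a function that is close to `1` at `s` has the wrong sign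
there, so its integral falls short of `‖μ‖` by about twice the mass of the atom. -/
lemma integral_le_of_atom_neg (μ : SignedMeasure S) (s : S) (hs : μ {s} < 0) {f : C(S, ℝ)}
    (hf : ‖f‖ ≤ 1) {c : ℝ} (hc : c ≤ f s) :
    SignedMeasure.integral μ f ≤ (μ.totalVariation Set.univ).toReal + (1 + c) * μ {s} := by
  obtain ⟨i, hi, hP, hN⟩ := μ.toJordanDecomposition.mutuallySingular
  have ha := apply_singleton μ s
  rw [totalVariation_univ_toReal, SignedMeasure.integral]
  have hfb := abs_le_one hf
  set P := μ.toJordanDecomposition.posPart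
  set N := μ.toJordanDecomposition.negPart
  have hsi : s ∈ i := by
    -- otherwise the atom of the negative part vanishes
    by_contra h
    have : N {s} = 0 := measure_mono_null (by simpa using h) hN
    have h0 : N.real {s} = 0 := by simp [measureReal_def, this]
    have : 0 ≤ P.real {s} := measureReal_nonneg
    linarith
  have hP0 : P.real {s} = 0 := by
    have : P {s} = 0 := measure_mono_null (by simpa using hsi) hP
    simp [measureReal_def, this]
  have e1 := norm_integral_le_of_norm_le_const (μ := P) (f := f) (C := 1) (.of_forall hfb)
  have e1' := (le_abs_self _).trans e1
  have e2 := mul_sub_le_integral N (integrable_continuousMap N f) hfb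
    (measurableSet_singleton s) (c := c) (by simpa using hc)
  have q := measureReal_compl (μ := N) (measurableSet_singleton s)
  have : μ {s} = - N.real {s} := by rw [ha, hP0]; ring
  rw [this]
  linarith

lemma exists_integral_near_totalVariation (μ : SignedMeasure S) (hreg : μ.totalVariation.Regular)
    {ε : ℝ} (hε : 0 < ε) :
    ∃ f : C(S, ℝ), ‖f‖ ≤ 1 ∧
      (μ.totalVariation Set.univ).toReal - 4 * ε ≤ SignedMeasure.integral μ f := by
  obtain ⟨i, hi, hP, hN⟩ := μ.toJordanDecomposition.mutuallySingular
  rcases isEmpty_or_nonempty S with hS | ⟨⟨s⟩⟩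
  · refine ⟨0, by simp, ?_⟩
    rw [Set.eq_empty_of_isEmpty (Set.univ : Set S)]
    simpa [SignedMeasure.integral] using hε.le
  obtain ⟨f, hf, -, hle⟩ := exists_continuous_approx _ _ hreg hi.compl s hε
  refine ⟨f, hf, ?_⟩
  rw [totalVariation_univ_toReal, SignedMeasure.integral]
  refine le_trans ?_ hle
  rw [compl_compl, measureReal_compl hi, measureReal_compl hi]
  have h1 : μ.toJordanDecomposition.posPart.real i = 0 := by simp [measureReal_def, hP]
  have h2 : μ.toJordanDecomposition.negPart.real iᶜ = 0 := by simp [measureReal_def, hN]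
  rw [measureReal_compl hi] at h2
  linarith

/-- If the atom of `μ` at `s` is not too negative, `‖μ‖` is almost attained by a function with
value `1` at `s`: moving `s` to the positive side of the Hahn decomposition costs little. -/
lemma exists_integral_near_of_atom (μ : SignedMeasure S) (hreg : μ.totalVariation.Regular) (s : S)
    {ε : ℝ} (hε : 0 < ε) (hs : -ε < μ {s}) :
    ∃ f : C(S, ℝ), ‖f‖ ≤ 1 ∧ f s = 1 ∧
      (μ.totalVariation Set.univ).toReal - 6 * ε ≤ SignedMeasure.integral μ f := by
  obtain ⟨i, hi, hP, hN⟩ := μ.toJordanDecomposition.mutuallySingular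
  have hm : MeasurableSet (iᶜ ∪ {s}) := hi.compl.union (measurableSet_singleton s)
  obtain ⟨f, hf, hfs, hle⟩ := exists_continuous_approx _ _ hreg hm s hε
  refine ⟨f, hf, hfs (by simp), ?_⟩
  have ha := apply_singleton μ s
  rw [totalVariation_univ_toReal, SignedMeasure.integral]
  refine le_trans ?_ hle
  set P := μ.toJordanDecomposition.posPart
  set N := μ.toJordanDecomposition.negPart
  have h1 : P.real (iᶜ ∪ {s})ᶜ = 0 := by
    have : P (iᶜ ∪ {s})ᶜ = 0 := measure_mono_null (fun x hx => by
      simp only [Set.mem_compl_iff, Set.mem_union, not_or, not_not] at hx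
      exact hx.1) hP
    rw [measureReal_def, this, ENNReal.toReal_zero]
  have h2 : N.real (iᶜ ∪ {s}) ≤ ε := by
    by_cases h : s ∈ i
    · have hP0 : P.real {s} = 0 := by
        have : P {s} = 0 := measure_mono_null (by simpa using h) hP
        rw [measureReal_def, this, ENNReal.toReal_zero]
      have h3 := measureReal_union_le (μ := N) iᶜ {s}
      have h4 : N.real iᶜ = 0 := by simp [measureReal_def, hN]
      linarith
    · rw [Set.union_eq_self_of_subset_right (by simpa using h)]
      simp [measureReal_def, hN, hε.le]
  have q1 := measureReal_compl (μ := P) hm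
  have q2 := measureReal_compl (μ := N) hm
  linarith

/-! ### Operators on `C(S, ℝ)` -/

variable (T : C(S, ℝ) →L[ℝ] C(S, ℝ)) (μ : S → SignedMeasure S)

lemma totalVariation_le_opNorm (hreg : ∀ s, (μ s).totalVariation.Regular)
    (hker : ∀ (f : C(S, ℝ)) (s : S), T f s = SignedMeasure.integral (μ s) f) (s : S) :
    ((μ s).totalVariation Set.univ).toReal ≤ ‖T‖ := by
  refine le_of_forall_pos_le_add fun ε hε => ?_
  obtain ⟨f, hf, h⟩ := exists_integral_near_totalVariation (μ s) (hreg s) (ε := ε / 4)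
    (by positivity)
  rw [← hker] at h
  have h1 := (le_abs_self _).trans ((T f).norm_coe_le_norm s)
  have h2 := T.le_of_opNorm_le_of_le le_rfl hf
  linarith

lemma exists_opNorm_lt [Nonempty S]
    (hker : ∀ (f : C(S, ℝ)) (s : S), T f s = SignedMeasure.integral (μ s) f)
    {ε : ℝ} (hε : 0 < ε) : ∃ s, ‖T‖ - ε < ((μ s).totalVariation Set.univ).toReal := by
  by_contra! h
  have h0 : 0 ≤ ‖T‖ - ε := ENNReal.toReal_nonneg.trans (h (Classical.arbitrary S))
  have : ‖T‖ ≤ ‖T‖ - ε := T.opNorm_le_bound h0 fun f => by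
    refine (ContinuousMap.norm_le _ (by positivity)).2 fun s => ?_
    rw [hker, Real.norm_eq_abs, mul_comm]
    exact (abs_integral_le_totalVariation (μ s) f.norm_coe_le_norm).trans
      (mul_le_mul_of_nonneg_left (h s) (norm_nonneg f))
  linarith

/-- A function in the unit ball almost attaining `‖A‖`, with the sign chosen so that the large
value is positive. -/
lemma exists_lt_apply (A : C(S, ℝ) →L[ℝ] C(S, ℝ)) {r : ℝ} (hr : 0 ≤ r) (h : r < ‖A‖) :
    ∃ (f : C(S, ℝ)) (s : S), ‖f‖ ≤ 1 ∧ r < A f s := by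
  obtain ⟨f, hf, hlt⟩ := A.exists_lt_apply_of_lt_opNorm h
  obtain ⟨s, hs⟩ : ∃ s, r < ‖A f s‖ := by
    by_contra! h'
    exact absurd ((ContinuousMap.norm_le _ hr).2 h') (not_le.2 hlt)
  rcases lt_abs.1 hs with hs | hs
  · exact ⟨f, s, hf.le, hs⟩
  · exact ⟨-f, s, by simpa using hf.le, by simpa using hs⟩

end

end Daugavet

open Daugavet in
theorem daugavet_iff {S : Type*} [TopologicalSpace S] [CompactSpace S] [T2Space S]
    [Nonempty S] [MeasurableSpace S] [BorelSpace S]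
    (T : C(S, ℝ) →L[ℝ] C(S, ℝ)) (μ : S → SignedMeasure S)
    (hreg : ∀ s, (μ s).totalVariation.Regular)
    (hker : ∀ (f : C(S, ℝ)) (s : S), T f s = SignedMeasure.integral (μ s) f) :
    ‖ContinuousLinearMap.id ℝ C(S, ℝ) + T‖ = 1 + ‖T‖ ↔
      ∀ ε > (0 : ℝ),
        0 ≤ sSup ((fun s => μ s {s}) ''
          {s : S | ‖T‖ - ε < ((μ s).totalVariation Set.univ).toReal}) := by
  have hle := totalVariation_le_opNorm T μ hreg hker
  constructor
  · intro h ε hε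
    -- the supremum is over a set bounded above, so it is not a junk value
    have hbdd : BddAbove ((fun s => μ s {s}) ''
        {s : S | ‖T‖ - ε < ((μ s).totalVariation Set.univ).toReal}) := by
      refine ⟨‖T‖, ?_⟩
      rintro _ ⟨s, -, rfl⟩
      refine le_trans ?_ (hle s)
      simp only [apply_singleton, totalVariation_univ_toReal]
      have h1 := measureReal_mono (μ := (μ s).toJordanDecomposition.posPart)
        (Set.subset_univ {s})
      have h2 : 0 ≤ (μ s).toJordanDecomposition.negPart.real {s} := measureReal_nonneg
      have h3 : 0 ≤ (μ s).toJordanDecomposition.negPart.real Set.univ := measureReal_nonneg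
      linarith
    refine le_of_forall_pos_le_add fun η hη => ?_
    obtain ⟨δ, hδ, hδε, hδη, hδ1⟩ : ∃ δ > 0, δ ≤ ε ∧ δ ≤ η ∧ δ ≤ (1 : ℝ) :=
      ⟨min ε (min η 1), by positivity, min_le_left _ _,
        (min_le_right _ _).trans (min_le_left _ _), (min_le_right _ _).trans (min_le_right _ _)⟩
    obtain ⟨f, s, hf, hlt⟩ := exists_lt_apply (ContinuousLinearMap.id ℝ C(S, ℝ) + T)
      (r := 1 + ‖T‖ - δ) (by linarith [norm_nonneg T]) (by rw [h]; linarith)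
    have hlt' : 1 + ‖T‖ - δ < f s + T f s := by simpa using hlt
    have hfs := (le_abs_self _).trans (abs_le_one hf s)
    have hT := (le_abs_self _).trans
      (abs_integral_le_totalVariation (μ s) (abs_le_one hf))
    rw [← hker, one_mul] at hT
    have hs : -δ ≤ μ s {s} := by
      by_contra! hneg
      have h0 : μ s {s} < 0 := by linarith
      have := integral_le_of_atom_neg (μ s) s h0 hf (c := 1 - δ) (by linarith [hle s])
      rw [← hker] at this
      nlinarith [hle s]
    have := le_csSup hbdd ⟨s, show ‖T‖ - ε < _ by linarith, rfl⟩
    simp only at this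
    linarith
  · intro h
    have hid : ‖ContinuousLinearMap.id ℝ C(S, ℝ)‖ ≤ 1 := ContinuousLinearMap.norm_id_le
    have hadd := norm_add_le (ContinuousLinearMap.id ℝ C(S, ℝ)) T
    refine le_antisymm (by linarith) ?_
    refine le_of_forall_pos_le_add fun η hη => ?_
    obtain ⟨ε, hε, rfl⟩ : ∃ ε > 0, η = 7 * ε := ⟨η / 7, by positivity, by ring⟩
    have hne : ((fun s => μ s {s}) ''
        {s : S | ‖T‖ - ε < ((μ s).totalVariation Set.univ).toReal}).Nonempty :=
      Set.Nonempty.image _ (exists_opNorm_lt T μ hker hε)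
    obtain ⟨_, ⟨s, hs, rfl⟩, hsε⟩ := exists_lt_of_lt_csSup hne
      (lt_of_lt_of_le (neg_lt_zero.2 hε) (h ε hε))
    obtain ⟨f, hf, hfs, hfi⟩ := exists_integral_near_of_atom (μ s) (hreg s) s hε hsε
    rw [← hker] at hfi
    have hs' : ‖T‖ - ε < ((μ s).totalVariation Set.univ).toReal := hs
    have h1 := (le_abs_self _).trans
      (((ContinuousLinearMap.id ℝ C(S, ℝ) + T) f).norm_coe_le_norm s)
    have h2 := (ContinuousLinearMap.id ℝ C(S, ℝ) + T).le_of_opNorm_le_of_le le_rfl hf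
    have h3 : ((ContinuousLinearMap.id ℝ C(S, ℝ) + T) f) s = f s + T f s := by simp
    rw [h3, hfs] at h1
    linarith
end

section
/- Let S be a compact Hausdorff space without isolated points and let T : C(S) → C(S) be a weakly compact operator with representing kernel (μ_s)_{s∈S}. Then for every nonempty open set U ⊂ S one has sup_{s∈U} μ_s({s}) ≥ 0. -/
/-!
For a closed set `F`, the function `t ↦ μ_t(F)` is continuous and bounded by `‖T‖`
(`exists_continuousMap_eq_kernel`): Urysohn functions `f_V` with `1_F ≤ f_V ≤ 1_V` satisfy
`T f_V t → μ_t(F)` for every `t` as the neighbourhood `V` shrinks to `F`, by outer regularity, and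
the net `T f_V` lies in a weakly compact set, so it has a weak limit point in `C(S)`, which must be
`t ↦ μ_t(F)`.

If the supremum over `U` were negative, there would be `c > 0` with `μ_s({s}) ≤ -c` for all
`s ∈ U`. For any `s ∈ U`, continuity gives `μ_t({s}) < -c/2` for `t` near `s`. As no point is
isolated, such neighbourhoods can be nested while collecting distinct points `s_1, …, s_n`, so that
`μ_t({s_1, …, s_n}) ≤ -n c/2` on a nonempty open set. This contradicts the bound `‖T‖` for large
`n`.
-/

open MeasureTheory Topology

/-- A bounded linear operator is weakly compact if the image of the closed unit ball is
relatively compact in the weak topology. -/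
def IsWeaklyCompactOperator {E F : Type*} [NormedAddCommGroup E] [NormedSpace ℝ E]
    [NormedAddCommGroup F] [NormedSpace ℝ F] (T : E →L[ℝ] F) : Prop :=
  IsCompact (closure ((toWeakSpace ℝ F) '' (T '' Metric.closedBall 0 1)))

/-- The filter of neighbourhoods of `F` shrinking to `F`. Unlike `(𝓝ˢ F).smallSets`, it is
concentrated on sets that are themselves neighbourhoods of `F`. -/
def shrinking {S : Type*} [TopologicalSpace S] (F : Set S) : Filter (Set S) :=
  (𝓝ˢ F).smallSets ⊓ Filter.principal {V | V ∈ 𝓝ˢ F}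

instance {S : Type*} [TopologicalSpace S] (F : Set S) : (shrinking F).NeBot :=
  Filter.frequently_mem_iff_neBot.1 (Filter.frequently_smallSets_mem _)

open Filter in
/-- Outer regularity of a measure `ρ` dominating `ν` suffices. It is applied with `ρ` a total
variation measure and `ν` its positive or negative part. -/
lemma tendsto_integral_urysohn {S : Type*} [TopologicalSpace S] [CompactSpace S]
    [MeasurableSpace S] [BorelSpace S] (ν ρ : Measure S) [IsFiniteMeasure ν] [IsFiniteMeasure ρ]
    (hνρ : ν ≤ ρ) [ρ.OuterRegular] {F : Set S} (hF : IsClosed F) (f : Set S → C(S, ℝ))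
    (h01 : ∀ V x, f V x ∈ Set.Icc (0 : ℝ) 1)
    (h1 : ∀ V ∈ 𝓝ˢ F, ∀ x ∈ F, f V x = 1) (h0 : ∀ V ∈ 𝓝ˢ F, ∀ x ∉ V, f V x = 0) :
    Tendsto (fun V => ∫ x, f V x ∂ν) (shrinking F) (𝓝 (ν.real F)) := by
  rw [Metric.tendsto_nhds]
  intro ε hε
  obtain ⟨V₀, hFV, hV₀, hlt⟩ := hF.measurableSet.exists_isOpen_sdiff_lt (μ := ρ)
    (measure_ne_top _ _) (ε := ENNReal.ofReal ε) (by simpa using hε)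
  have hmem : V₀ ∈ 𝓝ˢ F := hV₀.mem_nhdsSet.2 hFV
  have hdiff : ν.real (V₀ \ F) < ε := by
    have h : ν (V₀ \ F) < ENNReal.ofReal ε := (hνρ _).trans_lt hlt.2
    exact (ENNReal.lt_ofReal_iff_toReal_lt (measure_ne_top _ _)).1 h
  have hadd : ν.real (V₀ \ F) + ν.real F = ν.real V₀ := by
    rw [measureReal_sdiff hFV hF.measurableSet]; ring
  filter_upwards [mem_inf_of_left (eventually_smallSets.2 ⟨V₀, hmem, fun V hV => hV⟩),
    mem_inf_of_right (mem_principal_self _)] with V hVV₀ hV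
  have hV : V ∈ 𝓝ˢ F := hV
  have hint : Integrable (f V) ν :=
    (f V).continuous.integrable_of_hasCompactSupport (HasCompactSupport.of_compactSpace _)
  have hlow : ν.real F ≤ ∫ x, f V x ∂ν := by
    rw [← integral_indicator_one hF.measurableSet]
    refine integral_mono ((integrable_const 1).indicator hF.measurableSet) hint fun x => ?_
    by_cases hx : x ∈ F
    · simp [hx, h1 V hV x hx]
    · simpa [hx] using (h01 V x).1
  have hup : ∫ x, f V x ∂ν ≤ ν.real V₀ := by
    rw [← integral_indicator_one hV₀.measurableSet]
    refine integral_mono hint ((integrable_const 1).indicator hV₀.measurableSet) fun x => ?_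
    by_cases hx : x ∈ V₀
    · simpa [hx] using (h01 V x).2
    · simp [hx, h0 V hV x fun h => hx (hVV₀ h)]
  rw [Real.dist_eq, abs_of_nonneg (sub_nonneg.2 hlow)]
  linarith

open Filter in
/-- The weak compactness of `T` enters only here. -/
lemma exists_continuousMap_eq_kernel {S : Type*} [TopologicalSpace S] [CompactSpace S]
    [T2Space S] [MeasurableSpace S] [BorelSpace S]
    (T : C(S, ℝ) →L[ℝ] C(S, ℝ)) (hT : IsWeaklyCompactOperator T)
    (μ : S → SignedMeasure S)
    (hreg : ∀ s, (μ s).totalVariation.Regular)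
    (hker : ∀ (f : C(S, ℝ)) (s : S), T f s = SignedMeasure.integral (μ s) f)
    {F : Set S} (hF : IsClosed F) :
    ∃ g : C(S, ℝ), ∀ t, g t = μ t F ∧ |g t| ≤ ‖T‖ := by
  have key : ∀ V : Set S, ∃ f : C(S, ℝ), (∀ x, f x ∈ Set.Icc (0 : ℝ) 1) ∧
      (V ∈ 𝓝ˢ F → (∀ x ∈ F, f x = 1) ∧ ∀ x ∉ V, f x = 0) := by
    intro V
    by_cases hV : V ∈ 𝓝ˢ F
    · obtain ⟨W, hW, hFW, hWV⟩ := mem_nhdsSet_iff_exists.1 hV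
      obtain ⟨f, hf0, hf1, hf⟩ := exists_continuous_zero_one_of_isClosed hW.isClosed_compl hF
        (Set.disjoint_compl_left_iff_subset.2 hFW)
      exact ⟨f, hf, fun _ => ⟨fun x hx => hf1 hx, fun x hx => hf0 fun h => hx (hWV h)⟩⟩
    · exact ⟨0, by simp, fun h => absurd h hV⟩
  choose f h01 hf using key
  have hlim : ∀ t, Tendsto (fun V => T (f V) t) (shrinking F) (𝓝 (μ t F)) := by
    intro t
    have := hreg t
    set J := (μ t).toJordanDecomposition with hJ
    have hμ : μ t F = J.posPart.real F - J.negPart.real F := by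
      conv_lhs => rw [← (μ t).toSignedMeasure_toJordanDecomposition]
      exact sub_apply .. |>.trans (by
        simp [hJ, Measure.toSignedMeasure_apply_measurable hF.measurableSet])
    have hTV : (μ t).totalVariation = J.posPart + J.negPart := rfl
    have hfin : IsFiniteMeasure (μ t).totalVariation := by rw [hTV]; infer_instance
    simp only [hker, SignedMeasure.integral, hμ]
    exact (tendsto_integral_urysohn _ (μ t).totalVariation
        (hTV ▸ Measure.le_add_right le_rfl) hF f h01
        (fun V hV => (hf V hV).1) (fun V hV => (hf V hV).2)).sub
      (tendsto_integral_urysohn _ (μ t).totalVariation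
        (hTV ▸ Measure.le_add_left le_rfl) hF f h01
        (fun V hV => (hf V hV).1) (fun V hV => (hf V hV).2))
  have hnorm : ∀ V, ‖f V‖ ≤ 1 := fun V =>
    (ContinuousMap.norm_le _ zero_le_one).2 fun x => by
      rw [Real.norm_eq_abs, abs_of_nonneg (h01 V x).1]; exact (h01 V x).2
  let 𝒰 := Ultrafilter.of (shrinking F)
  obtain ⟨g, -, hg⟩ := hT.ultrafilter_le_nhds' (𝒰.map fun V => toWeakSpace ℝ _ (T (f V)))
    (Filter.mem_map.2 <| Filter.univ_mem' fun V => subset_closure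
      ⟨_, ⟨f V, by simpa using hnorm V, rfl⟩, rfl⟩)
  refine ⟨(toWeakSpace ℝ _).symm g, fun t => ?_⟩
  have hev : Tendsto (fun V => T (f V) t) 𝒰 (𝓝 ((toWeakSpace ℝ C(S, ℝ)).symm g t)) := by
    let δ : StrongDual ℝ C(S, ℝ) := ContinuousMap.evalCLM ℝ t
    have hc : Continuous fun x : WeakSpace ℝ C(S, ℝ) => δ ((toWeakSpace ℝ _).symm x) :=
      WeakBilin.eval_continuous (topDualPairing ℝ C(S, ℝ)).flip δ
    exact (hc.tendsto g).comp hg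
  refine ⟨tendsto_nhds_unique hev ((hlim t).mono_left (Ultrafilter.of_le _)), ?_⟩
  refine le_of_tendsto hev.abs (Eventually.of_forall fun V => ?_)
  exact ((T (f V)).norm_coe_le_norm t).trans
    ((T.le_opNorm _).trans (mul_le_of_le_one_right (norm_nonneg _) (hnorm V)))

theorem kernel_sup_nonneg_of_weaklyCompact {S : Type*} [TopologicalSpace S] [CompactSpace S]
    [T2Space S] [PerfectSpace S] [MeasurableSpace S] [BorelSpace S]
    (T : C(S, ℝ) →L[ℝ] C(S, ℝ)) (hT : IsWeaklyCompactOperator T)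
    (μ : S → SignedMeasure S)
    (hreg : ∀ s, (μ s).totalVariation.Regular)
    (hker : ∀ (f : C(S, ℝ)) (s : S), T f s = SignedMeasure.integral (μ s) f) :
    ∀ U : Set S, IsOpen U → U.Nonempty → 0 ≤ sSup ((fun s => μ s {s}) '' U) := by
  intro U hU hUne
  by_contra! hneg
  obtain ⟨c, hc, hcU⟩ : ∃ c > 0, ∀ s ∈ U, μ s {s} ≤ -c := by
    -- An unbounded set of reals has `sSup` equal to `0`, so the negative supremum is genuine.
    have hbdd : BddAbove ((fun s => μ s {s}) '' U) := by
      by_contra h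
      rw [Real.sSup_of_not_bddAbove h] at hneg
      exact lt_irrefl _ hneg
    exact ⟨_, neg_pos.2 hneg, fun s hs => by
      rw [neg_neg]; exact le_csSup hbdd ⟨s, hs, rfl⟩⟩
  have step : ∀ n : ℕ, ∃ F V : Set S, IsClosed F ∧ IsOpen V ∧ V.Nonempty ∧ V ⊆ U ∧
      Disjoint F V ∧ ∀ t ∈ V, μ t F ≤ -(n * (c / 2)) := by
    intro n
    induction n with
    | zero => exact ⟨∅, U, isClosed_empty, hU, hUne, subset_rfl, Set.empty_disjoint _, by simp⟩
    | succ n ih =>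
      obtain ⟨F, V, hF, hV, ⟨s, hs⟩, hVU, hFV, hμ⟩ := ih
      obtain ⟨g, hg⟩ := exists_continuousMap_eq_kernel T hT μ hreg hker (isClosed_singleton (x := s))
      have hW : IsOpen (V ∩ g ⁻¹' Set.Iio (-(c / 2))) := hV.inter (isOpen_Iio.preimage g.continuous)
      have hsW : s ∈ V ∩ g ⁻¹' Set.Iio (-(c / 2)) := by
        refine ⟨hs, ?_⟩
        have := hcU s (hVU hs)
        simp only [Set.mem_preimage, Set.mem_Iio, (hg s).1]
        linarith
      have hsF : s ∉ F := fun h => Set.disjoint_left.1 hFV h hs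
      refine ⟨{s} ∪ F, (V ∩ g ⁻¹' Set.Iio (-(c / 2))) \ {s}, isClosed_singleton.union hF,
        hW.sdiff isClosed_singleton, ?_, fun t ht => hVU ht.1.1, ?_, ?_⟩
      · have : (𝓝[≠] s).NeBot := inferInstance
        exact this.nonempty_of_mem (Filter.inter_mem (mem_nhdsWithin_of_mem_nhds (hW.mem_nhds hsW))
          self_mem_nhdsWithin)
      · rw [Set.disjoint_union_left]
        exact ⟨Set.disjoint_sdiff_right, hFV.mono_right fun t ht => ht.1.1⟩
      · intro t ht
        rw [VectorMeasure.of_union (Set.disjoint_singleton_left.2 hsF) (measurableSet_singleton s)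
          hF.measurableSet]
        have h1 := hμ t ht.1.1
        have h2 : g t < -(c / 2) := ht.1.2
        rw [(hg t).1] at h2
        push_cast
        linarith
  obtain ⟨n, hn⟩ := exists_nat_gt (‖T‖ / (c / 2))
  obtain ⟨F, V, hF, -, ⟨t, ht⟩, -, -, hμ⟩ := step n
  obtain ⟨g, hg⟩ := exists_continuousMap_eq_kernel T hT μ hreg hker hF
  have h1 := hμ t ht
  have h2 := (abs_le.1 (hg t).2).1
  rw [(hg t).1] at h2
  rw [div_lt_iff₀ (by positivity)] at hn
  linarith
end

section
/- Let S be a compact Hausdorff space without isolated points. If T : C(S) → C(S) is a weakly compact operator, then ‖I + T‖ = 1 + ‖T‖. -/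
/-!
The upper bound is the triangle inequality. For the lower bound take `f` in the unit ball with
`T f > ‖T‖ - ε` on a nonempty open set `U`, and put `v = (1 - f) / 2`. If `h` is a bump function at
some `s ∈ U`, then `f + 2 h v` stays in the unit ball and takes the value `1` at `s`, so it is enough
to find `s ∈ U` and a bump `h` at `s` with `T (h v) s > -ε` (`exists_bump_apply_gt`).

If there were none, weak compactness would give, for each `t ∈ U`, a *continuous* function `g t`
which is a weak cluster point of `T (h v)` as the bumps `h` at `t` shrink to `{t}`
(`exists_cluster`; in terms of the representing measures `μ_s = T* δ_s` one has
`g t s = v t * μ_s {t}`). Then `g t t ≤ -ε`, so `g t < -ε/2` near `t`. Since no nonempty open set is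
finite, any number `n` of distinct points `t` can be chosen with all the `g t` below `-ε/2` at one
common point `s` (`exists_many_points`). Replacing the `g t` by `T (h v)` with disjointly supported
bumps and summing yields an element of the unit ball on which `T` is at most `-n ε/2` at `s`, which
is impossible for large `n`.
-/

open MeasureTheory Topology

/-- `h` is a continuous function with values in `[0, 1]`, equal to `1` at `t` and vanishing
off `V`. -/
def IsBump {S : Type*} [TopologicalSpace S] (t : S) (V : Set S) (h : C(S, ℝ)) : Prop :=
  (∀ x, 0 ≤ h x) ∧ (∀ x, h x ≤ 1) ∧ h t = 1 ∧ ∀ x, x ∉ V → h x = 0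

lemma exists_isBump {S : Type*} [TopologicalSpace S] [CompactSpace S] [T2Space S]
    (t : S) (V : Set S) (hV : IsOpen V) (ht : t ∈ V) : ∃ h : C(S, ℝ), IsBump t V h := by
  obtain ⟨h, h0, h1, h2⟩ := exists_continuous_zero_one_of_isClosed
    hV.isClosed_compl (isClosed_singleton (x := t))
    (Set.disjoint_singleton_right.2 (by simpa using ht))
  exact ⟨h, fun x => (h2 x).1, fun x => (h2 x).2, h1 rfl, fun x hx => h0 hx⟩

lemma abs_apply_le_opNorm {S : Type*} [TopologicalSpace S] [CompactSpace S]
    (T : C(S, ℝ) →L[ℝ] C(S, ℝ)) {u : C(S, ℝ)} (hu : ‖u‖ ≤ 1) (s : S) : |T u s| ≤ ‖T‖ :=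
  ((T u).norm_coe_le_norm s).trans (T.unit_le_opNorm u hu)

/-- The images `T (h * v)`, for bumps `h` shrinking to `t`, have a weak cluster point `g`. Only its
pointwise approximation property is recorded. -/
lemma exists_cluster {S : Type*} [TopologicalSpace S] [CompactSpace S] [T2Space S]
    (T : C(S, ℝ) →L[ℝ] C(S, ℝ)) (hT : IsWeaklyCompactOperator T)
    (v : C(S, ℝ)) (hv0 : ∀ x, 0 ≤ v x) (hv1 : ∀ x, v x ≤ 1) (t : S) :
    ∃ g : C(S, ℝ), ∀ V : Set S, IsOpen V → t ∈ V → ∀ s : S, ∀ δ > 0,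
      ∃ h : C(S, ℝ), IsBump t V h ∧ |T (h * v) s - g s| < δ := by
  choose h hh using fun V : TopologicalSpace.OpenNhdsOf t =>
    exists_isBump t (V : Set S) V.isOpen V.mem
  have hmem : ∀ V, toWeakSpace ℝ C(S, ℝ) (T (h V * v)) ∈
      closure ((toWeakSpace ℝ C(S, ℝ)) '' (T '' Metric.closedBall 0 1)) := by
    intro V
    refine subset_closure ⟨_, ⟨_, ?_, rfl⟩, rfl⟩
    rw [mem_closedBall_zero_iff, ContinuousMap.norm_le _ zero_le_one]
    intro x
    obtain ⟨h0, h1, -, -⟩ := hh V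
    rw [ContinuousMap.mul_apply, Real.norm_eq_abs, abs_of_nonneg (mul_nonneg (h0 x) (hv0 x))]
    exact mul_le_one₀ (h1 x) (hv0 x) (hv1 x)
  obtain ⟨g, -, hg⟩ := hT.exists_mapClusterPt (f := Filter.atBot)
    (u := fun V => toWeakSpace ℝ C(S, ℝ) (T (h V * v)))
    (Filter.tendsto_principal.2 (Filter.Eventually.of_forall hmem))
  refine ⟨(toWeakSpace ℝ C(S, ℝ)).symm g, fun V hV ht s δ hδ => ?_⟩
  -- Point evaluations are weakly continuous.
  have hcont : Continuous fun u : WeakSpace ℝ C(S, ℝ) =>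
      ((toWeakSpace ℝ C(S, ℝ)).symm u) s :=
    WeakBilin.eval_continuous (topDualPairing ℝ C(S, ℝ)).flip (ContinuousMap.evalCLM ℝ s)
  have hfreq := (hg.frequently (hcont.continuousAt.eventually (Metric.ball_mem_nhds _ hδ)))
  obtain ⟨W, hW, hWV⟩ := (hfreq.and_eventually
    (Filter.eventually_le_atBot (⟨⟨V, hV⟩, ht⟩ : TopologicalSpace.OpenNhdsOf t))).exists
  obtain ⟨h0, h1, h2, h3⟩ := hh W
  refine ⟨h W, ⟨h0, h1, h2, fun x hx => h3 x fun hxW => hx (hWV hxW)⟩, ?_⟩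
  simpa [Real.dist_eq] using hW

/-- If each continuous `g t` is less than `c` at `t`, then arbitrarily many of the `g t` are
less than `c` simultaneously at some point. -/
lemma exists_many_points {S : Type*} [TopologicalSpace S] [T2Space S] [PerfectSpace S]
    (g : S → C(S, ℝ)) (c : ℝ) (U : Set S) (hU : IsOpen U) (hne : U.Nonempty)
    (hg : ∀ t ∈ U, g t t < c) (n : ℕ) :
    ∃ A : Finset S, A.card = n ∧ ∃ W : Set S, IsOpen W ∧ W.Nonempty ∧ W ⊆ U ∧
      ∀ t ∈ A, ∀ s ∈ W, g t s < c := by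
  classical
  induction n with
  | zero => exact ⟨∅, rfl, U, hU, hne, subset_rfl, by simp⟩
  | succ n ih =>
    obtain ⟨A, hA, W, hW, ⟨w, hw⟩, hWU, hlt⟩ := ih
    obtain ⟨t, htW, htA⟩ := (infinite_of_mem_nhds w (hW.mem_nhds hw)).exists_notMem_finset A
    refine ⟨insert t A, by rw [Finset.card_insert_of_notMem htA, hA], W ∩ {s | g t s < c},
      hW.inter (isOpen_lt (g t).continuous continuous_const), ⟨t, htW, hg t (hWU htW)⟩,
      Set.inter_subset_left.trans hWU, fun r hr s hs => ?_⟩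
    rcases Finset.mem_insert.1 hr with rfl | hr
    · exact hs.2
    · exact hlt r hr s hs.1

lemma exists_bump_apply_gt {S : Type*} [TopologicalSpace S] [CompactSpace S] [T2Space S]
    [PerfectSpace S] (T : C(S, ℝ) →L[ℝ] C(S, ℝ)) (hT : IsWeaklyCompactOperator T)
    (v : C(S, ℝ)) (hv0 : ∀ x, 0 ≤ v x) (hv1 : ∀ x, v x ≤ 1)
    (U : Set S) (hU : IsOpen U) (hne : U.Nonempty) (ε : ℝ) (hε : 0 < ε) :
    ∃ s ∈ U, ∃ h : C(S, ℝ), IsBump s Set.univ h ∧ -ε < T (h * v) s := by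
  classical
  by_contra! hcon
  choose g hg using exists_cluster T hT v hv0 hv1
  have hgt : ∀ t ∈ U, g t t < -(ε / 2) := by
    intro t ht
    obtain ⟨h, hb, hlt⟩ := hg t Set.univ isOpen_univ trivial t (ε / 2) (by positivity)
    have := hcon t ht h hb
    rw [abs_lt] at hlt
    linarith
  obtain ⟨n, hn⟩ := exists_nat_gt (‖T‖ / (ε / 2))
  rw [div_lt_iff₀ (by positivity)] at hn
  obtain ⟨A, hA, W, -, ⟨s, hs⟩, -, hlt⟩ := exists_many_points g (-(ε / 2)) U hU hne hgt n
  obtain ⟨V, hV, hdisj⟩ := A.finite_toSet.t2_separation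
  have key : ∀ t, ∃ h : C(S, ℝ), IsBump t (V t) h ∧ (t ∈ A → T (h * v) s < -(ε / 2)) := by
    intro t
    by_cases ht : t ∈ A
    · obtain ⟨h, hb, hh⟩ := hg t (V t) (hV t).2 (hV t).1 s (-(ε / 2) - g t s)
        (by linarith [hlt t ht s hs])
      exact ⟨h, hb, fun _ => by rw [abs_lt] at hh; linarith⟩
    · obtain ⟨h, hb⟩ := exists_isBump t (V t) (hV t).2 (hV t).1
      exact ⟨h, hb, fun h => absurd h ht⟩
  choose h hb hTh using key
  have hnorm : ‖∑ t ∈ A, h t * v‖ ≤ 1 := by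
    rw [ContinuousMap.norm_le _ zero_le_one]
    intro x
    rw [ContinuousMap.sum_apply]
    have hle : ∀ t, ‖(h t * v) x‖ ≤ 1 := fun t => by
      rw [ContinuousMap.mul_apply, Real.norm_eq_abs,
        abs_of_nonneg (mul_nonneg ((hb t).1 x) (hv0 x))]
      exact mul_le_one₀ ((hb t).2.1 x) (hv0 x) (hv1 x)
    -- The supports are disjoint, so at most one term is nonzero at `x`.
    by_cases hx : ∃ t ∈ A, x ∈ V t
    · obtain ⟨t, ht, hxt⟩ := hx
      rw [Finset.sum_eq_single_of_mem t ht]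
      · exact hle t
      · intro r hr hrt
        have : x ∉ V r := fun hxr => Set.disjoint_left.1 (hdisj hr ht hrt) hxr hxt
        simp [(hb r).2.2.2 x this]
    · push Not at hx
      rw [Finset.sum_eq_zero fun t ht => by simp [(hb t).2.2.2 x (hx t ht)]]
      simp
  have h1 := abs_apply_le_opNorm T hnorm s
  have h2 : T (∑ t ∈ A, h t * v) s ≤ n * (-(ε / 2)) := by
    rw [map_sum, ContinuousMap.sum_apply, ← hA, ← nsmul_eq_mul]
    exact Finset.sum_le_card_nsmul _ _ _ fun t ht => (hTh t ht).le
  have h3 := (abs_le.1 h1).1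
  linarith

theorem daugavet_of_weaklyCompact {S : Type*} [TopologicalSpace S] [CompactSpace S]
    [T2Space S] [PerfectSpace S] [Nonempty S]
    (T : C(S, ℝ) →L[ℝ] C(S, ℝ)) (hT : IsWeaklyCompactOperator T) :
    ‖ContinuousLinearMap.id ℝ C(S, ℝ) + T‖ = 1 + ‖T‖ := by
  apply le_antisymm
  · refine (norm_add_le (ContinuousLinearMap.id ℝ C(S, ℝ)) T).trans ?_
    exact add_le_add ContinuousLinearMap.norm_id_le le_rfl
  refine le_of_forall_pos_le_add fun ε hε => ?_
  -- Up to the sign of `f`, the norm of `T` is nearly attained from above at some point.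
  obtain ⟨f, hf, s₀, hs₀⟩ : ∃ f : C(S, ℝ), ‖f‖ ≤ 1 ∧ ∃ s, ‖T‖ - ε / 2 < T f s := by
    obtain ⟨f, hf, hTf⟩ := T.exists_lt_apply_of_lt_opNorm (show ‖T‖ - ε / 2 < ‖T‖ by linarith)
    obtain ⟨s, hs⟩ : ∃ s, ‖T‖ - ε / 2 < ‖T f s‖ := by
      by_contra! hcon
      exact absurd ((ContinuousMap.norm_le_of_nonempty _).2 hcon) (not_le.2 hTf)
    rcases lt_abs.1 hs with hs | hs
    · exact ⟨f, hf.le, s, hs⟩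
    · exact ⟨-f, by simpa using hf.le, s, by simpa using hs⟩
  have hfx : ∀ x, -1 ≤ f x ∧ f x ≤ 1 := fun x => abs_le.1 ((f.norm_coe_le_norm x).trans hf)
  let v : C(S, ℝ) := (1 / 2 : ℝ) • (1 - f)
  have hv : ∀ x, v x = (1 - f x) / 2 := fun x => by simp [v]; ring
  obtain ⟨s, hs, h, ⟨h0, h1, h2, -⟩, hlt⟩ := exists_bump_apply_gt T hT v
    (fun x => by rw [hv]; linarith [hfx x]) (fun x => by rw [hv]; linarith [hfx x])
    {s | ‖T‖ - ε / 2 < T f s} (isOpen_lt continuous_const (T f).continuous) ⟨s₀, hs₀⟩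
    (ε / 4) (by positivity)
  have hs : ‖T‖ - ε / 2 < T f s := hs
  -- `f + 2 h v = (1 - h) f + h` is a convex combination of `f` and `1`.
  have hnorm : ‖f + (2 : ℝ) • (h * v)‖ ≤ 1 := by
    rw [ContinuousMap.norm_le _ zero_le_one]
    intro x
    have e : (f + (2 : ℝ) • (h * v)) x = f x + h x * (1 - f x) := by simp [hv]; ring
    rw [e, Real.norm_eq_abs, abs_le]
    constructor <;> nlinarith [hfx x, h0 x, h1 x]
  have hle := abs_apply_le_opNorm (ContinuousLinearMap.id ℝ C(S, ℝ) + T) hnorm s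
  have e : (ContinuousLinearMap.id ℝ C(S, ℝ) + T) (f + (2 : ℝ) • (h * v)) s
      = 1 + T f s + 2 * T (h * v) s := by
    simp [hv, h2]; ring
  rw [e] at hle
  linarith [le_abs_self (1 + T f s + 2 * T (h * v) s)]
end

section
/- Let S be a compact Hausdorff space without isolated points. If T : C(S) → C(S) is a compact operator, then ‖I + T‖ = 1 + ‖T‖. -/
/-!
The bound `‖I + T‖ ≤ 1 + ‖T‖` is the triangle inequality. For the converse, fix `ε > 0` and take `f`
in the unit ball with `T f > ‖T‖ - ε` on a nonempty open set `U`. There are no isolated points, so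
`U` contains a sequence of disjoint bumps `h n`, with peaks `h n (s n) = 1`. Replacing `f` by
`g n = f + (1 - f) * h n` keeps it in the unit ball and makes it equal to `1` at `s n ∈ U`. The
perturbations `(1 - f) * h n` have uniformly bounded finite sums (hence tend weakly to zero), so the
compact operator `T` makes some of them smaller than `ε` (`exists_norm_apply_lt`). For such an `n`,
`(g n + T (g n)) (s n) > 1 + (‖T‖ - ε) - ε`.
-/

open MeasureTheory Topology
open Filter

/-- A compact operator takes arbitrarily small values on a sequence whose finite sums are uniformly
bounded: the Cesàro means of any subsequence tend to zero, so `0` is the only possible limit of a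
convergent subsequence of the images. -/
lemma exists_norm_apply_lt {E F : Type*} [NormedAddCommGroup E] [NormedSpace ℝ E]
    [NormedAddCommGroup F] [NormedSpace ℝ F] (T : E →L[ℝ] F) (hT : IsCompactOperator T)
    (k : ℕ → E) (M : ℝ) (hk : ∀ A : Finset ℕ, ‖∑ i ∈ A, k i‖ ≤ M) {ε : ℝ} (hε : 0 < ε) :
    ∃ n, ‖T (k n)‖ < ε := by
  by_contra! hlarge
  have hcpt : IsCompact (closure (T '' Metric.closedBall 0 M)) :=
    IsCompactOperator.isCompact_closure_image_closedBall (𝕜₁ := ℝ) (f := (T : E →ₗ[ℝ] F)) hT M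
  have hmem : ∀ n, T (k n) ∈ closure (T '' Metric.closedBall 0 M) := fun n =>
    subset_closure ⟨k n, by simpa using hk {n}, rfl⟩
  obtain ⟨y, -, φ, hφ, hlim⟩ := hcpt.tendsto_subseq hmem
  have hmean := hlim.cesaro_smul
  have hmean0 : Tendsto (fun n : ℕ => (n⁻¹ : ℝ) • ∑ i ∈ Finset.range n, ((fun n => T (k n)) ∘ φ) i)
      atTop (𝓝 0) := by
    refine squeeze_zero_norm (a := fun n : ℕ => (n⁻¹ : ℝ) * (‖T‖ * M)) (fun n => ?_) ?_
    · have hsum : ∑ i ∈ Finset.range n, ((fun n => T (k n)) ∘ φ) i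
          = T (∑ j ∈ (Finset.range n).map ⟨φ, hφ.injective⟩, k j) := by
        simp [map_sum]
      rw [hsum, norm_smul, norm_inv, RCLike.norm_natCast]
      gcongr
      exact T.le_opNorm_of_le (hk _)
    · simpa using (tendsto_inv_atTop_nhds_zero_nat (𝕜 := ℝ)).mul_const (‖T‖ * M)
  have hy : y = 0 := tendsto_nhds_unique hmean hmean0
  have : ε ≤ ‖y‖ := ge_of_tendsto' hlim.norm fun n => hlarge (φ n)
  simp only [hy, norm_zero] at this
  linarith

/-- Every nonempty open subset of a perfect compact Hausdorff space carries a sequence of Urysohn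
bumps vanishing outside pairwise disjoint sets; disjointness is recorded as `∑ h i ≤ 1`. -/
lemma exists_disjoint_bumps {S : Type*} [TopologicalSpace S] [CompactSpace S]
    [T2Space S] [PerfectSpace S] {U : Set S} (hU : IsOpen U) (hne : U.Nonempty) :
    ∃ (s : ℕ → S) (h : ℕ → C(S, ℝ)), (∀ n, s n ∈ U) ∧ (∀ n, h n (s n) = 1) ∧
      (∀ n x, 0 ≤ h n x) ∧ ∀ (A : Finset ℕ) x, ∑ i ∈ A, h i x ≤ 1 := by
  obtain ⟨x₀, hx₀⟩ := hne
  have : Infinite U := (infinite_of_mem_nhds x₀ (hU.mem_nhds hx₀)).to_subtype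
  obtain ⟨V, hVinf, hVo, hVd⟩ := exists_seq_infinite_isOpen_pairwise_disjoint U
  choose t ht using fun n => (hVinf n).nonempty
  have hWo : ∀ n, IsOpen (((↑) : U → S) '' V n) := fun n => hU.isOpenMap_subtype_val _ (hVo n)
  have hbump : ∀ n, ∃ h : C(S, ℝ), Set.EqOn h 0 (((↑) : U → S) '' V n)ᶜ ∧
      Set.EqOn h 1 {(t n : S)} ∧ ∀ x, h x ∈ Set.Icc (0 : ℝ) 1 := fun n =>
    exists_continuous_zero_one_of_isClosed (hWo n).isClosed_compl isClosed_singleton <| by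
      rw [Set.disjoint_singleton_right]
      exact fun hn => hn ⟨t n, ht n, rfl⟩
  choose h h0 h1 h01 using hbump
  refine ⟨fun n => t n, h, fun n => (t n).2, fun n => h1 n rfl, fun n x => (h01 n x).1,
    fun A x => ?_⟩
  by_cases hx : ∃ n, x ∈ ((↑) : U → S) '' V n
  · obtain ⟨n, z, hz, rfl⟩ := hx
    have hzero : ∀ i, i ≠ n → h i z = 0 := fun i hi => h0 i <| by
      rintro ⟨w, hw, hwz⟩
      rw [Subtype.val_injective hwz] at hw
      exact Set.disjoint_left.1 (hVd hi) hw hz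
    by_cases hn : n ∈ A
    · rw [Finset.sum_eq_single_of_mem n hn fun i _ hi => hzero i hi]
      exact (h01 n z).2
    · rw [Finset.sum_eq_zero fun i hi => hzero i fun hin => hn (hin ▸ hi)]
      exact zero_le_one
  · push Not at hx
    rw [Finset.sum_eq_zero fun i _ => h0 i (hx i)]
    exact zero_le_one

theorem daugavet_of_compact {S : Type*} [TopologicalSpace S] [CompactSpace S]
    [T2Space S] [PerfectSpace S] [Nonempty S]
    (T : C(S, ℝ) →L[ℝ] C(S, ℝ)) (hT : IsCompactOperator T) :
    ‖ContinuousLinearMap.id ℝ C(S, ℝ) + T‖ = 1 + ‖T‖ := by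
  apply le_antisymm
  · refine (norm_add_le (ContinuousLinearMap.id ℝ C(S, ℝ)) T).trans ?_
    gcongr
    exact ContinuousLinearMap.norm_id_le
  refine le_of_forall_pos_le_add fun δ hδ => ?_
  obtain ⟨ε, hε, rfl⟩ : ∃ ε : ℝ, 0 < ε ∧ δ = 2 * ε := ⟨δ / 2, by linarith, by ring⟩
  obtain ⟨f, hf, x₀, hx₀⟩ : ∃ f : C(S, ℝ), ‖f‖ ≤ 1 ∧ ∃ x₀, ‖T‖ - ε < T f x₀ := by
    obtain ⟨f, hf, hTf⟩ := T.exists_lt_apply_of_lt_opNorm (sub_lt_self ‖T‖ hε)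
    obtain ⟨x₀, hx₀⟩ : ∃ x₀, ‖T‖ - ε < |T f x₀| := by
      by_contra! hle
      exact hTf.not_ge ((ContinuousMap.norm_le_of_nonempty _).2 hle)
    -- Replacing `f` by `-f` if necessary, the large value of `T f` is positive.
    rcases lt_abs.1 hx₀ with hpos | hneg
    · exact ⟨f, hf.le, x₀, hpos⟩
    · exact ⟨-f, by simpa using hf.le, x₀, by simpa using hneg⟩
  have hfx : ∀ x, |f x| ≤ 1 := fun x => (f.norm_coe_le_norm x).trans hf
  obtain ⟨s, h, hsU, hs1, h0, hsum⟩ := exists_disjoint_bumps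
    (isOpen_lt continuous_const (T f).continuous : IsOpen {x | ‖T‖ - ε < T f x}) ⟨x₀, hx₀⟩
  obtain ⟨n, hn⟩ := exists_norm_apply_lt T hT (fun n => (1 - f) * h n) 2 (fun A => by
    refine (ContinuousMap.norm_le _ zero_le_two).2 fun x => ?_
    have hA : 0 ≤ ∑ i ∈ A, h i x := Finset.sum_nonneg fun i _ => h0 i x
    have hA1 := hsum A x
    have hfx' := abs_le.1 (hfx x)
    rw [← Finset.mul_sum, ContinuousMap.mul_apply, ContinuousMap.sum_apply, Real.norm_eq_abs,
      abs_of_nonneg (mul_nonneg (by simpa using hfx'.2) hA)]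
    simp only [ContinuousMap.sub_apply, ContinuousMap.one_apply]
    nlinarith) hε
  -- Pointwise, `g` is the convex combination `(1 - h n) * f + h n * 1`.
  set g : C(S, ℝ) := f + (1 - f) * h n with hg
  have hg1 : ‖g‖ ≤ 1 := by
    refine (ContinuousMap.norm_le _ zero_le_one).2 fun x => ?_
    have hh0 := h0 n x
    have hh1 : h n x ≤ 1 := by simpa using hsum {n} x
    have hfx' := abs_le.1 (hfx x)
    rw [Real.norm_eq_abs, abs_le]
    simp only [hg, ContinuousMap.add_apply, ContinuousMap.mul_apply, ContinuousMap.sub_apply,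
      ContinuousMap.one_apply]
    constructor <;> nlinarith
  have hval : (ContinuousLinearMap.id ℝ C(S, ℝ) + T) g (s n)
      = 1 + T f (s n) + T ((1 - f) * h n) (s n) := by
    simp only [_root_.add_apply, ContinuousLinearMap.id_apply,
      ContinuousMap.add_apply, hg, map_add, ContinuousMap.mul_apply, ContinuousMap.sub_apply,
      ContinuousMap.one_apply, hs1]
    ring
  have hup : (ContinuousLinearMap.id ℝ C(S, ℝ) + T) g (s n)
      ≤ ‖ContinuousLinearMap.id ℝ C(S, ℝ) + T‖ :=
    (le_abs_self _).trans <| (ContinuousMap.norm_coe_le_norm _ _).trans <|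
      ((ContinuousLinearMap.id ℝ C(S, ℝ) + T).le_opNorm_of_le hg1).trans (mul_one _).le
  have hTf : ‖T‖ - ε < T f (s n) := hsU n
  have hsmall := (abs_lt.1 (((T ((1 - f) * h n)).norm_coe_le_norm (s n)).trans_lt hn)).1
  linarith
end

section
/- Let μ be an atomless measure and let T : L¹(μ) → L¹(μ) be a weakly compact operator on the real Banach space L¹(μ). Then ‖I + T‖ = 1 + ‖T‖. -/
/-!
The proof rests on two facts about the band projections `f ↦ 1_A f` of `L¹(μ)`.

* A relatively weakly compact set `K` is uniformly integrable: `‖1_A g‖ → 0` uniformly over `g ∈ K`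
  as `μ A → 0` (`eventually_norm_proj_lt`). The argument is a gliding hump which uses only that
  `‖x‖ = ‖P x‖ + ‖x - P x‖` for the projections involved. If uniformity fails, there are `δ > 0`, a
  weak cluster point `g` and, recursively, functionals `φ n` in the unit ball of the dual and points
  `x n ∈ K` with `|φ n (x m - g)| ≤ δ / 4` for `n < m` and `|φ n (x m - g)| ≥ δ / 2` for `m ≤ n`.
  Exchanging the two limits, by weak compactness of `K` and weak-* compactness of the dual ball,
  gives a contradiction (`double_limit_contradiction`).
* Since `μ` is atomless, the norm of `T` is determined by functions supported on sets of
  arbitrarily small measure: a bound `‖T (1_A f)‖ ≤ q ‖1_A f‖` for all small `A` passes to `f` by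
  exhaustion (`norm_le_of_small`).

Hence for every `ε > 0` there is `h ≠ 0` supported on a small set `A` for which `‖T h‖` is nearly
`‖T‖ ‖h‖`, while `T h` has little mass on `A`. So `h` and `T h` are almost disjoint, and `‖h + T h‖`
is nearly `‖h‖ + ‖T h‖`, that is, `(1 + ‖T‖) ‖h‖`.
-/

open MeasureTheory

open Filter Topology Set

/-! ### Uniform smallness of projections on weakly compact sets -/

theorem continuous_dual_weakSpace {E : Type*} [NormedAddCommGroup E] [NormedSpace ℝ E]
    (φ : StrongDual ℝ E) : Continuous fun y : WeakSpace ℝ E => φ ((toWeakSpace ℝ E).symm y) :=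
  WeakBilin.eval_continuous (topDualPairing ℝ E).flip φ

/-- A functional `φ` in the unit ball can be modified along an `L`-projection `P` so as to be large at a
given `u`: the new functional is `φ ∘ (1 - P) ± χ ∘ P`, with `χ` norming `P u`. It stays in the unit
ball because of the `ℓ¹`-decomposition `hP`, and changes little at vectors `v` with `P v` small. -/
theorem exists_modified_functional {E : Type*} [NormedAddCommGroup E] [NormedSpace ℝ E]
    (P : E →L[ℝ] E) (hP : ∀ x, ‖P x‖ + ‖x - P x‖ = ‖x‖) (φ : StrongDual ℝ E) (hφ : ‖φ‖ ≤ 1)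
    (u : E) : ∃ ψ : StrongDual ℝ E, ‖ψ‖ ≤ 1 ∧ (∀ v, |ψ v - φ v| ≤ 2 * ‖P v‖) ∧
      ‖P u‖ - |φ u| ≤ |ψ u| := by
  obtain ⟨χ, hχ, hχu⟩ := exists_dual_vector'' ℝ (P u)
  have hχu : χ (P u) = ‖P u‖ := by simpa using hχu
  have key : ∀ χ' : StrongDual ℝ E, ‖χ'‖ ≤ 1 →
      ‖φ.comp (ContinuousLinearMap.id ℝ E - P) + χ'.comp P‖ ≤ 1 ∧
      ∀ v, |(φ.comp (ContinuousLinearMap.id ℝ E - P) + χ'.comp P) v - φ v| ≤ 2 * ‖P v‖ := by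
    intro χ' hχ'
    constructor
    · refine ContinuousLinearMap.opNorm_le_bound _ zero_le_one fun v => ?_
      have h1 : ‖φ (v - P v)‖ ≤ ‖v - P v‖ := by
        simpa using φ.le_of_opNorm_le hφ (v - P v)
      have h2 : ‖χ' (P v)‖ ≤ ‖P v‖ := by simpa using χ'.le_of_opNorm_le hχ' (P v)
      have h3 := norm_add_le (φ (v - P v)) (χ' (P v))
      have h4 := hP v
      simp only [_root_.add_apply, ContinuousLinearMap.comp_apply,
        _root_.sub_apply, ContinuousLinearMap.id_apply]
      linarith
    · intro v
      have h1 : ‖φ (P v)‖ ≤ ‖P v‖ := by simpa using φ.le_of_opNorm_le hφ (P v)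
      have h2 : ‖χ' (P v)‖ ≤ ‖P v‖ := by simpa using χ'.le_of_opNorm_le hχ' (P v)
      simp only [_root_.add_apply, ContinuousLinearMap.comp_apply,
        _root_.sub_apply, ContinuousLinearMap.id_apply, map_sub]
      rw [Real.norm_eq_abs, abs_le] at h1 h2
      rw [abs_le]
      constructor <;> linarith [h1.1, h1.2, h2.1, h2.2]
  -- The sign of the new part is opposite to that of `φ (P u)`, so that nothing cancels.
  rcases le_total 0 (φ (P u)) with h | h
  · refine ⟨_, (key (-χ) (by simpa using hχ)).1, (key (-χ) (by simpa using hχ)).2, ?_⟩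
    simp only [_root_.add_apply, ContinuousLinearMap.comp_apply,
        _root_.sub_apply, ContinuousLinearMap.id_apply, map_sub,
        _root_.neg_apply, hχu]
    rw [← abs_neg (φ u - _ + _)]
    linarith [le_abs_self (-(φ u - φ (P u) + -‖P u‖)), le_abs_self (φ u)]
  · refine ⟨_, (key χ hχ).1, (key χ hχ).2, ?_⟩
    simp only [_root_.add_apply, ContinuousLinearMap.comp_apply,
        _root_.sub_apply, ContinuousLinearMap.id_apply, map_sub, hχu]
    linarith [le_abs_self (φ u - φ (P u) + ‖P u‖), neg_abs_le (φ u)]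

/-- Grothendieck's double limit criterion in the form needed here: the iterated limits of
`|φ n (x m - g)|` cannot be separated when the `x m` range over a relatively weakly compact set. -/
theorem double_limit_contradiction {E : Type*} [NormedAddCommGroup E] [NormedSpace ℝ E]
    {K : Set E} (hK : IsCompact (closure (toWeakSpace ℝ E '' K))) (g : E) {b c : ℝ} (hbc : b < c)
    (φ : ℕ → StrongDual ℝ E) (x : ℕ → E) (hφ : ∀ n, ‖φ n‖ ≤ 1) (hx : ∀ n, x n ∈ K)
    (h1 : ∀ n m, n < m → |φ n (x m - g)| ≤ b) (h2 : ∀ n m, m ≤ n → c ≤ |φ n (x m - g)|) :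
    False := by
  obtain ⟨y, -, hy⟩ := hK.exists_mapClusterPt (f := atTop)
    (u := fun n => toWeakSpace ℝ E (x n))
    (tendsto_principal.2 <|
      Eventually.of_forall fun n => subset_closure (mem_image_of_mem _ (hx n)))
  obtain ⟨ψ, -, hψ⟩ := (WeakDual.isCompact_closedBall (0 : StrongDual ℝ E) 1).exists_mapClusterPt
    (f := atTop) (u := fun n => StrongDual.toWeakDual (φ n)) (tendsto_principal.2 <|
      Eventually.of_forall fun n => by simpa using hφ n)
  set z : E := (toWeakSpace ℝ E).symm y
  have hcont : ∀ χ : StrongDual ℝ E,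
      Continuous fun w : WeakSpace ℝ E => |χ ((toWeakSpace ℝ E).symm w - g)| := fun χ => by
    simp only [map_sub]
    exact ((continuous_dual_weakSpace χ).sub continuous_const).abs
  have hz1 : ∀ n, |φ n (z - g)| ≤ b := fun n => by
    have hcl : IsClosed {w : WeakSpace ℝ E | |φ n ((toWeakSpace ℝ E).symm w - g)| ≤ b} :=
      isClosed_le (hcont _) continuous_const
    refine hcl.mem_of_mapClusterPt hy ?_
    filter_upwards [eventually_gt_atTop n] with m hm using h1 n m hm
  have hz2 : |ψ (z - g)| ≤ b := by
    have hcl : IsClosed {w : WeakDual ℝ E | |w (z - g)| ≤ b} :=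
      isClosed_le (WeakDual.eval_continuous _).abs continuous_const
    exact hcl.mem_of_mapClusterPt hψ (Eventually.of_forall hz1)
  have hz3 : ∀ m, c ≤ |ψ (x m - g)| := fun m => by
    have hcl : IsClosed {w : WeakDual ℝ E | c ≤ |w (x m - g)|} :=
      isClosed_le continuous_const (WeakDual.eval_continuous _).abs
    refine hcl.mem_of_mapClusterPt hψ ?_
    filter_upwards [eventually_ge_atTop m] with n hn using h2 n m hn
  have hz4 : c ≤ |ψ (z - g)| := by
    have hcl : IsClosed {w : WeakSpace ℝ E |
        c ≤ |ψ.toStrongDual ((toWeakSpace ℝ E).symm w - g)|} :=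
      isClosed_le continuous_const (hcont _)
    exact hcl.mem_of_mapClusterPt hy (Eventually.of_forall hz3)
  linarith

/-- If `L`-projections `P i` tend strongly to `0` along `l`, then they do so uniformly on relatively
weakly compact sets. In `L¹` this says that such sets are uniformly integrable. -/
theorem eventually_norm_proj_lt {E ι : Type*} [NormedAddCommGroup E] [NormedSpace ℝ E]
    {l : Filter ι} (P : ι → E →L[ℝ] E) (hP : ∀ i x, ‖P i x‖ + ‖x - P i x‖ = ‖x‖)
    (hl : ∀ x, Tendsto (fun i => P i x) l (𝓝 0))
    {K : Set E} (hK : IsCompact (closure (toWeakSpace ℝ E '' K))) {δ : ℝ} (hδ : 0 < δ) :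
    ∀ᶠ i in l, ∀ x ∈ K, ‖P i x‖ < δ := by
  by_contra hcon
  have hfreq : ∃ᶠ i in l, ∃ x ∈ K, δ ≤ ‖P i x‖ := by
    simpa only [not_eventually, not_forall, not_lt, exists_prop] using hcon
  obtain ⟨i₀, x₀, hx₀, -⟩ := hfreq.exists
  have hch : ∀ i, ∃ x ∈ K, (∃ x ∈ K, δ ≤ ‖P i x‖) → δ ≤ ‖P i x‖ := fun i => by
    by_cases h : ∃ x ∈ K, δ ≤ ‖P i x‖
    · obtain ⟨x, hx, hx'⟩ := h
      exact ⟨x, hx, fun _ => hx'⟩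
    · exact ⟨x₀, hx₀, fun h' => absurd h' h⟩
  choose x hxK hxδ using hch
  set l' := l ⊓ 𝓟 {i | ∃ x ∈ K, δ ≤ ‖P i x‖}
  have hne : l'.NeBot := frequently_mem_iff_neBot.1 hfreq
  have hl' : ∀ y, Tendsto (fun i => P i y) l' (𝓝 0) := fun y => (hl y).mono_left inf_le_left
  have hbad : ∀ᶠ i in l', δ ≤ ‖P i (x i)‖ := by
    filter_upwards [mem_inf_of_right (mem_principal_self _)] with i hi using hxδ i hi
  obtain ⟨y, -, hy⟩ := hK.exists_mapClusterPt (f := l') (u := fun i => toWeakSpace ℝ E (x i))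
    (tendsto_principal.2 <|
      Eventually.of_forall fun i => subset_closure (mem_image_of_mem _ (hxK i)))
  set g : E := (toWeakSpace ℝ E).symm y with hg
  -- One step of the gliding hump, from the finitely many functionals and vectors already built.
  have step : ∀ (φ : StrongDual ℝ E) (F : Set E) (Φ : Set (StrongDual ℝ E)), ‖φ‖ ≤ 1 →
      F.Finite → Φ.Finite → φ ∈ Φ → (∀ z ∈ F, δ / 2 < |φ (z - g)|) →
      ∃ (ψ : StrongDual ℝ E) (z : E), ‖ψ‖ ≤ 1 ∧ z ∈ K ∧
        (∀ w ∈ insert z F, δ / 2 < |ψ (w - g)|) ∧ ∀ χ ∈ Φ, |χ (z - g)| ≤ δ / 4 := by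
    intro φ F Φ hφ hF hΦ hφΦ hφF
    have e1 : ∀ᶠ i in l', ∀ z ∈ F, 2 * ‖P i (z - g)‖ < |φ (z - g)| - δ / 2 := by
      refine (eventually_all_finite hF).2 fun z hz => ?_
      have : Tendsto (fun i => 2 * ‖P i (z - g)‖) l' (𝓝 0) := by
        simpa using (hl' (z - g)).norm.const_mul 2
      exact this.eventually_lt_const (by linarith [hφF z hz])
    have e2 : ∀ᶠ i in l', ‖P i g‖ < δ / 4 := by
      have : Tendsto (fun i => ‖P i g‖) l' (𝓝 0) := by simpa using (hl' g).norm
      exact this.eventually_lt_const (by linarith)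
    have e3 : ∃ᶠ i in l', ∀ χ ∈ Φ, |χ (x i - g)| < δ / 4 := by
      have hnhds : ∀ᶠ w in 𝓝 y, ∀ χ ∈ Φ, |χ ((toWeakSpace ℝ E).symm w - g)| < δ / 4 := by
        refine (eventually_all_finite hΦ).2 fun χ _ => ?_
        have hc : Continuous fun w : WeakSpace ℝ E => |χ ((toWeakSpace ℝ E).symm w - g)| := by
          simp only [map_sub]
          exact ((continuous_dual_weakSpace χ).sub continuous_const).abs
        have := hc.tendsto y
        rw [← hg, sub_self, map_zero, abs_zero] at this
        exact this.eventually_lt_const (by linarith)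
      exact hy.frequently hnhds
    obtain ⟨i, hi3, hi1, hi2, hi4⟩ := (e3.and_eventually (e1.and (e2.and hbad))).exists
    obtain ⟨ψ, hψ, hψφ, hψu⟩ := exists_modified_functional (P i) (hP i) φ hφ (x i - g)
    refine ⟨ψ, x i, hψ, hxK i, ?_, fun χ hχ => (hi3 χ hχ).le⟩
    rintro w (rfl | hw)
    · have h1 := hi3 φ hφΦ
      have h2 : ‖P i (x i)‖ - ‖P i g‖ ≤ ‖P i (x i - g)‖ := by
        rw [map_sub]; exact norm_sub_norm_le _ _
      linarith
    · have h1 := hi1 w hw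
      have h2 := hψφ (w - g)
      have h3 := abs_sub_abs_le_abs_sub (φ (w - g)) (ψ (w - g))
      rw [abs_sub_comm] at h3
      linarith
  -- States of the recursion: the current functional, with all vectors and functionals so far.
  let S := {s : StrongDual ℝ E × Set E × Set (StrongDual ℝ E) //
    ‖s.1‖ ≤ 1 ∧ s.2.1.Finite ∧ s.2.2.Finite ∧ s.1 ∈ s.2.2 ∧ ∀ z ∈ s.2.1, δ / 2 < |s.1 (z - g)|}
  have step' : ∀ s : S, ∃ (t : S) (z : E), z ∈ K ∧ t.1.2.1 = insert z s.1.2.1 ∧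
      t.1.2.2 = insert t.1.1 s.1.2.2 ∧ ∀ χ ∈ s.1.2.2, |χ (z - g)| ≤ δ / 4 := by
    rintro ⟨⟨φ, F, Φ⟩, hφ, hF, hΦ, hφΦ, hφF⟩
    obtain ⟨ψ, z, hψ, hz, hψF, hzΦ⟩ := step φ F Φ hφ hF hΦ hφΦ hφF
    exact ⟨⟨⟨ψ, insert z F, insert ψ Φ⟩, hψ, hF.insert z, hΦ.insert ψ, mem_insert _ _, hψF⟩,
      z, hz, rfl, rfl, hzΦ⟩
  choose next z hzK hnF hnΦ hnz using step'
  let s : ℕ → S := fun n => Nat.rec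
    ⟨⟨0, ∅, {0}⟩, by simp, finite_empty, finite_singleton _, by simp, by simp⟩ (fun _ t => next t) n
  have hs : ∀ n, s (n + 1) = next (s n) := fun n => rfl
  have hFmono : Monotone fun n => (s n).1.2.1 := monotone_nat_of_le_succ fun n => by
    simp only [hs, hnF]; exact subset_insert _ _
  have hΦmono : Monotone fun n => (s n).1.2.2 := monotone_nat_of_le_succ fun n => by
    simp only [hs, hnΦ]; exact subset_insert _ _
  refine double_limit_contradiction hK g (b := δ / 4) (c := δ / 2) (by linarith)
    (fun n => (s (n + 1)).1.1) (fun n => z (s n)) (fun n => (s (n + 1)).2.1)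
    (fun n => hzK _) (fun n m hnm => ?_) (fun n m hmn => ?_)
  · exact hnz (s m) _ (hΦmono (Nat.succ_le_of_lt hnm) (s (n + 1)).2.2.2.2.1)
  · refine ((s (n + 1)).2.2.2.2.2 (z (s m)) (hFmono (Nat.succ_le_succ hmn) ?_)).le
    simp only [Nat.succ_eq_add_one, hs, hnF]
    exact mem_insert _ _

/-! ### Band projections of `L¹` -/

section
variable {Ω : Type*} [MeasurableSpace Ω] {μ : Measure Ω}

/-- The band projection `f ↦ 1_A f` on `L¹(μ)`, as a bounded operator. -/
noncomputable def bandProj (μ : Measure Ω) (A : Set Ω) (hA : MeasurableSet A) :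
    Lp ℝ 1 μ →L[ℝ] Lp ℝ 1 μ :=
  LinearMap.mkContinuous
    { toFun := fun f => ((Lp.memLp f).indicator hA).toLp _
      map_add' := fun f g => by
        rw [← MemLp.toLp_add]
        refine MemLp.toLp_congr _ _ ?_
        filter_upwards [Lp.coeFn_add f g] with x hx
        by_cases h : x ∈ A
        · simpa [h] using hx
        · simp [h]
      map_smul' := fun c f => by
        rw [RingHom.id_apply, ← MemLp.toLp_const_smul]
        refine MemLp.toLp_congr _ _ ?_
        filter_upwards [Lp.coeFn_smul c f] with x hx
        by_cases h : x ∈ A <;> simp [h, hx] } 1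
    (fun f => by
      rw [one_mul]
      refine Lp.norm_le_norm_of_ae_le ?_
      filter_upwards [((Lp.memLp f).indicator hA).coeFn_toLp] with x hx
      simp only [LinearMap.coe_mk, AddHom.coe_mk, hx]
      exact norm_indicator_le_norm_self _ _)

theorem bandProj_coeFn {A : Set Ω} (hA : MeasurableSet A) (f : Lp ℝ 1 μ) :
    bandProj μ A hA f =ᵐ[μ] A.indicator f :=
  ((Lp.memLp f).indicator hA).coeFn_toLp

theorem norm_bandProj {A : Set Ω} (hA : MeasurableSet A) (f : Lp ℝ 1 μ) :
    ‖bandProj μ A hA f‖ = ∫ x in A, ‖f x‖ ∂μ := by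
  rw [L1.norm_eq_integral_norm, ← integral_indicator hA]
  refine integral_congr_ae ?_
  filter_upwards [bandProj_coeFn hA f] with x hx
  rw [hx, norm_indicator_eq_indicator_norm]

theorem bandProj_union {A B : Set Ω} (hA : MeasurableSet A) (hB : MeasurableSet B)
    (hAB : Disjoint A B) (f : Lp ℝ 1 μ) :
    bandProj μ (A ∪ B) (hA.union hB) f = bandProj μ A hA f + bandProj μ B hB f := by
  apply Lp.ext
  filter_upwards [bandProj_coeFn hA f, bandProj_coeFn hB f, bandProj_coeFn (hA.union hB) f,
    Lp.coeFn_add (bandProj μ A hA f) (bandProj μ B hB f)] with x h1 h2 h3 h4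
  rw [h3, h4, Pi.add_apply, h1, h2, indicator_union_of_disjoint hAB]

theorem norm_bandProj_union {A B : Set Ω} (hA : MeasurableSet A) (hB : MeasurableSet B)
    (hAB : Disjoint A B) (f : Lp ℝ 1 μ) :
    ‖bandProj μ (A ∪ B) (hA.union hB) f‖ = ‖bandProj μ A hA f‖ + ‖bandProj μ B hB f‖ := by
  have hf := (L1.integrable_coeFn f).norm
  simp only [norm_bandProj]
  exact setIntegral_union hAB hB hf.integrableOn hf.integrableOn

theorem bandProj_univ (f : Lp ℝ 1 μ) : bandProj μ univ .univ f = f := by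
  apply Lp.ext
  filter_upwards [bandProj_coeFn .univ f] with x hx
  rw [hx, indicator_univ]

theorem bandProj_idem {A : Set Ω} (hA : MeasurableSet A) (f : Lp ℝ 1 μ) :
    bandProj μ A hA (bandProj μ A hA f) = bandProj μ A hA f := by
  apply Lp.ext
  filter_upwards [bandProj_coeFn hA f, bandProj_coeFn hA (bandProj μ A hA f)] with x h1 h2
  rw [h2]
  by_cases h : x ∈ A <;> simp [h, h1]

theorem bandProj_split {A B : Set Ω} (hA : MeasurableSet A) (hB : MeasurableSet B)
    (f : Lp ℝ 1 μ) :
    bandProj μ B hB f =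
        bandProj μ (B ∩ A) (hB.inter hA) f + bandProj μ (B \ A) (hB.diff hA) f ∧
      ‖bandProj μ B hB f‖ =
        ‖bandProj μ (B ∩ A) (hB.inter hA) f‖ + ‖bandProj μ (B \ A) (hB.diff hA) f‖ := by
  have hd : Disjoint (B ∩ A) (B \ A) := disjoint_sdiff_inter.symm
  rw [← bandProj_union (hB.inter hA) (hB.diff hA) hd,
    ← norm_bandProj_union (hB.inter hA) (hB.diff hA) hd]
  simp only [inter_union_sdiff, and_self]

theorem norm_bandProj_add_norm_sub {A : Set Ω} (hA : MeasurableSet A) (f : Lp ℝ 1 μ) :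
    ‖bandProj μ A hA f‖ + ‖f - bandProj μ A hA f‖ = ‖f‖ := by
  have h := bandProj_split hA .univ f
  simp only [univ_inter, bandProj_univ] at h
  rw [h.2]
  congr 2
  exact sub_eq_of_eq_add' h.1

theorem tendsto_bandProj_zero (f : Lp ℝ 1 μ) :
    Tendsto (fun A : {A : Set Ω // MeasurableSet A} => bandProj μ A.1 A.2 f)
      (comap (fun A => μ A.1) (𝓝 0)) (𝓝 0) := by
  rw [tendsto_zero_iff_norm_tendsto_zero]
  simp only [norm_bandProj]
  exact (L1.integrable_coeFn f).norm.tendsto_setIntegral_nhds_zero tendsto_comap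

theorem tendsto_bandProj_iUnion {A : ℕ → Set Ω} (hA : ∀ n, MeasurableSet (A n))
    (hmono : Monotone A) {B : Set Ω} (hB : MeasurableSet B) (hBA : B ⊆ ⋃ n, A n)
    (f : Lp ℝ 1 μ) :
    Tendsto (fun n => bandProj μ (B ∩ A n) (hB.inter (hA n)) f) atTop (𝓝 (bandProj μ B hB f)) := by
  rw [tendsto_iff_norm_sub_tendsto_zero]
  have h1 : ∀ n, ‖bandProj μ (B ∩ A n) (hB.inter (hA n)) f - bandProj μ B hB f‖ =
      ‖bandProj μ B hB f‖ - ‖bandProj μ (B ∩ A n) (hB.inter (hA n)) f‖ := fun n => by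
    have h := bandProj_split (hA n) hB f
    rw [h.2, norm_sub_rev, h.1, add_sub_cancel_left, add_sub_cancel_left]
  have h2 : Tendsto (fun n => ‖bandProj μ (B ∩ A n) (hB.inter (hA n)) f‖) atTop
      (𝓝 ‖bandProj μ B hB f‖) := by
    simp only [norm_bandProj]
    have h3 : ⋃ n, B ∩ A n = B := by rw [← inter_iUnion, inter_eq_left.2 hBA]
    have := tendsto_setIntegral_of_monotone (μ := μ) (f := fun x => ‖f x‖)
      (fun n => hB.inter (hA n)) (fun m n h => inter_subset_inter_right B (hmono h))
      (L1.integrable_coeFn f).norm.integrableOn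
    rwa [h3] at this
  simp only [h1]
  simpa using h2.const_sub ‖bandProj μ B hB f‖

/-! ### Exhaustion by small sets in an atomless measure space -/

/-- Repeated halving. The first application of atomlessness already yields a subset of finite
measure, so no finiteness assumption on `A` is needed. -/
theorem exists_small_subset
    (hatomless : ∀ A : Set Ω, MeasurableSet A → 0 < μ A →
      ∃ B ⊆ A, MeasurableSet B ∧ 0 < μ B ∧ μ B < μ A)
    {A : Set Ω} (hA : MeasurableSet A) (hpos : 0 < μ A) {η : ENNReal} (hη : 0 < η) :
    ∃ D ⊆ A, MeasurableSet D ∧ 0 < μ D ∧ μ D < η := by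
  obtain ⟨A₀, hA₀A, hA₀, hA₀pos, hA₀lt⟩ := hatomless A hA hpos
  have hfin : μ A₀ ≠ ⊤ := hA₀lt.ne_top
  have halve : ∀ n : ℕ, ∃ D ⊆ A₀, MeasurableSet D ∧ 0 < μ D ∧ μ D ≤ μ A₀ * 2⁻¹ ^ n := by
    intro n
    induction n with
    | zero => exact ⟨A₀, Subset.rfl, hA₀, hA₀pos, by simp⟩
    | succ n ih =>
      obtain ⟨D, hDA, hD, hDpos, hDle⟩ := ih
      obtain ⟨B, hBD, hB, hBpos, hBlt⟩ := hatomless D hD hDpos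
      have hBfin : μ B ≠ ⊤ := hBlt.ne_top
      have hsum : μ B + μ (D \ B) = μ D := by
        rw [measure_sdiff hBD hB.nullMeasurableSet hBfin, add_tsub_cancel_of_le hBlt.le]
      have hhalf : ∀ a b : ENNReal, a + b = μ D → a ≤ b → a ≤ μ A₀ * 2⁻¹ ^ (n + 1) := by
        intro a b hab hle
        rw [pow_succ, ← mul_assoc, ← div_eq_mul_inv, ENNReal.le_div_iff_mul_le (by simp) (by simp)]
        calc a * 2 = a + a := mul_two a
          _ ≤ a + b := by gcongr
          _ ≤ _ := hab ▸ hDle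
      rcases le_total (μ B) (μ (D \ B)) with h | h
      · exact ⟨B, hBD.trans hDA, hB, hBpos, hhalf _ _ hsum h⟩
      · refine ⟨D \ B, sdiff_subset.trans hDA, hD.diff hB, ?_, hhalf _ _ (by rw [add_comm, hsum]) h⟩
        rw [measure_sdiff hBD hB.nullMeasurableSet hBfin]
        exact tsub_pos_of_lt hBlt
  have hlim : Tendsto (fun n : ℕ => μ A₀ * 2⁻¹ ^ n) atTop (𝓝 0) := by
    have := ENNReal.Tendsto.const_mul (a := μ A₀)
      (ENNReal.tendsto_pow_atTop_nhds_zero_of_lt_one (r := 2⁻¹) (by simp)) (Or.inr hfin)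
    simpa using this
  obtain ⟨n, hn⟩ := (hlim.eventually_lt_const hη).exists
  obtain ⟨D, hDA, hD, hDpos, hDle⟩ := halve n
  exact ⟨D, hDA.trans hA₀A, hD, hDpos, hDle.trans_lt hn⟩

/-- If `f` does not vanish on `C`, then it does not vanish on some subset of `C` of small measure;
the subset is taken inside `C ∩ {f ≠ 0}`. -/
theorem exists_small_bandProj
    (hatomless : ∀ A : Set Ω, MeasurableSet A → 0 < μ A →
      ∃ B ⊆ A, MeasurableSet B ∧ 0 < μ B ∧ μ B < μ A)
    {C : Set Ω} (hC : MeasurableSet C) {f : Lp ℝ 1 μ} (hf : bandProj μ C hC f ≠ 0)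
    {η : ENNReal} (hη : 0 < η) :
    ∃ (D : Set Ω) (hD : MeasurableSet D), D ⊆ C ∧ μ D < η ∧ bandProj μ D hD f ≠ 0 := by
  set C' := C ∩ {x | f x ≠ 0} with hC'def
  have hfm : Measurable f := (Lp.stronglyMeasurable f).measurable
  have hC' : MeasurableSet C' := hC.inter (hfm (measurableSet_singleton 0).compl)
  have hpos : 0 < μ C' := by
    rw [pos_iff_ne_zero]
    intro h0
    refine hf (Lp.ext ?_)
    filter_upwards [bandProj_coeFn hC f, Lp.coeFn_zero ℝ 1 μ,
      measure_eq_zero_iff_ae_notMem.1 h0] with x h1 h2 h3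
    rw [h1, h2, Pi.zero_apply, indicator_apply_eq_zero]
    intro hx
    by_contra hne
    exact h3 ⟨hx, hne⟩
  obtain ⟨D, hDC, hD, hDpos, hDlt⟩ := exists_small_subset hatomless hC' hpos hη
  refine ⟨D, hD, hDC.trans inter_subset_left, hDlt, fun h0 => hDpos.ne' ?_⟩
  rw [measure_eq_zero_iff_ae_notMem]
  filter_upwards [bandProj_coeFn hD f, Lp.coeFn_zero ℝ 1 μ] with x h1 h2 hx
  rw [h0, h2, indicator_of_mem hx] at h1
  exact (hDC hx).2 h1.symm

/-- A bound for `T` on the restrictions of `f` to all small sets holds for `f` itself, by exhaustion. -/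
theorem norm_le_of_small
    (hatomless : ∀ A : Set Ω, MeasurableSet A → 0 < μ A →
      ∃ B ⊆ A, MeasurableSet B ∧ 0 < μ B ∧ μ B < μ A)
    (T : Lp ℝ 1 μ →L[ℝ] Lp ℝ 1 μ) (q : ℝ) {η : ENNReal} (hη : 0 < η) (f : Lp ℝ 1 μ)
    (hsmall : ∀ (A : Set Ω) (hA : MeasurableSet A), μ A < η →
      ‖T (bandProj μ A hA f)‖ ≤ q * ‖bandProj μ A hA f‖) :
    ‖T f‖ ≤ q * ‖f‖ := by
  -- `G` consists of the sets all of whose measurable subsets satisfy the bound.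
  let G : Set (Set Ω) := {A | MeasurableSet A ∧ ∀ B (hB : MeasurableSet B), B ⊆ A →
    ‖T (bandProj μ B hB f)‖ ≤ q * ‖bandProj μ B hB f‖}
  have hGsmall : ∀ A, MeasurableSet A → μ A < η → A ∈ G := fun A hA h =>
    ⟨hA, fun B hB hBA => hsmall B hB ((measure_mono hBA).trans_lt h)⟩
  have hGunion : ∀ A ∈ G, ∀ A' ∈ G, A ∪ A' ∈ G := by
    rintro A ⟨hA, hAG⟩ A' ⟨hA', hAG'⟩
    refine ⟨hA.union hA', fun B hB hBA => ?_⟩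
    obtain ⟨h1, h2⟩ := bandProj_split hA hB f
    have h3 := hAG _ (hB.inter hA) inter_subset_right
    have h4 := hAG' _ (hB.diff hA) (sdiff_subset_iff.2 hBA)
    rw [h2, h1, map_add, mul_add]
    exact (norm_add_le _ _).trans (add_le_add h3 h4)
  have hGmono : ∀ A : ℕ → Set Ω, Monotone A → (∀ n, A n ∈ G) → ⋃ n, A n ∈ G := by
    intro A hmono hAG
    refine ⟨.iUnion fun n => (hAG n).1, fun B hB hBA => ?_⟩
    have hlim := tendsto_bandProj_iUnion (fun n => (hAG n).1) hmono hB hBA f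
    exact le_of_tendsto_of_tendsto' ((T.continuous.tendsto _).comp hlim).norm
      (hlim.norm.const_mul q) fun n => (hAG n).2 _ _ inter_subset_right
  have hGacc : ∀ A : ℕ → Set Ω, (∀ n, A n ∈ G) → ⋃ n, A n ∈ G := by
    intro A hAG
    rw [← iUnion_accumulate]
    refine hGmono _ monotone_accumulate fun n => ?_
    induction n with
    | zero => simpa [accumulate_def] using hAG 0
    | succ n ih =>
      rw [accumulate_succ]
      exact hGunion _ ih _ (hAG _)
  -- A member of `G` carrying as much of the norm of `f` as possible.
  let S : Set ℝ := {r | ∃ A, ∃ h : A ∈ G, r = ‖bandProj μ A h.1 f‖}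
  have hSne : S.Nonempty := ⟨_, ∅, hGsmall ∅ .empty (by simpa using hη), rfl⟩
  have hSbdd : BddAbove S := ⟨‖f‖, by
    rintro _ ⟨A, h, rfl⟩
    linarith [norm_bandProj_add_norm_sub h.1 f, norm_nonneg (f - bandProj μ A h.1 f)]⟩
  obtain ⟨r, -, hr, hrS⟩ := exists_seq_tendsto_sSup hSne hSbdd
  choose A hAG hAr using hrS
  have hU := hGacc A hAG
  set U := ⋃ n, A n with hUdef
  have hUmax : sSup S ≤ ‖bandProj μ U hU.1 f‖ := by
    refine le_of_tendsto' hr fun n => ?_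
    have h := (bandProj_split (hAG n).1 hU.1 f).2
    simp only [inter_eq_right.2 (subset_iUnion A n), hUdef] at h
    rw [hAr n, h]
    exact le_add_of_nonneg_right (norm_nonneg _)
  have hUc : bandProj μ Uᶜ hU.1.compl f = 0 := by
    by_contra hne
    obtain ⟨D, hD, hDU, hDη, hDf⟩ := exists_small_bandProj hatomless hU.1.compl hne hη
    have hUD := hGunion U hU D (hGsmall D hD hDη)
    have h1 : ‖bandProj μ (U ∪ D) hUD.1 f‖ ≤ sSup S := le_csSup hSbdd ⟨_, hUD, rfl⟩
    have h2 := norm_bandProj_union hU.1 hD (disjoint_left.2 fun x hx hxD => hDU hxD hx) f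
    have h3 := norm_pos_iff.2 hDf
    linarith
  have hfU : bandProj μ U hU.1 f = f := by
    have h := (bandProj_split hU.1 .univ f).1
    simp only [univ_inter, bandProj_univ, ← compl_eq_univ_sdiff, hUc, add_zero] at h
    exact h.symm
  have := hU.2 U hU.1 Subset.rfl
  rwa [hfU] at this
end

/-! ### The Daugavet equation -/

theorem daugavet_L1_of_weaklyCompact {Ω : Type*} [MeasurableSpace Ω] (μ : Measure Ω)
    (hμ : μ ≠ 0)
    (hatomless : ∀ A : Set Ω, MeasurableSet A → 0 < μ A →
      ∃ B ⊆ A, MeasurableSet B ∧ 0 < μ B ∧ μ B < μ A)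
    (T : Lp ℝ 1 μ →L[ℝ] Lp ℝ 1 μ) (hT : IsWeaklyCompactOperator T) :
    ‖ContinuousLinearMap.id ℝ (Lp ℝ 1 μ) + T‖ = 1 + ‖T‖ := by
  apply le_antisymm
  · exact (norm_add_le _ _).trans (by gcongr; exact ContinuousLinearMap.norm_id_le)
  refine le_of_forall_pos_sub_le fun ε hε => ?_
  -- Atomlessness yields a set of positive finite measure even if `μ` is infinite.
  have hnontriv : Nontrivial (Lp ℝ 1 μ) := by
    have huniv : 0 < μ univ := by
      rw [pos_iff_ne_zero]; exact mt Measure.measure_univ_eq_zero.1 hμ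
    obtain ⟨B, -, hB, hBpos, hBlt⟩ := hatomless univ .univ huniv
    refine ⟨indicatorConstLp 1 hB hBlt.ne_top (1 : ℝ), 0, fun h => ?_⟩
    have h1 := norm_indicatorConstLp (μ := μ) (p := 1) (c := (1 : ℝ)) (hμs := hBlt.ne_top) (hs := hB)
      one_ne_zero ENNReal.one_ne_top
    rw [h, norm_zero] at h1
    have : 0 < μ.real B := ENNReal.toReal_pos hBpos.ne' hBlt.ne_top
    simp at h1
    linarith
  have hui := eventually_norm_proj_lt (fun A : {A : Set Ω // MeasurableSet A} => bandProj μ A.1 A.2)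
    (fun A x => norm_bandProj_add_norm_sub A.2 x) tendsto_bandProj_zero hT
    (δ := ε / 4) (by linarith)
  rw [eventually_comap] at hui
  obtain ⟨η, hη, hηε⟩ := ENNReal.nhds_zero_basis.eventually_iff.1 hui
  obtain ⟨f, hf0, hf⟩ : ∃ f : Lp ℝ 1 μ, f ≠ 0 ∧ (‖T‖ - ε / 4) * ‖f‖ < ‖T f‖ := by
    by_contra! hcon
    obtain ⟨f₀, hf₀⟩ := exists_ne (0 : Lp ℝ 1 μ)
    have hq : 0 ≤ ‖T‖ - ε / 4 :=
      nonneg_of_mul_nonneg_left ((norm_nonneg _).trans (hcon f₀ hf₀)) (norm_pos_iff.2 hf₀)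
    have := T.opNorm_le_bound hq fun f => by
      by_cases h : f = 0
      · simp [h]
      · exact hcon f h
    linarith
  obtain ⟨A, hA, hAη, hlt⟩ : ∃ (A : Set Ω) (hA : MeasurableSet A), μ A < η ∧
      (‖T‖ - ε / 4) * ‖bandProj μ A hA f‖ < ‖T (bandProj μ A hA f)‖ := by
    by_contra! hcon
    exact absurd (norm_le_of_small hatomless T _ hη f hcon) (not_le.2 hf)
  set h := bandProj μ A hA f with hh
  have hPh : bandProj μ A hA h = h := bandProj_idem hA f
  have hpos : 0 < ‖h‖ := by
    rw [norm_pos_iff]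
    intro h0
    simp [h0] at hlt
  have hsmall : ‖bandProj μ A hA (T h)‖ ≤ ε / 4 * ‖h‖ := by
    have h1 := hηε (show μ A ∈ Iio η from hAη) ⟨A, hA⟩ rfl (T (‖h‖⁻¹ • h))
      ⟨_, by simp [norm_smul, hpos.ne'], rfl⟩
    simp only [map_smul, norm_smul, norm_inv, norm_norm] at h1
    rw [inv_mul_lt_iff₀ hpos] at h1
    linarith
  have hlow : (1 + ‖T‖ - ε) * ‖h‖ ≤ ‖h + T h‖ := by
    have h1 := norm_bandProj_add_norm_sub hA (h + T h)
    have h2 := norm_bandProj_add_norm_sub hA (T h)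
    rw [map_add, hPh, add_sub_add_left_eq_sub] at h1
    have h3 := norm_sub_le (h + bandProj μ A hA (T h)) (bandProj μ A hA (T h))
    rw [add_sub_cancel_right] at h3
    nlinarith
  have hup := (ContinuousLinearMap.id ℝ (Lp ℝ 1 μ) + T).le_opNorm h
  rw [_root_.add_apply, ContinuousLinearMap.id_apply] at hup
  exact le_of_mul_le_mul_right (hlow.trans hup) hpos
end

section
/- Let S be a locally compact Hausdorff space without isolated points. If T : C₀(S) → C₀(S) is a weakly compact operator, then ‖I + T‖ = 1 + ‖T‖. -/
/-!
The proof avoids measures. For a point `t`, consider bumps `f` at `t`: continuous functions with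
`0 ≤ f ≤ 1`, `f t = 1`, supported in a prescribed neighbourhood of `t`. As the neighbourhoods
shrink, weak compactness gives the functions `T f` a weak cluster point `g t ∈ C₀(S)`
(`exists_clusterFun`). Intuitively `g t s = μ_s {t}`, where `μ_s` is the measure representing
`f ↦ T f s`; the point is that this is continuous in `s`.

Every nonempty open `U` contains some `s` with `g s s ≥ -β`, for any `β > 0` (`exists_diag_ge`).
Otherwise, using continuity of each `g a` and the absence of isolated points, one finds
arbitrarily many points `a` and a single `s` with `g a s < -β` for all of them
(`exists_finset_of_diag_lt`); summing disjoint bumps at these points gives a function of norm at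
most one on which `T` is arbitrarily large (`card_mul_le_opNorm`).

Finally, let `f₀` in the unit ball almost attain `‖T‖`, say `T f₀ > ‖T‖ - ε` on an open set `U`.
At a point `s ∈ U` with `g s s ≥ -ε`, add to `f₀` the multiple `1 - f₀ s` of a narrow bump at `s`:
the result has norm at most `1 + ε`, value `1` at `s`, and its image under `T` has hardly decreased
at `s`.
-/

open MeasureTheory Topology ZeroAtInfty

/-- `f` is a bump function at `t` supported in `V`, with values in `[0, 1]` and peak value `1`. -/
def IsBumpAt {S : Type*} [TopologicalSpace S] (t : S) (V : Set S) (f : C₀(S, ℝ)) : Prop :=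
  (∀ x, 0 ≤ f x) ∧ (∀ x, f x ≤ 1) ∧ f t = 1 ∧ ∀ x, x ∉ V → f x = 0

/-- `g` is a pointwise cluster point of `T f`, as `f` runs over bumps at `t` with shrinking
supports. -/
def IsClusterFun {S : Type*} [TopologicalSpace S] (T : C₀(S, ℝ) →L[ℝ] C₀(S, ℝ)) (t : S)
    (g : C₀(S, ℝ)) : Prop :=
  ∀ s, ∀ V ∈ 𝓝 t, ∀ ε > 0, ∃ f, IsBumpAt t V f ∧ |T f s - g s| < ε

theorem exists_isBumpAt {S : Type*} [TopologicalSpace S] [LocallyCompactSpace S] [T2Space S]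
    (t : S) {V : Set S} (hV : V ∈ 𝓝 t) : ∃ f, IsBumpAt t V f := by
  have hd : Disjoint ({t} : Set S) (interior V)ᶜ := by
    rw [Set.disjoint_singleton_left, Set.notMem_compl_iff]
    exact mem_interior_iff_mem_nhds.2 hV
  obtain ⟨f, h1, h0, hc, hI⟩ := exists_continuous_one_zero_of_isCompact
    (isCompact_singleton (x := t)) isOpen_interior.isClosed_compl hd
  refine ⟨⟨f, hc.is_zero_at_infty⟩, fun x => (hI x).1, fun x => (hI x).2, h1 rfl, fun x hx => ?_⟩
  exact h0 (fun h => hx (interior_subset h))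

theorem c0_apply_le_norm {S : Type*} [TopologicalSpace S] (f : C₀(S, ℝ)) (x : S) :
    |f x| ≤ ‖f‖ := by
  rw [← ZeroAtInftyContinuousMap.norm_toBCF_eq_norm]
  exact f.toBCF.norm_coe_le_norm x

theorem c0_norm_le {S : Type*} [TopologicalSpace S] {f : C₀(S, ℝ)} {c : ℝ} (hc : 0 ≤ c)
    (h : ∀ x, |f x| ≤ c) : ‖f‖ ≤ c := by
  rw [← ZeroAtInftyContinuousMap.norm_toBCF_eq_norm]
  exact (BoundedContinuousFunction.norm_le hc).2 h

/-- Point evaluation as a continuous linear functional on `C₀(S)`. -/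
noncomputable def evalC0 {S : Type*} [TopologicalSpace S] (s : S) : C₀(S, ℝ) →L[ℝ] ℝ :=
  LinearMap.mkContinuous
    { toFun := fun f => f s
      map_add' := fun _ _ => rfl
      map_smul' := fun _ _ => rfl } 1
    (fun f => by simpa using c0_apply_le_norm f s)

theorem IsBumpAt.norm_le {S : Type*} [TopologicalSpace S] {t : S} {V : Set S} {f : C₀(S, ℝ)}
    (h : IsBumpAt t V f) : ‖f‖ ≤ 1 :=
  c0_norm_le zero_le_one fun x => abs_le.2 ⟨by linarith [h.1 x], h.2.1 x⟩

theorem exists_clusterFun {S : Type*} [TopologicalSpace S] [LocallyCompactSpace S] [T2Space S]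
    (T : C₀(S, ℝ) →L[ℝ] C₀(S, ℝ)) (hT : IsWeaklyCompactOperator T) (t : S) :
    ∃ g, IsClusterFun T t g := by
  let A : Set S → Set (WeakSpace ℝ C₀(S, ℝ)) :=
    fun V => (fun f => toWeakSpace ℝ C₀(S, ℝ) (T f)) '' {f | IsBumpAt t V f}
  have hA : Monotone A := fun V W hVW =>
    Set.image_mono fun f hf => ⟨hf.1, hf.2.1, hf.2.2.1, fun x hx => hf.2.2.2 x (fun h => hx (hVW h))⟩
  have hne : ((𝓝 t).lift' A).NeBot := by
    rw [Filter.lift'_neBot_iff hA]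
    intro V hV
    obtain ⟨f, hf⟩ := exists_isBumpAt t hV
    exact ⟨_, f, hf, rfl⟩
  have hle : (𝓝 t).lift' A ≤
      Filter.principal (closure ((toWeakSpace ℝ C₀(S, ℝ)) '' (T '' Metric.closedBall 0 1))) := by
    rw [Filter.le_principal_iff]
    refine Filter.mem_of_superset (Filter.mem_lift' Filter.univ_mem) ?_
    rintro _ ⟨f, hf, rfl⟩
    refine subset_closure ⟨T f, ⟨f, ?_, rfl⟩, rfl⟩
    simpa using IsBumpAt.norm_le hf
  obtain ⟨y, -, hy⟩ := hT hle
  refine ⟨(toWeakSpace ℝ C₀(S, ℝ)).symm y, fun s V hV ε hε => ?_⟩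
  have hy' : y ∈ closure (A V) :=
    mem_closure_iff_clusterPt.2 (hy.mono (Filter.le_principal_iff.2 (Filter.mem_lift' hV)))
  have hcont : Continuous fun z : WeakSpace ℝ C₀(S, ℝ) =>
      evalC0 s ((toWeakSpace ℝ C₀(S, ℝ)).symm z) :=
    WeakBilin.eval_continuous (topDualPairing ℝ C₀(S, ℝ)).flip (evalC0 s)
  have hO : {z : WeakSpace ℝ C₀(S, ℝ) | |evalC0 s ((toWeakSpace ℝ C₀(S, ℝ)).symm z) -
      evalC0 s ((toWeakSpace ℝ C₀(S, ℝ)).symm y)| < ε} ∈ 𝓝 y := by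
    refine (isOpen_lt ((hcont.sub continuous_const).abs) continuous_const).mem_nhds ?_
    simpa using hε
  obtain ⟨_, hz, f, hf, rfl⟩ := mem_closure_iff_nhds.1 hy' _ hO
  exact ⟨f, hf, hz⟩

/-- At `s`, the values of the cluster functions at many points add up: disjoint bumps at the points
of `A` have a sum in the unit ball. -/
theorem card_mul_le_opNorm {S : Type*} [TopologicalSpace S] [T2Space S]
    (T : C₀(S, ℝ) →L[ℝ] C₀(S, ℝ)) {g : S → C₀(S, ℝ)} (hg : ∀ t, IsClusterFun T t (g t))
    {β : ℝ} (A : Finset S) (s : S) (h : ∀ a ∈ A, g a s < -β) : A.card * β ≤ ‖T‖ := by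
  obtain ⟨V, hV, hd⟩ := A.finite_toSet.t2_separation
  have hex : ∀ a, ∃ f, IsBumpAt a (V a) f ∧ (a ∈ A → T f s < -β) := by
    intro a
    by_cases ha : a ∈ A
    · obtain ⟨f, hf, hfs⟩ := hg a s (V a) ((hV a).2.mem_nhds (hV a).1) (-β - g a s)
        (by linarith [h a ha])
      exact ⟨f, hf, fun _ => by linarith [(abs_lt.1 hfs).2]⟩
    · obtain ⟨f, hf, -⟩ := hg a s (V a) ((hV a).2.mem_nhds (hV a).1) 1 one_pos
      exact ⟨f, hf, fun h => absurd h ha⟩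
  choose f hf hfs using hex
  have hap : ∀ (φ : S → C₀(S, ℝ)) x, (∑ a ∈ A, φ a) x = ∑ a ∈ A, φ a x := fun φ x =>
    map_sum (evalC0 x) φ A
  have hnorm : ‖∑ a ∈ A, f a‖ ≤ 1 := by
    refine c0_norm_le zero_le_one fun x => ?_
    rw [hap, abs_of_nonneg (Finset.sum_nonneg fun a _ => (hf a).1 x)]
    by_cases hx : ∃ a ∈ A, x ∈ V a
    · obtain ⟨a, ha, hxa⟩ := hx
      rw [Finset.sum_eq_single_of_mem a ha]
      · exact (hf a).2.1 x
      · intro b hb hba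
        exact (hf b).2.2.2 x fun hxb => Set.disjoint_left.1 (hd hb ha hba) hxb hxa
    · rw [Finset.sum_eq_zero]
      · exact zero_le_one
      · exact fun a ha => (hf a).2.2.2 x fun hxa => hx ⟨a, ha, hxa⟩
  have h1 : (T (∑ a ∈ A, f a)) s ≤ ∑ _a ∈ A, -β := by
    rw [map_sum, hap]
    exact Finset.sum_le_sum fun a ha => (hfs a ha).le
  have h2 := (abs_le.1 ((c0_apply_le_norm _ s).trans (T.le_opNorm_of_le hnorm))).1
  simp only [Finset.sum_const, nsmul_eq_mul] at h1
  linarith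

theorem exists_finset_of_diag_lt {S : Type*} [TopologicalSpace S] [T2Space S] [PerfectSpace S]
    (g : S → C₀(S, ℝ)) {β : ℝ} {U : Set S} (hU : IsOpen U) (hUne : U.Nonempty)
    (h : ∀ s ∈ U, g s s < -β) (n : ℕ) :
    ∃ A : Finset S, A.card = n ∧ ∃ W ⊆ U, IsOpen W ∧ W.Nonempty ∧
      ∀ a ∈ A, ∀ s ∈ W, g a s < -β := by
  classical
  induction n with
  | zero => exact ⟨∅, rfl, U, subset_rfl, hU, hUne, by simp⟩
  | succ n ih =>
    obtain ⟨A, hA, W, hWU, hW, ⟨w, hw⟩, hAW⟩ := ih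
    have : (𝓝[≠] w).NeBot := inferInstance
    obtain ⟨b, hbW, hbA⟩ := (infinite_of_mem_nhds w (hW.mem_nhds hw)).exists_notMem_finset A
    refine ⟨insert b A, by rw [Finset.card_insert_of_notMem hbA, hA], W ∩ {s | g b s < -β},
      fun s hs => hWU hs.1, hW.inter (isOpen_lt (map_continuous (g b)) continuous_const),
      ⟨b, hbW, h b (hWU hbW)⟩, fun a ha s hs => ?_⟩
    rcases Finset.mem_insert.1 ha with rfl | ha
    · exact hs.2
    · exact hAW a ha s hs.1

theorem exists_diag_ge {S : Type*} [TopologicalSpace S] [T2Space S] [PerfectSpace S]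
    (T : C₀(S, ℝ) →L[ℝ] C₀(S, ℝ)) {g : S → C₀(S, ℝ)} (hg : ∀ t, IsClusterFun T t (g t))
    {β : ℝ} (hβ : 0 < β) {U : Set S} (hU : IsOpen U) (hUne : U.Nonempty) :
    ∃ s ∈ U, -β ≤ g s s := by
  by_contra! h
  obtain ⟨n, hn⟩ := exists_nat_gt (‖T‖ / β)
  obtain ⟨A, hA, W, -, -, ⟨s, hs⟩, hAW⟩ := exists_finset_of_diag_lt g hU hUne h n
  have := card_mul_le_opNorm T hg A s fun a ha => hAW a ha s hs
  rw [div_lt_iff₀ hβ] at hn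
  rw [hA] at this
  linarith

/-- Some function in the unit ball has an image under `T` exceeding `‖T‖ - ε` at a point; no
absolute value is needed, as the function may be replaced by its negative. -/
theorem exists_almost_norming {S : Type*} [TopologicalSpace S] [Nonempty S]
    (T : C₀(S, ℝ) →L[ℝ] C₀(S, ℝ)) {ε : ℝ} (hε : 0 < ε) :
    ∃ f, ‖f‖ ≤ 1 ∧ ∃ s, ‖T‖ - ε < T f s := by
  by_contra! h
  have hs : ∀ f : C₀(S, ℝ), ‖f‖ ≤ 1 → ∀ s, |T f s| ≤ ‖T‖ - ε := by
    intro f hf s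
    refine abs_le.2 ⟨?_, h f hf s⟩
    have := h (-f) (by rwa [norm_neg]) s
    rw [map_neg, ZeroAtInftyContinuousMap.neg_apply] at this
    linarith
  have h0 : 0 ≤ ‖T‖ - ε :=
    (abs_nonneg _).trans (hs 0 (by simp) (Classical.arbitrary S))
  have : ‖T‖ ≤ ‖T‖ - ε := T.opNorm_le_of_unit_norm h0 fun f hf =>
    c0_norm_le h0 (hs f hf.le)
  linarith

theorem daugavet_C0_of_weaklyCompact {S : Type*} [TopologicalSpace S] [LocallyCompactSpace S]
    [T2Space S] [PerfectSpace S] [Nonempty S]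
    (T : C₀(S, ℝ) →L[ℝ] C₀(S, ℝ)) (hT : IsWeaklyCompactOperator T) :
    ‖ContinuousLinearMap.id ℝ C₀(S, ℝ) + T‖ = 1 + ‖T‖ := by
  choose g hg using exists_clusterFun T hT
  have hupper : ‖ContinuousLinearMap.id ℝ C₀(S, ℝ) + T‖ ≤ 1 + ‖T‖ :=
    (ContinuousLinearMap.opNorm_add_le _ _).trans
      (by linarith [ContinuousLinearMap.norm_id_le (𝕜 := ℝ) (E := C₀(S, ℝ))])
  refine le_antisymm hupper (le_of_forall_pos_le_add fun δ hδ => ?_)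
  set N := ‖ContinuousLinearMap.id ℝ C₀(S, ℝ) + T‖ with hN
  have hN0 : 0 ≤ N := ContinuousLinearMap.opNorm_nonneg _
  -- The perturbation below loses at most `(N + 5) * ε`.
  obtain ⟨ε, hε, hεδ⟩ : ∃ ε > 0, (N + 5) * ε = δ :=
    ⟨δ / (N + 5), by positivity, by field_simp⟩
  obtain ⟨f₀, hf₀, s₀, hs₀⟩ := exists_almost_norming T hε
  obtain ⟨s, hsU, hs⟩ := exists_diag_ge T hg hε
    (isOpen_lt (continuous_const (y := ‖T‖ - ε)) (map_continuous (T f₀))) ⟨s₀, hs₀⟩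
  have hsU' : ‖T‖ - ε < T f₀ s := hsU
  obtain ⟨f, hf, hfs⟩ := hg s s {x | f₀ x < f₀ s + ε}
    ((isOpen_lt (map_continuous f₀) continuous_const).mem_nhds (by simpa using hε)) ε hε
  have hb : ∀ x, |f₀ x| ≤ 1 := fun x => (c0_apply_le_norm f₀ x).trans hf₀
  have hbs := abs_le.1 (hb s)
  have hTf : -(2 * ε) ≤ T f s := by linarith [(abs_lt.1 hfs).1]
  let F := f₀ + (1 - f₀ s) • f
  have hF : ∀ x, F x = f₀ x + (1 - f₀ s) * f x := fun x => rfl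
  have hFn : ‖F‖ ≤ 1 + ε := by
    refine c0_norm_le (by linarith) fun x => ?_
    have hbx := abs_le.1 (hb x)
    have h0 := hf.1 x
    have h1 := hf.2.1 x
    rw [hF]
    refine abs_le.2 ⟨by nlinarith, ?_⟩
    by_cases hx : f₀ x < f₀ s + ε
    · nlinarith
    · rw [hf.2.2.2 x hx]; linarith
  have hval : (ContinuousLinearMap.id ℝ C₀(S, ℝ) + T) F s
      = 1 + (T f₀ s + (1 - f₀ s) * T f s) := by
    have h1 : (ContinuousLinearMap.id ℝ C₀(S, ℝ) + T) F s = F s + T F s := rfl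
    have h2 : T F = T f₀ + (1 - f₀ s) • T f := by simp only [F, map_add, map_smul]
    have h3 : T F s = T f₀ s + (1 - f₀ s) * T f s := by rw [h2]; rfl
    rw [h1, h3, hF, hf.2.2.1]; ring
  have hle : (ContinuousLinearMap.id ℝ C₀(S, ℝ) + T) F s ≤ N * (1 + ε) :=
    (le_abs_self _).trans ((c0_apply_le_norm _ s).trans
      (ContinuousLinearMap.le_opNorm_of_le _ hFn))
  rw [hval] at hle
  have hlast : -(4 * ε) ≤ (1 - f₀ s) * T f s := by nlinarith
  linarith
end

section
/- Let (Ω, Σ, μ) be a measure space and let T : L¹(μ) → L¹(μ) be a positive bounded linear operator, i.e. Tf ≥ 0 almost everywhere whenever f ≥ 0 almost everywhere. Then ‖I + T‖ = 1 + ‖T‖. -/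
/-!
The `L¹`-norm is additive on the positive cone (`norm_add_of_nonneg_L1`). Since `T` is positive,
`|T f| ≤ T |f|`, hence
`‖f‖ + ‖T f‖ ≤ ‖|f|‖ + ‖T |f|‖ = ‖(I + T) |f|‖ ≤ ‖I + T‖ ‖f‖` for every `f`.
This gives `‖T‖ ≤ ‖I + T‖ - 1`, where nontriviality of the space guarantees that the right-hand
side is nonnegative; the reverse inequality is the triangle inequality.
-/

open MeasureTheory

theorem norm_add_of_nonneg_L1 {Ω : Type*} [MeasurableSpace Ω] {μ : Measure Ω}
    {f g : Lp ℝ 1 μ} (hf : 0 ≤ f) (hg : 0 ≤ g) : ‖f + g‖ = ‖f‖ + ‖g‖ := by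
  rw [L1.norm_eq_integral_norm, L1.norm_eq_integral_norm, L1.norm_eq_integral_norm,
    ← integral_add (L1.integrable_coeFn f).norm (L1.integrable_coeFn g).norm]
  refine integral_congr_ae ?_
  filter_upwards [Lp.coeFn_add f g, (Lp.coeFn_nonneg f).2 hf, (Lp.coeFn_nonneg g).2 hg]
    with x h hfx hgx
  simp only [Pi.zero_apply] at hfx hgx
  rw [h, Pi.add_apply, Real.norm_of_nonneg hfx, Real.norm_of_nonneg hgx,
    Real.norm_of_nonneg (add_nonneg hfx hgx)]

theorem daugavet_L1_of_positive {Ω : Type*} [MeasurableSpace Ω] (μ : Measure Ω)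
    [Nontrivial (Lp ℝ 1 μ)]
    (T : Lp ℝ 1 μ →L[ℝ] Lp ℝ 1 μ)
    (hpos : ∀ f : Lp ℝ 1 μ, (∀ᵐ x ∂μ, 0 ≤ f x) → ∀ᵐ x ∂μ, 0 ≤ T f x) :
    ‖ContinuousLinearMap.id ℝ (Lp ℝ 1 μ) + T‖ = 1 + ‖T‖ := by
  have hT : ∀ f : Lp ℝ 1 μ, 0 ≤ f → 0 ≤ T f := fun f hf =>
    (Lp.coeFn_nonneg (T f)).1 (hpos f ((Lp.coeFn_nonneg f).2 hf))
  have habs : ∀ f : Lp ℝ 1 μ, |T f| ≤ T |f| := fun f => by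
    have h1 := hT (|f| - f) (sub_nonneg.2 (le_abs_self f))
    have h2 := hT (|f| - -f) (sub_nonneg.2 (neg_le_abs f))
    rw [map_sub, sub_nonneg] at h1 h2
    rw [map_neg] at h2
    exact abs_le'.2 ⟨h1, h2⟩
  have key : ∀ f : Lp ℝ 1 μ,
      ‖f‖ + ‖T f‖ ≤ ‖ContinuousLinearMap.id ℝ (Lp ℝ 1 μ) + T‖ * ‖f‖ := fun f => by
    have h0 : ‖T f‖ ≤ ‖T |f|‖ :=
      norm_le_norm_of_abs_le_abs ((habs f).trans (le_abs_self _))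
    have h1 := norm_add_of_nonneg_L1 (abs_nonneg f) (hT _ (abs_nonneg f))
    have h2 := (ContinuousLinearMap.id ℝ (Lp ℝ 1 μ) + T).le_opNorm |f|
    rw [ContinuousLinearMap.add_apply, ContinuousLinearMap.id_apply, h1, norm_abs_eq_norm] at h2
    linarith
  apply le_antisymm
  · exact (norm_add_le _ _).trans_eq (by rw [ContinuousLinearMap.norm_id])
  · obtain ⟨f, hf⟩ := exists_ne (0 : Lp ℝ 1 μ)
    have h1 : 1 ≤ ‖ContinuousLinearMap.id ℝ (Lp ℝ 1 μ) + T‖ := by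
      have := key f
      have hf' := norm_pos_iff.2 hf
      have := norm_nonneg (T f)
      exact le_of_mul_le_mul_right (by linarith) hf'
    have h2 := T.opNorm_le_bound (sub_nonneg.2 h1) fun g => by
      have := key g
      rw [sub_mul]
      linarith
    linarith
end

section
/- Let S be a compact Hausdorff space without isolated points and let T : C(S) → C(S) be a bounded linear operator with representing kernel (μ_s)_{s∈S}. If for every t ∈ S the function s ↦ μ_s({t}) is continuous on S, then ‖I + T‖ = 1 + ‖T‖. -/
/-!
The diagonal atoms `μ s {s}` cannot stay below a negative constant on a nonempty open set: if
`μ s {s} < -β` for all `s` in a nonempty open `U`, continuity of `s ↦ μ s {t}` and the absence of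
isolated points yield, for each `n`, a point `s` and `n` distinct points `t` with
`μ s {t} < -β`; a bump function concentrated near these points then forces `n β ≤ ‖T‖ + 1`
(`exists_neg_lt_atom`).

Given a nearly norming `f` in the unit ball, choose such an almost nonnegative diagonal atom at a
point `s` of the open set where `T f` nearly attains `‖T‖`. Replace `f` by `g = f ⊔ h`, where `h`
equals `1` at `s` and `-1` off a small neighbourhood of `s`. Then `g s = 1`, `‖g‖ ≤ 1`, and
`T g s` is about `T f s + (1 - f s) * μ s {s}`, which is not much below `‖T‖`.
-/

open MeasureTheory Topology

/-- A bounded function vanishing off `W` has integral close to its sum over the atoms in `A`, when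
`W \ A` has small mass. -/
lemma measure_integral_atoms {S : Type*} [MeasurableSpace S] [MeasurableSingletonClass S]
    (p : Measure S) [IsFiniteMeasure p] (A : Finset S) (W : Set S)
    (hAW : (A : Set S) ⊆ W) (φ : S → ℝ) (hφm : Measurable φ) (hφ : ∀ x, |φ x| ≤ 2)
    (hφW : ∀ x, x ∉ W → φ x = 0) :
    |∫ x, φ x ∂p - ∑ t ∈ A, φ t * p.real {t}| ≤ 2 * p.real (W \ A) := by
  have hint : Integrable φ p := Integrable.of_bound hφm.aestronglyMeasurable 2
    (Filter.Eventually.of_forall hφ)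
  have h1 : ∫ x, φ x ∂p = ∫ x in W, φ x ∂p :=
    (setIntegral_eq_integral_of_forall_compl_eq_zero hφW).symm
  have h2 : ∫ x in W, φ x ∂p = ∫ x in W \ A, φ x ∂p + ∫ x in (A : Set S), φ x ∂p := by
    rw [← setIntegral_union Set.disjoint_sdiff_left A.measurableSet hint.integrableOn
      hint.integrableOn, Set.sdiff_union_of_subset hAW]
  have h3 : ∫ x in (A : Set S), φ x ∂p = ∑ t ∈ A, φ t * p.real {t} := by
    rw [setIntegral_finset A hint.integrableOn]
    simp [mul_comm]
  rw [h1, h2, h3, add_sub_cancel_right]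
  exact norm_setIntegral_le_of_norm_le_const (f := φ) (measure_lt_top _ _) (fun x _ => hφ x)

/-- Near a finite set, integration against a signed measure with regular variation only sees the
atoms of that set, up to `η`. -/
lemma exists_open_integral_atoms {S : Type*} [TopologicalSpace S] [T2Space S] [MeasurableSpace S]
    [BorelSpace S] (ν : SignedMeasure S) (hreg : ν.totalVariation.Regular) (A : Finset S)
    {η : ℝ} (hη : 0 < η) :
    ∃ W : Set S, IsOpen W ∧ (A : Set S) ⊆ W ∧ ∀ φ : S → ℝ, Continuous φ → (∀ x, |φ x| ≤ 2) →
      (∀ x, x ∉ W → φ x = 0) →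
      |SignedMeasure.integral ν φ - ∑ t ∈ A, φ t * ν {t}| ≤ η := by
  have hfin : IsFiniteMeasure ν.totalVariation := by
    unfold SignedMeasure.totalVariation; infer_instance
  obtain ⟨W, hAW, hWo, -, hlt⟩ := A.measurableSet.exists_isOpen_sdiff_lt
    (μ := ν.totalVariation) (measure_ne_top _ _) (ε := ENNReal.ofReal (η / 2))
    (by simpa using hη)
  refine ⟨W, hWo, hAW, fun φ hφc hφ hφW => ?_⟩
  have hlt' : ν.toJordanDecomposition.posPart.real (W \ A)
      + ν.toJordanDecomposition.negPart.real (W \ A) < η / 2 := by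
    have h := (ENNReal.lt_ofReal_iff_toReal_lt (measure_ne_top _ _)).1 hlt
    rw [SignedMeasure.totalVariation, Measure.add_apply,
      ENNReal.toReal_add (measure_ne_top _ _) (measure_ne_top _ _)] at h
    exact h
  have hp := measure_integral_atoms ν.toJordanDecomposition.posPart A W hAW φ
    hφc.measurable hφ hφW
  have hn := measure_integral_atoms ν.toJordanDecomposition.negPart A W hAW φ
    hφc.measurable hφ hφW
  have hν : ∀ t, ν {t} = ν.toJordanDecomposition.posPart.real {t}
      - ν.toJordanDecomposition.negPart.real {t} := by
    intro t
    conv_lhs => rw [← ν.toSignedMeasure_toJordanDecomposition]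
    rw [JordanDecomposition.toSignedMeasure, sub_apply,
      Measure.toSignedMeasure_apply_measurable (measurableSet_singleton t),
      Measure.toSignedMeasure_apply_measurable (measurableSet_singleton t)]
  have hsum : ∑ t ∈ A, φ t * ν {t}
      = ∑ t ∈ A, φ t * ν.toJordanDecomposition.posPart.real {t}
        - ∑ t ∈ A, φ t * ν.toJordanDecomposition.negPart.real {t} := by
    rw [← Finset.sum_sub_distrib]
    exact Finset.sum_congr rfl fun t _ => by rw [hν t]; ring
  rw [hsum, SignedMeasure.integral]
  rw [abs_le] at *
  constructor <;> linarith [hp.1, hp.2, hn.1, hn.2]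

/-- Every nonempty open set contains a point whose diagonal atom is almost nonnegative. -/
lemma exists_neg_lt_atom {S : Type*} [TopologicalSpace S] [CompactSpace S]
    [T2Space S] [PerfectSpace S] [MeasurableSpace S] [BorelSpace S]
    (T : C(S, ℝ) →L[ℝ] C(S, ℝ)) (μ : S → SignedMeasure S)
    (hreg : ∀ s, (μ s).totalVariation.Regular)
    (hker : ∀ (f : C(S, ℝ)) (s : S), T f s = SignedMeasure.integral (μ s) f)
    (hcont : ∀ t : S, Continuous fun s => μ s {t})
    (U : Set S) (hU : IsOpen U) (hne : U.Nonempty) {β : ℝ} (hβ : 0 < β) :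
    ∃ s ∈ U, -β ≤ μ s {s} := by
  by_contra! hcon
  have key : ∀ n : ℕ, ∃ (A : Finset S) (V : Set S), A.card = n ∧ IsOpen V ∧ V.Nonempty ∧ V ⊆ U ∧
      ∀ s ∈ V, ∀ t ∈ A, μ s {t} < -β := by
    classical
    intro n
    induction n with
    | zero => exact ⟨∅, U, rfl, hU, hne, subset_rfl, by simp⟩
    | succ n ih =>
      obtain ⟨A, V, hA, hV, ⟨v, hv⟩, hVU, hVA⟩ := ih
      have hinf : V.Infinite := infinite_of_mem_nhds v (hV.mem_nhds hv)
      obtain ⟨s, hsV, hsA⟩ := hinf.exists_notMem_finset A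
      refine ⟨insert s A, V ∩ {x | μ x {s} < -β}, ?_, ?_, ⟨s, hsV, hcon s (hVU hsV)⟩,
        Set.inter_subset_left.trans hVU, ?_⟩
      · rw [Finset.card_insert_of_notMem hsA, hA]
      · exact hV.inter (isOpen_lt (hcont s) continuous_const)
      · rintro x ⟨hxV, hx⟩ t ht
        rcases Finset.mem_insert.1 ht with rfl | ht
        · exact hx
        · exact hVA x hxV t ht
  obtain ⟨n, hn⟩ := exists_nat_gt ((‖T‖ + 1) / β)
  rw [div_lt_iff₀ hβ] at hn
  obtain ⟨A, V, hA, -, ⟨s, hs⟩, -, hVA⟩ := key n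
  obtain ⟨W, hWo, hAW, hW⟩ := exists_open_integral_atoms (μ s) (hreg s) A one_pos
  obtain ⟨k, hk0, hk1, hk⟩ := exists_continuous_zero_one_of_isClosed hWo.isClosed_compl
    A.finite_toSet.isClosed (by
      rw [Set.disjoint_compl_left_iff_subset]; exact hAW)
  have hkabs : ∀ x, |k x| ≤ 1 := fun x => abs_le.2 ⟨by linarith [(hk x).1], (hk x).2⟩
  have h1 := hW k k.continuous (fun x => (hkabs x).trans one_le_two) (fun x hx => hk0 hx)
  rw [← hker k s] at h1
  have hsum : ∑ t ∈ A, k t * μ s {t} ≤ -(n * β) := by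
    calc ∑ t ∈ A, k t * μ s {t} ≤ ∑ _t ∈ A, -β := Finset.sum_le_sum fun t ht => by
          rw [hk1 (Finset.mem_coe.2 ht)]
          simpa using (hVA s hs t ht).le
      _ = -(n * β) := by simp [hA]
  have hknorm : ‖k‖ ≤ 1 := (ContinuousMap.norm_le k zero_le_one).2 hkabs
  have h2 : |T k s| ≤ ‖T‖ := ((T k).norm_coe_le_norm s).trans
    ((T.le_opNorm k).trans (mul_le_of_le_one_right (norm_nonneg _) hknorm))
  linarith [(abs_le.1 h1).2, (abs_le.1 h2).1]

/-- A nearly norming function in the unit ball, with the sign chosen to make `T f` large. -/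
lemma exists_nearly_norming {S : Type*} [TopologicalSpace S] [CompactSpace S] [Nonempty S]
    (T : C(S, ℝ) →L[ℝ] C(S, ℝ)) {r : ℝ} (hr : r < ‖T‖) :
    ∃ f : C(S, ℝ), ‖f‖ ≤ 1 ∧ ∃ s, r < T f s := by
  obtain ⟨f, hf, hrf⟩ := T.exists_lt_apply_of_lt_opNorm hr
  have : ∃ s, r < ‖T f s‖ := by
    by_contra! h
    exact absurd ((ContinuousMap.norm_le_of_nonempty _).2 h) (not_le.2 hrf)
  obtain ⟨s, hs⟩ := this
  rcases lt_abs.1 hs with h | h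
  · exact ⟨f, hf.le, s, h⟩
  · exact ⟨-f, by simpa using hf.le, s, by simpa using h⟩

theorem daugavet_of_continuous_atoms {S : Type*} [TopologicalSpace S] [CompactSpace S]
    [T2Space S] [PerfectSpace S] [Nonempty S] [MeasurableSpace S] [BorelSpace S]
    (T : C(S, ℝ) →L[ℝ] C(S, ℝ)) (μ : S → SignedMeasure S)
    (hreg : ∀ s, (μ s).totalVariation.Regular)
    (hker : ∀ (f : C(S, ℝ)) (s : S), T f s = SignedMeasure.integral (μ s) f)
    (hcont : ∀ t : S, Continuous fun s => μ s {t}) :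
    ‖ContinuousLinearMap.id ℝ C(S, ℝ) + T‖ = 1 + ‖T‖ := by
  apply le_antisymm
  · have h := norm_add_le (ContinuousLinearMap.id ℝ C(S, ℝ)) T
    have h' : ‖ContinuousLinearMap.id ℝ C(S, ℝ)‖ ≤ 1 := ContinuousLinearMap.norm_id_le
    linarith
  refine le_of_forall_pos_le_add fun ε hε => ?_
  have hδ : 0 < ε / 4 := by positivity
  obtain ⟨f, hf, s₀, hs₀⟩ := exists_nearly_norming T (sub_lt_self ‖T‖ hδ)
  obtain ⟨s, hsU, hs⟩ := exists_neg_lt_atom T μ hreg hker hcont {s | ‖T‖ - ε / 4 < T f s}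
    (isOpen_lt continuous_const (T f).continuous) ⟨s₀, hs₀⟩ hδ
  obtain ⟨W, hWo, hAW, hW⟩ := exists_open_integral_atoms (μ s) (hreg s) {s} hδ
  obtain ⟨k, hk0, hk1, hk⟩ := exists_continuous_zero_one_of_isClosed hWo.isClosed_compl
    (isClosed_singleton (x := s)) (by
      rw [Set.disjoint_compl_left_iff_subset]; simpa using hAW)
  have hfx : ∀ x, |f x| ≤ 1 := fun x => (f.norm_coe_le_norm x).trans hf
  have hks : k s = 1 := hk1 rfl
  let g : C(S, ℝ) := f ⊔ ((2 : ℝ) • k - 1)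
  have hgx : ∀ x, g x = max (f x) (2 * k x - 1) := fun x => by
    simp [g]
  have hgs : g s = 1 := by
    rw [hgx, hks, max_eq_right] <;> linarith [(abs_le.1 (hfx s)).2]
  have hg1 : ∀ x, g x ≤ 1 := fun x => by
    rw [hgx]; exact max_le (abs_le.1 (hfx x)).2 (by linarith [(hk x).2])
  have hgf : ∀ x, f x ≤ g x := fun x => by rw [hgx]; exact le_max_left _ _
  have hgnorm : ‖g‖ ≤ 1 := (ContinuousMap.norm_le g zero_le_one).2 fun x =>
    abs_le.2 ⟨(abs_le.1 (hfx x)).1.trans (hgf x), hg1 x⟩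
  have h1 := hW (g - f : C(S, ℝ)) (g - f).continuous
    (fun x => by
      rw [ContinuousMap.sub_apply, abs_le]
      constructor <;> linarith [hgf x, hg1 x, (abs_le.1 (hfx x)).1])
    (fun x hx => by
      have hk0x : k x = 0 := hk0 hx
      rw [ContinuousMap.sub_apply, hgx, hk0x, max_eq_left, sub_self]
      linarith [(abs_le.1 (hfx x)).1])
  rw [← hker (g - f) s, map_sub, ContinuousMap.sub_apply, Finset.sum_singleton,
    ContinuousMap.sub_apply, hgs] at h1
  -- The factor `1 - f s` lies in `[0, 2]`, so a diagonal atom above `-ε / 4` costs at most `ε / 2`.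
  have h2 : -(ε / 2) ≤ (1 - f s) * μ s {s} := by
    have ha := (abs_le.1 (hfx s)).1
    have hb := (abs_le.1 (hfx s)).2
    nlinarith
  have h3 : 1 + T g s ≤ ‖ContinuousLinearMap.id ℝ C(S, ℝ) + T‖ := by
    have h4 : (ContinuousLinearMap.id ℝ C(S, ℝ) + T) g s = 1 + T g s := by
      simp [hgs]
    rw [← h4]
    exact (le_abs_self _).trans
      ((((ContinuousLinearMap.id ℝ C(S, ℝ) + T) g).norm_coe_le_norm s).trans
      (((ContinuousLinearMap.id ℝ C(S, ℝ) + T).le_opNorm g).trans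
        (mul_le_of_le_one_right (norm_nonneg _) hgnorm)))
  have hsU' : ‖T‖ - ε / 4 < T f s := hsU
  linarith [(abs_le.1 h1).1]
end

section
/- Let S be a compact Hausdorff space and let T : C(S) → C(S) be a bounded linear operator with representing kernel (μ_s)_{s∈S}. If the set { t ∈ S : μ_s({t}) = 0 for all s ∈ S } is dense in S, then ‖I + T‖ = 1 + ‖T‖. -/
/-!
The content is the lower bound `1 + ‖T‖ ≤ ‖I + T‖`, which comes from the points `t` at which the
measure `μ t` has no atom at `t` itself; these are dense. Choose `f` in the unit ball and a point where `T f` is almost `‖T‖`; by continuity and density this point may be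
taken to be some `t` with `μ t {t} = 0`. The two parts of the Jordan decomposition of `μ t` are
mutually singular, so the total variation of `μ t` also vanishes on `{t}`
(`totalVariation_singleton_eq_zero`), and by outer regularity it is small on an open
neighbourhood `U` of `t`. An Urysohn function `φ` supported in `U` with `φ t = 1` turns `f` into
`g = f + φ (1 - f)`, which is still in the unit ball, has `g t = 1`, and satisfies
`T g t ≈ T f t` because `g - f` vanishes off `U` (`abs_integral_le`).
Hence `(g + T g) t` is almost `1 + ‖T‖`.
-/

open MeasureTheory Topology

theorem totalVariation_singleton_eq_zero {S : Type*} [MeasurableSpace S]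
    [MeasurableSingletonClass S] (ν : SignedMeasure S) (t : S) (h : ν {t} = 0) :
    ν.totalVariation {t} = 0 := by
  have hm : MeasurableSet ({t} : Set S) := measurableSet_singleton t
  obtain ⟨A, -, hA, hA'⟩ := ν.toJordanDecomposition.mutuallySingular
  have key : ν.toJordanDecomposition.posPart.real {t}
      = ν.toJordanDecomposition.negPart.real {t} := by
    have h1 := ν.toSignedMeasure_toJordanDecomposition
    rw [← h1, JordanDecomposition.toSignedMeasure, sub_apply,
      Measure.toSignedMeasure_apply_measurable hm,
      Measure.toSignedMeasure_apply_measurable hm] at h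
    linarith
  have key' : ν.toJordanDecomposition.posPart {t} = ν.toJordanDecomposition.negPart {t} :=
    (measureReal_eq_measureReal_iff).1 key
  rw [SignedMeasure.totalVariation, Measure.add_apply]
  by_cases ht : t ∈ A
  · have h0 : ν.toJordanDecomposition.posPart {t} = 0 :=
      measure_mono_null (Set.singleton_subset_iff.2 ht) hA
    rw [← key', h0, add_zero]
  · have h0 : ν.toJordanDecomposition.negPart {t} = 0 :=
      measure_mono_null (Set.singleton_subset_iff.2 ht) hA'
    rw [key', h0, add_zero]

theorem abs_integral_le {S : Type*} [MeasurableSpace S] (ν : SignedMeasure S) (h : S → ℝ)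
    (U : Set S) (C : ℝ) (hC : ∀ x, |h x| ≤ C) (hU : ∀ x, x ∉ U → h x = 0) :
    |SignedMeasure.integral ν h| ≤ C * ν.totalVariation.real U := by
  have bound : ∀ m : Measure S, IsFiniteMeasure m → |∫ x, h x ∂m| ≤ C * m.real U := by
    intro m _
    rw [← setIntegral_eq_integral_of_forall_compl_eq_zero hU, ← Real.norm_eq_abs]
    exact norm_setIntegral_le_of_norm_le_const (measure_lt_top m U) (fun x _ => hC x)
  have h1 := bound ν.toJordanDecomposition.posPart inferInstance
  have h2 := bound ν.toJordanDecomposition.negPart inferInstance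
  rw [SignedMeasure.integral, SignedMeasure.totalVariation, measureReal_add_apply, mul_add]
  exact (abs_sub _ _).trans (add_le_add h1 h2)

theorem daugavet_of_dense_null_atoms {S : Type*} [TopologicalSpace S] [CompactSpace S]
    [T2Space S] [Nonempty S] [MeasurableSpace S] [BorelSpace S]
    (T : C(S, ℝ) →L[ℝ] C(S, ℝ)) (μ : S → SignedMeasure S)
    (hreg : ∀ s, (μ s).totalVariation.Regular)
    (hker : ∀ (f : C(S, ℝ)) (s : S), T f s = SignedMeasure.integral (μ s) f)
    (hdense : Dense {t : S | ∀ s : S, μ s {t} = 0}) :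
    ‖ContinuousLinearMap.id ℝ C(S, ℝ) + T‖ = 1 + ‖T‖ := by
  apply le_antisymm
  · have h1 : ‖ContinuousLinearMap.id ℝ C(S, ℝ)‖ ≤ 1 := ContinuousLinearMap.norm_id_le
    have h2 := norm_add_le (ContinuousLinearMap.id ℝ C(S, ℝ)) T
    linarith
  apply le_of_forall_pos_le_add
  intro ε hε
  set δ := ε / 3 with hδ
  have hδ0 : 0 < δ := by positivity
  obtain ⟨f, hf1, s, hs⟩ : ∃ f : C(S, ℝ), ‖f‖ ≤ 1 ∧ ∃ s, ‖T‖ - δ < T f s := by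
    by_contra! hcon
    have hle : ‖T‖ ≤ max (‖T‖ - δ) 0 := by
      refine T.opNorm_le_of_unit_norm (le_max_right _ _) fun f hf => ?_
      refine (ContinuousMap.norm_le _ (le_max_right _ _)).2 fun s => ?_
      refine le_trans (abs_le.2 ⟨?_, hcon f hf.le s⟩) (le_max_left _ _)
      have := hcon (-f) (by rw [norm_neg]; exact hf.le) s
      rw [map_neg, ContinuousMap.neg_apply] at this
      linarith
    rcases le_max_iff.1 hle with h | h
    · linarith
    · -- If `T = 0`, the zero function already exceeds `‖T‖ - δ = -δ`.
      have := hcon 0 (by simp) (Classical.arbitrary S)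
      rw [map_zero, ContinuousMap.zero_apply] at this
      linarith
  obtain ⟨t, ht, htD⟩ := hdense.inter_open_nonempty {x | ‖T‖ - δ < T f x}
    (isOpen_lt continuous_const (T f).continuous) ⟨s, hs⟩
  have ht : ‖T‖ - δ < T f t := ht
  have hnull := totalVariation_singleton_eq_zero (μ t) t (htD t)
  have := hreg t
  obtain ⟨U, hUt, hUo, hUm⟩ := Set.exists_isOpen_lt_of_lt (μ := (μ t).totalVariation) {t}
    (ENNReal.ofReal δ) (by rw [hnull]; exact ENNReal.ofReal_pos.2 hδ0)
  have htU : t ∈ U := hUt rfl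
  have hUr : (μ t).totalVariation.real U ≤ δ := ENNReal.toReal_le_of_le_ofReal hδ0.le hUm.le
  obtain ⟨φ, hφ0, hφ1, hφ⟩ := exists_continuous_zero_one_of_isClosed hUo.isClosed_compl
    (isClosed_singleton (x := t)) (by simpa using htU)
  have hfx : ∀ x, |f x| ≤ 1 := fun x => (f.norm_coe_le_norm x).trans hf1
  have hφt : φ t = 1 := hφ1 rfl
  let h : C(S, ℝ) := φ * (1 - f)
  have hh : ∀ x, h x = φ x * (1 - f x) := fun x => rfl
  have hTh : |T h t| ≤ 2 * δ := by
    rw [hker]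
    refine (abs_integral_le (μ t) h U 2 (fun x => ?_) (fun x hx => ?_)).trans (by linarith)
    · have := abs_le.1 (hfx x)
      obtain ⟨h0, h1⟩ := hφ x
      rw [hh, abs_le]
      constructor <;> nlinarith
    · have h0 : φ x = 0 := hφ0 hx
      rw [hh, h0, zero_mul]
  have hg : ‖f + h‖ ≤ 1 := by
    refine (ContinuousMap.norm_le _ zero_le_one).2 fun x => ?_
    have := abs_le.1 (hfx x)
    obtain ⟨h0, h1⟩ := hφ x
    rw [ContinuousMap.add_apply, hh, Real.norm_eq_abs, abs_le]
    constructor <;> nlinarith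
  have hval : ((ContinuousLinearMap.id ℝ C(S, ℝ) + T) (f + h)) t = 1 + T f t + T h t := by
    simp only [add_apply, ContinuousLinearMap.id_apply, map_add,
      ContinuousMap.add_apply, hh, hφt]
    ring
  have hle : ((ContinuousLinearMap.id ℝ C(S, ℝ) + T) (f + h)) t
      ≤ ‖ContinuousLinearMap.id ℝ C(S, ℝ) + T‖ := by
    refine (Real.le_norm_self _).trans ((ContinuousMap.norm_coe_le_norm _ t).trans ?_)
    exact ContinuousLinearMap.unit_le_opNorm _ _ hg
  have := (abs_le.1 hTh).1
  linarith
end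

section
/- Let S be a compact Hausdorff space without isolated points and let T : C(S) → C(S) be a bounded linear operator that factors through c₀, i.e. T = T₂ ∘ T₁ for bounded linear operators T₁ : C(S) → c₀ and T₂ : c₀ → C(S). Then ‖I + T‖ = 1 + ‖T‖. -/
open Topology ZeroAtInfty

/-!
For `s : S` the functional `ψ = δ_s ∘ T` equals `∑ aₙ(s) νₙ` with `(aₙ(s))` in `ℓ¹`, where
`νₙ = eₙ* ∘ T₁` does not depend on `s`. In terms of measures, each `νₙ` has only countably many
atoms, so all atoms of all the functionals `δ_s ∘ T` lie in one countable set, whose complement is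
dense because `S` is a Baire space without isolated points. Hence, if `‖f‖ ≤ 1` and `T f` is close
to `‖T‖` on an open set, that set contains a point `s` which is not an atom of `δ_s ∘ T`. Changing
`f` only near `s` gives `g` with `‖g‖ ≤ 1`, `g s = 1` and `T g s` still close to `‖T‖`, so that
`(g + T g) s` is close to `1 + ‖T‖`.

Measures are avoided: `concentrationSet φ ε` plays the role of the set of atoms of mass at least
`ε`, and it is finite by adding up bumps with disjoint supports (`finite_concentrationSet`). The
`ℓ¹` representation of functionals on `c₀` is used through `exists_finset_abs_le`.
-/

namespace DaugavetC0

variable {S : Type*} [TopologicalSpace S] [CompactSpace S]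

/-- The points at which the functional `φ` on `C(S, ℝ)` takes values larger than `ε` on functions
of norm at most one vanishing off arbitrarily small neighbourhoods. When `φ` is integration against a
regular measure `μ`, these are atoms of `μ` of mass at least `ε`. -/
def concentrationSet (φ : C(S, ℝ) →L[ℝ] ℝ) (ε : ℝ) : Set S :=
  {s | ∀ V ∈ 𝓝 s, ∃ h : C(S, ℝ), ‖h‖ ≤ 1 ∧ (∀ x ∉ V, h x = 0) ∧ ε < φ h}

/-- Bumps around `n` distinct points, with disjoint supports and `φ`-values larger than `ε`, add
up to a function of norm at most one, so `n * ε ≤ ‖φ‖`. -/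
lemma finite_concentrationSet [T2Space S] (φ : C(S, ℝ) →L[ℝ] ℝ) {ε : ℝ} (hε : 0 < ε) :
    (concentrationSet φ ε).Finite := by
  by_contra hinf
  obtain ⟨n, hn⟩ := exists_nat_gt (‖φ‖ / ε)
  obtain ⟨t, hts, htn⟩ := Set.Infinite.exists_subset_card_eq hinf n
  obtain ⟨U, hU, hdisj⟩ := t.finite_toSet.t2_separation
  have hex : ∀ s : S, ∃ h : C(S, ℝ), s ∈ t → ‖h‖ ≤ 1 ∧ (∀ x ∉ U s, h x = 0) ∧ ε < φ h := by
    intro s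
    by_cases hs : s ∈ t
    · obtain ⟨h, hh⟩ := hts hs (U s) ((hU s).2.mem_nhds (hU s).1)
      exact ⟨h, fun _ => hh⟩
    · exact ⟨0, fun h => absurd h hs⟩
  choose h hh using hex
  have hnorm : ‖∑ s ∈ t, h s‖ ≤ 1 := by
    rw [ContinuousMap.norm_le _ zero_le_one]
    intro x
    rw [ContinuousMap.sum_apply]
    by_cases hx : ∃ s ∈ t, x ∈ U s
    · obtain ⟨s, hs, hxs⟩ := hx
      rw [Finset.sum_eq_single_of_mem s hs]
      · exact ((h s).norm_coe_le_norm x).trans (hh s hs).1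
      · intro s' hs' hne
        refine (hh s' hs').2.1 x fun hxs' => ?_
        exact Set.disjoint_left.mp (hdisj hs' hs hne) hxs' hxs
    · push Not at hx
      rw [Finset.sum_eq_zero fun s hs => (hh s hs).2.1 x (hx s hs)]
      simp
  have h1 : (n : ℝ) * ε ≤ φ (∑ s ∈ t, h s) := by
    rw [map_sum, ← htn, ← nsmul_eq_mul]
    exact Finset.card_nsmul_le_sum _ _ _ fun s hs => (hh s hs).2.2.le
  have h2 : φ (∑ s ∈ t, h s) ≤ ‖φ‖ :=
    (le_abs_self _).trans ((φ.le_opNorm _).trans (mul_le_of_le_one_right (norm_nonneg _) hnorm))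
  rw [div_lt_iff₀ hε] at hn
  linarith

lemma exists_nhds_abs_le {φ : C(S, ℝ) →L[ℝ] ℝ} {s : S} {ε : ℝ}
    (hs : s ∉ concentrationSet φ ε) :
    ∃ V ∈ 𝓝 s, ∀ h : C(S, ℝ), ‖h‖ ≤ 1 → (∀ x ∉ V, h x = 0) → |φ h| ≤ ε := by
  simp only [concentrationSet, Set.mem_ofPred_eq, not_forall, not_exists, not_and, not_lt] at hs
  obtain ⟨V, hV, H⟩ := hs
  refine ⟨V, hV, fun h h1 h0 => abs_le'.mpr ⟨H h h1 h0, ?_⟩⟩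
  have := H (-h) (by rwa [norm_neg]) (fun x hx => by simp [h0 x hx])
  rwa [map_neg] at this

lemma dense_compl_of_countable [T2Space S] [PerfectSpace S] {A : Set S} (hA : A.Countable) :
    Dense Aᶜ := by
  have : Aᶜ = ⋂ a ∈ A, ({a}ᶜ : Set S) := by
    ext x
    simp only [Set.mem_compl_iff, Set.mem_iInter, Set.mem_singleton_iff]
    exact ⟨fun h a ha hx => h (hx ▸ ha), fun h hx => h x hx rfl⟩
  rw [this]
  exact dense_biInter_of_isOpen (fun a _ => isOpen_compl_singleton) hA
    fun a _ => dense_compl_singleton a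

/-- The function on `ℕ` which agrees with `c` on the finite set `F` and vanishes elsewhere, as an
element of `c₀`. -/
noncomputable def finsupp (F : Finset ℕ) (c : ℕ → ℝ) : C₀(ℕ, ℝ) where
  toFun n := if n ∈ F then c n else 0
  continuous_toFun := continuous_of_discreteTopology
  zero_at_infty' := by
    refine tendsto_const_nhds.congr' ?_
    rw [Filter.cocompact_eq_cofinite]
    filter_upwards [F.finite_toSet.compl_mem_cofinite] with n hn
    exact (if_neg hn).symm

lemma finsupp_apply (F : Finset ℕ) (c : ℕ → ℝ) (n : ℕ) :
    finsupp F c n = if n ∈ F then c n else 0 := rfl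

lemma norm_le_of_forall {x : C₀(ℕ, ℝ)} {C : ℝ} (hC : 0 ≤ C) (h : ∀ n, |x n| ≤ C) : ‖x‖ ≤ C := by
  rw [← ZeroAtInftyContinuousMap.norm_toBCF_eq_norm]
  exact (BoundedContinuousFunction.norm_le hC).mpr h

lemma abs_apply_le_norm (x : C₀(ℕ, ℝ)) (n : ℕ) : |x n| ≤ ‖x‖ := by
  rw [← ZeroAtInftyContinuousMap.norm_toBCF_eq_norm]
  exact x.toBCF.norm_coe_le_norm n

lemma finsupp_eq_sum (F : Finset ℕ) (c : ℕ → ℝ) :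
    finsupp F c = ∑ n ∈ F, c n • finsupp {n} 1 := by
  ext m
  have : ∀ G : Finset ℕ, (∑ n ∈ G, c n • finsupp {n} 1 : C₀(ℕ, ℝ)) m
      = ∑ n ∈ G, c n * finsupp {n} 1 m := by
    intro G
    induction G using Finset.induction_on with
    | empty => simp
    | insert a G ha ih => simp [Finset.sum_insert ha, ih]
  rw [this]
  simp [finsupp_apply]

lemma map_finsupp (a : C₀(ℕ, ℝ) →L[ℝ] ℝ) (F : Finset ℕ) (c : ℕ → ℝ) :
    a (finsupp F c) = ∑ n ∈ F, c n * a (finsupp {n} 1) := by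
  rw [finsupp_eq_sum, map_sum]
  simp

lemma tendsto_finsupp (x : C₀(ℕ, ℝ)) :
    Filter.Tendsto (fun F : Finset ℕ => finsupp F x) Filter.atTop (𝓝 x) := by
  rw [Metric.tendsto_nhds]
  intro ε hε
  have h := x.zero_at_infty'
  rw [Filter.cocompact_eq_cofinite, Metric.tendsto_nhds] at h
  have hfin : {n | ¬ dist (x n) 0 < ε / 2}.Finite := h (ε / 2) (by positivity)
  filter_upwards [Filter.eventually_ge_atTop hfin.toFinset] with F hF
  rw [dist_eq_norm]
  refine (norm_le_of_forall (by positivity : (0 : ℝ) ≤ ε / 2) fun n => ?_).trans_lt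
    (half_lt_self hε)
  rw [ZeroAtInftyContinuousMap.sub_apply, finsupp_apply]
  split_ifs with hn
  · simpa using (half_pos hε).le
  · have : n ∉ hfin.toFinset := fun h => hn (hF h)
    simp only [Set.Finite.mem_toFinset, Set.mem_ofPred_eq, not_not, Real.dist_eq, sub_zero] at this
    simpa using this.le

lemma summable_abs (a : C₀(ℕ, ℝ) →L[ℝ] ℝ) : Summable fun n => |a (finsupp {n} 1)| := by
  refine summable_of_sum_le (c := ‖a‖) (fun _ => abs_nonneg _) fun F => ?_
  -- Test `a` on the signs of its coefficients, an element of norm at most one.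
  have h1 : ‖finsupp F fun n => SignType.sign (a (finsupp {n} 1))‖ ≤ 1 := by
    refine norm_le_of_forall zero_le_one fun m => ?_
    rw [finsupp_apply]
    split_ifs
    · rcases lt_trichotomy (a (finsupp {m} 1)) 0 with h | h | h <;> simp [h]
    · simp
  have h2 := (le_abs_self _).trans ((a.le_opNorm _).trans
    (mul_le_of_le_one_right (norm_nonneg a) h1))
  rw [map_finsupp] at h2
  simpa only [sign_mul_self] using h2

/-- Up to an error `δ‖x‖`, a functional on `c₀` depends on finitely many coordinates only. -/
lemma exists_finset_abs_le (a : C₀(ℕ, ℝ) →L[ℝ] ℝ) {δ : ℝ} (hδ : 0 < δ) :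
    ∃ F : Finset ℕ, ∀ x : C₀(ℕ, ℝ),
      |a x| ≤ ∑ n ∈ F, |x n| * |a (finsupp {n} 1)| + δ * ‖x‖ := by
  obtain ⟨F, hF⟩ := summable_iff_vanishing_norm.mp (summable_abs a) δ hδ
  refine ⟨F, fun x => ?_⟩
  have hlim := ((a.continuous.tendsto x).comp (tendsto_finsupp x)).abs
  refine le_of_tendsto hlim ?_
  filter_upwards [Filter.eventually_ge_atTop F] with G hG
  simp only [Function.comp_apply]
  rw [map_finsupp]
  refine (Finset.abs_sum_le_sum_abs _ _).trans ?_
  simp only [abs_mul]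
  rw [← Finset.sum_sdiff hG, add_comm]
  gcongr
  have h1 : ∑ n ∈ G \ F, |a (finsupp {n} 1)| ≤ δ :=
    (le_abs_self _).trans (hF (G \ F) Finset.sdiff_disjoint).le
  calc ∑ n ∈ G \ F, |x n| * |a (finsupp {n} 1)|
      ≤ ∑ n ∈ G \ F, ‖x‖ * |a (finsupp {n} 1)| := by
        gcongr with n
        exact abs_apply_le_norm x n
    _ = (∑ n ∈ G \ F, |a (finsupp {n} 1)|) * ‖x‖ := by rw [← Finset.mul_sum, mul_comm]
    _ ≤ δ * ‖x‖ := by gcongr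

/-- The `n`-th coordinate functional on `c₀`. -/
noncomputable def coord (n : ℕ) : C₀(ℕ, ℝ) →L[ℝ] ℝ :=
  LinearMap.mkContinuous
    { toFun := fun x => x n
      map_add' := fun _ _ => rfl
      map_smul' := fun _ _ => rfl } 1 fun x => by
    simpa using abs_apply_le_norm x n

/-- A functional factoring through `T₁` has no concentration at a point where no coordinate of
`T₁` has any. -/
lemma notMem_concentrationSet_comp (T₁ : C(S, ℝ) →L[ℝ] C₀(ℕ, ℝ)) (a : C₀(ℕ, ℝ) →L[ℝ] ℝ) {s : S}
    (hs : ∀ n k : ℕ, s ∉ concentrationSet ((coord n).comp T₁) (1 / ((k : ℝ) + 1)))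
    {ε : ℝ} (hε : 0 < ε) : s ∉ concentrationSet (a.comp T₁) ε := by
  obtain ⟨F, hF⟩ := exists_finset_abs_le a
    (show 0 < ε / (2 * (‖T₁‖ + 1)) by positivity)
  set M : ℝ := ∑ n ∈ F, |a (finsupp {n} 1)| with hM
  have hM0 : 0 ≤ M := Finset.sum_nonneg fun _ _ => abs_nonneg _
  obtain ⟨k, hk⟩ := exists_nat_one_div_lt (show 0 < ε / (2 * (M + 1)) by positivity)
  choose V hV hVh using fun n => exists_nhds_abs_le (hs n k)
  intro hmem
  obtain ⟨h, h1, h0, hlt⟩ := hmem (⋂ n ∈ F, V n) ((Filter.biInter_finset_mem F).mpr fun n _ => hV n)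
  have hb : ∀ n ∈ F, |T₁ h n| ≤ ε / (2 * (M + 1)) := fun n hn =>
    (hVh n h h1 fun x hx => h0 x fun hx' => hx (Set.mem_iInter₂.mp hx' n hn)).trans hk.le
  have hT₁ : ‖T₁ h‖ ≤ ‖T₁‖ :=
    (T₁.le_opNorm _).trans (mul_le_of_le_one_right (norm_nonneg _) h1)
  have e1 : ∑ n ∈ F, |T₁ h n| * |a (finsupp {n} 1)| ≤ ε / 2 := by
    calc _ ≤ ∑ n ∈ F, ε / (2 * (M + 1)) * |a (finsupp {n} 1)| :=
          Finset.sum_le_sum fun n hn => mul_le_mul_of_nonneg_right (hb n hn) (abs_nonneg _)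
      _ = ε / (2 * (M + 1)) * M := by rw [← Finset.mul_sum]
      _ ≤ ε / (2 * (M + 1)) * (M + 1) := by gcongr; linarith
      _ = ε / 2 := by field_simp
  have e2 : ε / (2 * (‖T₁‖ + 1)) * ‖T₁ h‖ ≤ ε / 2 := by
    calc _ ≤ ε / (2 * (‖T₁‖ + 1)) * (‖T₁‖ + 1) := by gcongr; linarith
      _ = ε / 2 := by field_simp
  have := (le_abs_self _).trans (hF (T₁ h))
  rw [ContinuousLinearMap.comp_apply] at hlt
  linarith

/-- If `ψ` does not concentrate at `s`, any `f` in the unit ball can be changed to take the value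
`1` at `s`, staying in the unit ball and hardly changing `ψ f`. -/
lemma exists_modification [T2Space S] (ψ : C(S, ℝ) →L[ℝ] ℝ) {s : S} {ε : ℝ}
    (hs : s ∉ concentrationSet ψ ε) {f : C(S, ℝ)} (hf : ‖f‖ ≤ 1) :
    ∃ g : C(S, ℝ), ‖g‖ ≤ 1 ∧ g s = 1 ∧ ψ f - 2 * ε ≤ ψ g := by
  obtain ⟨V, hV, H⟩ := exists_nhds_abs_le hs
  obtain ⟨W, hWV, hWo, hsW⟩ := mem_nhds_iff.mp hV
  obtain ⟨u, hu0, hu1, hu⟩ := exists_continuous_zero_one_of_isClosed hWo.isClosed_compl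
    isClosed_singleton (Set.disjoint_singleton_right.mpr fun h => h hsW)
  have hus : u s = 1 := hu1 rfl
  have hfx : ∀ x, -1 ≤ f x ∧ f x ≤ 1 := fun x =>
    abs_le.mp ((f.norm_coe_le_norm x).trans hf)
  -- `d` is half of the change `(1 - f) * u`, so that it lies in the unit ball.
  let d : C(S, ℝ) := (1 / 2 : ℝ) • ((1 - f) * u)
  have hdx : ∀ x, d x = 1 / 2 * ((1 - f x) * u x) := fun x => rfl
  have hd1 : ‖d‖ ≤ 1 := by
    rw [ContinuousMap.norm_le _ zero_le_one]
    intro x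
    obtain ⟨h1, h2⟩ := hfx x
    obtain ⟨h3, h4⟩ := hu x
    rw [hdx, Real.norm_eq_abs, abs_le]
    constructor <;> nlinarith
  have hd0 : ∀ x ∉ V, d x = 0 := fun x hx => by
    have : u x = 0 := hu0 fun h => hx (hWV h)
    rw [hdx, this, mul_zero, mul_zero]
  refine ⟨f + (2 : ℝ) • d, ?_, ?_, ?_⟩
  · rw [ContinuousMap.norm_le _ zero_le_one]
    intro x
    obtain ⟨h1, h2⟩ := hfx x
    obtain ⟨h3, h4⟩ := hu x
    simp only [ContinuousMap.add_apply, ContinuousMap.smul_apply, smul_eq_mul, hdx]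
    rw [Real.norm_eq_abs, abs_le]
    constructor <;> nlinarith
  · simp only [ContinuousMap.add_apply, ContinuousMap.smul_apply, smul_eq_mul, hdx, hus]
    ring
  · have := (abs_le.mp (H d hd1 hd0)).1
    rw [map_add, map_smul, smul_eq_mul]
    linarith

end DaugavetC0

open DaugavetC0 in
theorem daugavet_of_factors_through_c0 {S : Type*} [TopologicalSpace S] [CompactSpace S]
    [T2Space S] [PerfectSpace S] [Nonempty S]
    (T : C(S, ℝ) →L[ℝ] C(S, ℝ))
    (T₁ : C(S, ℝ) →L[ℝ] C₀(ℕ, ℝ)) (T₂ : C₀(ℕ, ℝ) →L[ℝ] C(S, ℝ))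
    (hT : T = T₂.comp T₁) :
    ‖ContinuousLinearMap.id ℝ C(S, ℝ) + T‖ = 1 + ‖T‖ := by
  apply le_antisymm
  · refine (norm_add_le (ContinuousLinearMap.id ℝ C(S, ℝ)) T).trans ?_
    gcongr
    exact ContinuousLinearMap.norm_id_le
  refine le_of_forall_pos_le_add fun ε hε => ?_
  obtain ⟨f, hf1, hf⟩ := T.exists_lt_apply_of_lt_opNorm (show ‖T‖ - ε / 2 < ‖T‖ by linarith)
  rw [ContinuousMap.norm_eq_iSup_norm] at hf
  obtain ⟨s₀, hs₀⟩ := exists_lt_of_lt_ciSup hf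
  -- Replacing `f` by `-f` if necessary, the value at `s₀` is positive.
  obtain ⟨f, hf1, hs₀⟩ : ∃ f : C(S, ℝ), ‖f‖ ≤ 1 ∧ ‖T‖ - ε / 2 < T f s₀ := by
    rcases lt_abs.mp hs₀ with h | h
    · exact ⟨f, hf1.le, h⟩
    · exact ⟨-f, by rw [norm_neg]; exact hf1.le, by simpa using h⟩
  let A : Set S := ⋃ n : ℕ, ⋃ k : ℕ, concentrationSet ((coord n).comp T₁) (1 / ((k : ℝ) + 1))
  have hA : A.Countable := Set.countable_iUnion fun n => Set.countable_iUnion fun k =>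
    (finite_concentrationSet _ (by positivity)).countable
  obtain ⟨s, hsA, hsU⟩ := (dense_compl_of_countable hA).exists_mem_open
    (isOpen_lt continuous_const (T f).continuous) ⟨s₀, hs₀⟩
  have hψ : s ∉ concentrationSet (((ContinuousMap.evalCLM ℝ s).comp T₂).comp T₁) (ε / 4) :=
    notMem_concentrationSet_comp T₁ _
      (fun n k h => hsA (Set.mem_iUnion₂.mpr ⟨n, k, h⟩)) (by positivity)
  obtain ⟨g, hg1, hgs, hg⟩ := exists_modification _ hψ hf1
  have hg' : T f s - 2 * (ε / 4) ≤ T g s := by rw [hT]; exact hg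
  have h1 : (g + T g) s ≤ ‖ContinuousLinearMap.id ℝ C(S, ℝ) + T‖ :=
    (le_abs_self _).trans (((g + T g).norm_coe_le_norm s).trans
      (((ContinuousLinearMap.id ℝ C(S, ℝ) + T).le_opNorm g).trans
        (mul_le_of_le_one_right (norm_nonneg _) hg1)))
  rw [ContinuousMap.add_apply, hgs] at h1
  have h2 : ‖T‖ - ε / 2 < T f s := hsU
  linarith
end

section
/- Let S be a compact Hausdorff space without isolated points, let K be a countable compact Hausdorff space, and let T : C(S) → C(S) be a bounded linear operator that factors through C(K), i.e. T = T₂ ∘ T₁ for bounded linear operators T₁ : C(S) → C(K) and T₂ : C(K) → C(S). Then ‖I + T‖ = 1 + ‖T‖. -/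
open Topology

/-!
The argument avoids measure theory by working with continuous functionals on `C(X, ℝ)` directly.

* A functional `φ` on `C(S)` has only countably many atoms: functions of norm at most one with
  disjoint supports can be added up without leaving the unit ball, so at most `‖φ‖ / ε` points can
  carry mass more than `ε` (`countable_atoms`).
* If `K` is countable and compact, a functional `ν` on `C(K)` is determined up to `ε`, on the unit
  ball, by the values at finitely many points (`exists_finset_small`); this replaces the fact that
  every measure on `K` is a countable sum of point masses. The point `k` has a neighbourhood `U k`
  such that `ν` has small mass on `U k` minus `k`. With summably small masses, compactness and a
  partition of unity give the claim.

Let `A` be the countable set of all atoms of the functionals `f ↦ T₁ f k`, `k : K`. For `s ∉ A`, the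
functional `f ↦ T f s = (T₂ (T₁ f)) s` has no atom at `s` (`exists_nhds_small`). Since `S` is perfect,
the complement of `A` is dense by Baire's theorem. If `‖f‖ ≤ 1` and `T f` is close to `‖T‖`
on a nonempty open set, pick `s ∉ A` in that set and change `f` near `s` so that its value
at `s` is `1`; this hardly affects `T f s`, so `(I + T) f s` is nearly `1 + ‖T‖`.
-/

namespace Daugavet

variable {X : Type*} [TopologicalSpace X] [CompactSpace X]

/-! ### Disjoint functions and atoms of functionals on `C(X, ℝ)` -/

/-- A function of norm at most one can be added to another one, disjoint from it, with the sign
that increases the value of `φ`. -/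
lemma exists_add_disjoint (φ : C(X, ℝ) →L[ℝ] ℝ) {H h : C(X, ℝ)} (hH : ‖H‖ ≤ 1) (hh : ‖h‖ ≤ 1)
    (hd : ∀ x, H x = 0 ∨ h x = 0) :
    ∃ G : C(X, ℝ), ‖G‖ ≤ 1 ∧ (∀ x, H x = 0 → h x = 0 → G x = 0) ∧ φ G = φ H + |φ h| := by
  have key : ∀ h' : C(X, ℝ), ‖h'‖ ≤ 1 → (∀ x, H x = 0 ∨ h' x = 0) → ‖H + h'‖ ≤ 1 := by
    intro h' hh' hd'
    rw [ContinuousMap.norm_le _ zero_le_one] at hH hh' ⊢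
    intro x
    rcases hd' x with h0 | h0
    · simpa [h0] using hh' x
    · simpa [h0] using hH x
  rcases le_total 0 (φ h) with hs | hs
  · refine ⟨H + h, key h hh hd, fun x h1 h2 => by simp [h1, h2], ?_⟩
    rw [map_add, abs_of_nonneg hs]
  · refine ⟨H + -h, key (-h) (by simpa using hh) (fun x => by simpa using hd x),
      fun x h1 h2 => by simp [h1, h2], ?_⟩
    rw [map_add, map_neg, abs_of_nonpos hs]

/-- The mass of `ν` on `U` minus `k` is small for a suitable neighbourhood `U` of `k`; otherwise
infinitely many disjoint functions near `k` would each contribute more than `ε`. -/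
lemma exists_punctured_small (ν : C(X, ℝ) →L[ℝ] ℝ) (k : X) {ε : ℝ} (hε : 0 < ε) :
    ∃ U : Set X, IsOpen U ∧ k ∈ U ∧ ∀ h : C(X, ℝ), ‖h‖ ≤ 1 → (∀ᶠ x in 𝓝 k, h x = 0) →
      (∀ x ∉ U, h x = 0) → |ν h| ≤ ε := by
  by_contra! hcon
  have step : ∀ n : ℕ, ∃ H : C(X, ℝ), ‖H‖ ≤ 1 ∧ (∀ᶠ x in 𝓝 k, H x = 0) ∧ n * ε ≤ ν H := by
    intro n
    induction n with
    | zero => exact ⟨0, by simp, by simp, by simp⟩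
    | succ n ih =>
      obtain ⟨H, hH, hHk, hHν⟩ := ih
      obtain ⟨U, hU, hUo, hkU⟩ := eventually_nhds_iff.1 hHk
      obtain ⟨h, hh, hhk, hhU, hhν⟩ := hcon U hUo hkU
      obtain ⟨G, hG, hG0, hGν⟩ := exists_add_disjoint ν hH hh (fun x => by
        by_cases hx : x ∈ U
        · exact Or.inl (hU x hx)
        · exact Or.inr (hhU x hx))
      refine ⟨G, hG, ?_, ?_⟩
      · filter_upwards [hHk, hhk] with x h1 h2 using hG0 x h1 h2
      · push_cast
        linarith
  obtain ⟨n, hn⟩ := exists_nat_gt (‖ν‖ / ε)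
  rw [div_lt_iff₀ hε] at hn
  obtain ⟨H, hH, -, hHν⟩ := step n
  have h1 := (le_abs_self _).trans (ν.le_opNorm H)
  have h2 := mul_le_mul_of_nonneg_left hH (norm_nonneg ν)
  linarith

/-- The points where `φ` has mass more than `ε`, i.e. where functions in the unit ball supported
arbitrarily close to the point still attain values larger than `ε`. -/
def bigAtoms (φ : C(X, ℝ) →L[ℝ] ℝ) (ε : ℝ) : Set X :=
  {s | ∀ U : Set X, IsOpen U → s ∈ U → ∃ h : C(X, ℝ), ‖h‖ ≤ 1 ∧ (∀ x ∉ U, h x = 0) ∧ ε < |φ h|}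

lemma exists_sum_bigAtoms (φ : C(X, ℝ) →L[ℝ] ℝ) (ε : ℝ) (U : X → Set X)
    (hU : ∀ x, x ∈ U x ∧ IsOpen (U x)) (F : Finset X) (hF : ↑F ⊆ bigAtoms φ ε)
    (hd : (F : Set X).PairwiseDisjoint U) :
    ∃ H : C(X, ℝ), ‖H‖ ≤ 1 ∧ (∀ x, (∀ s ∈ F, x ∉ U s) → H x = 0) ∧ F.card * ε ≤ φ H := by
  classical
  induction F using Finset.induction_on with
  | empty => exact ⟨0, by simp, by simp, by simp⟩
  | insert a F ha ih =>
    rw [Finset.coe_insert] at hF hd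
    obtain ⟨H, hH, hH0, hHφ⟩ := ih ((Set.subset_insert _ _).trans hF)
      (hd.subset (Set.subset_insert _ _))
    obtain ⟨h, hh, hh0, hhφ⟩ := hF (Set.mem_insert _ _) (U a) (hU a).2 (hU a).1
    obtain ⟨G, hG, hG0, hGφ⟩ := exists_add_disjoint φ hH hh (fun x => by
      by_cases hx : x ∈ U a
      · refine Or.inl (hH0 x fun s hs hxs => ?_)
        have := hd (Set.mem_insert _ _) (Set.mem_insert_of_mem _ hs)
          (by rintro rfl; exact ha hs)
        exact Set.disjoint_left.1 this hx hxs
      · exact Or.inr (hh0 x hx))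
    refine ⟨G, hG, fun x hx => hG0 x ?_ ?_, ?_⟩
    · exact hH0 x fun s hs => hx s (Finset.mem_insert_of_mem hs)
    · exact hh0 x (hx a (Finset.mem_insert_self _ _))
    · rw [Finset.card_insert_of_notMem ha]
      push_cast
      linarith

lemma finite_bigAtoms [T2Space X] (φ : C(X, ℝ) →L[ℝ] ℝ) {ε : ℝ} (hε : 0 < ε) :
    (bigAtoms φ ε).Finite := by
  by_contra hinf
  obtain ⟨n, hn⟩ := exists_nat_gt (‖φ‖ / ε)
  rw [div_lt_iff₀ hε] at hn
  obtain ⟨F, hF, hFn⟩ := Set.Infinite.exists_subset_card_eq hinf n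
  obtain ⟨U, hU, hd⟩ := F.finite_toSet.t2_separation
  obtain ⟨H, hH, -, hHφ⟩ := exists_sum_bigAtoms φ ε U hU F hF hd
  rw [hFn] at hHφ
  have h1 := (le_abs_self _).trans (φ.le_opNorm H)
  have h2 := mul_le_mul_of_nonneg_left hH (norm_nonneg φ)
  linarith

lemma countable_atoms [T2Space X] (φ : C(X, ℝ) →L[ℝ] ℝ) :
    (⋃ n : ℕ, bigAtoms φ (1 / ((n : ℝ) + 1))).Countable :=
  Set.countable_iUnion fun n => (finite_bigAtoms φ (by positivity)).countable

/-! ### Functionals on `C(K, ℝ)` for countable `K` -/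

/-- Moving a function that is small at `k` by a small amount in norm makes it vanish
near `k`, without enlarging its norm or its support. -/
lemma exists_trunc (u : C(X, ℝ)) (hu : ‖u‖ ≤ 1) {k : X} {δ : ℝ} (hk : |u k| < δ) :
    ∃ v : C(X, ℝ), ‖v‖ ≤ 1 ∧ (∀ᶠ x in 𝓝 k, v x = 0) ∧ (∀ x, u x = 0 → v x = 0) ∧
      ‖u - v‖ ≤ δ := by
  have hδ : 0 < δ := (abs_nonneg _).trans_lt hk
  rw [ContinuousMap.norm_le _ zero_le_one] at hu
  have hev : ∀ t : ℝ, |t| ≤ δ → t - max (-δ) (min t δ) = 0 := by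
    intro t ht
    rw [min_eq_left (abs_le.1 ht).2, max_eq_right (abs_le.1 ht).1, sub_self]
  refine ⟨⟨fun x => u x - max (-δ) (min (u x) δ), by fun_prop⟩, ?_, ?_, ?_, ?_⟩
  · rw [ContinuousMap.norm_le _ zero_le_one]
    intro x
    have := abs_le.1 (hu x)
    simp only [ContinuousMap.coe_mk, Real.norm_eq_abs]
    rw [abs_le]
    rcases max_cases (-δ) (min (u x) δ) with h | h <;>
    rcases min_cases (u x) δ with h' | h' <;> constructor <;> linarith
  · have : ∀ᶠ x in 𝓝 k, |u x| < δ :=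
      (u.continuous.abs.continuousAt (x := k)).eventually_lt_const hk
    filter_upwards [this] with x hx using hev _ hx.le
  · intro x hx
    exact hev _ (by simpa [hx] using hδ.le)
  · rw [ContinuousMap.norm_le _ hδ.le]
    intro x
    simp only [ContinuousMap.sub_apply, ContinuousMap.coe_mk, Real.norm_eq_abs, sub_sub_cancel]
    rw [abs_le]
    exact ⟨le_max_left _ _, max_le (by linarith) (min_le_right _ _)⟩

/-- On a countable compact space, a functional is small at those functions of the unit ball that
are small at suitable finitely many points. -/
lemma exists_finset_small [T2Space X] [Countable X] (ν : C(X, ℝ) →L[ℝ] ℝ) {ε : ℝ} (hε : 0 < ε) :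
    ∃ F : Finset X, ∃ δ > 0, ∀ g : C(X, ℝ), ‖g‖ ≤ 1 → (∀ k ∈ F, |g k| < δ) → |ν g| ≤ ε := by
  classical
  obtain ⟨e, he, hesum⟩ := (Set.to_countable (Set.univ : Set X)).exists_pos_forall_sum_le
    (half_pos hε)
  choose U hUo hkU hU using fun k => exists_punctured_small ν k (he k)
  obtain ⟨F, hF⟩ := isCompact_univ.elim_finite_subcover U hUo
    (fun x _ => Set.mem_iUnion.2 ⟨x, hkU x⟩)
  obtain ⟨p, hp⟩ := PartitionOfUnity.exists_isSubordinate (s := Set.univ) isClosed_univ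
    (fun i : F => U i) (fun i => hUo i) (fun x hx => by
      obtain ⟨k, hk, hxk⟩ := Set.mem_iUnion₂.1 (hF hx)
      exact Set.mem_iUnion.2 ⟨⟨k, hk⟩, hxk⟩)
  have hC : 0 < F.card * ‖ν‖ + 1 := by positivity
  obtain ⟨δ, hδ0, hδ⟩ : ∃ δ : ℝ, 0 < δ ∧ (F.card * ‖ν‖ + 1) * δ = ε / 2 :=
    ⟨ε / 2 / (F.card * ‖ν‖ + 1), by positivity, mul_div_cancel₀ _ hC.ne'⟩
  refine ⟨F, δ, hδ0, fun g hg hgF => ?_⟩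
  have hsum : g = ∑ i : F, p i * g := by
    ext x
    have h1 := p.sum_eq_one (Set.mem_univ x)
    rw [finsum_eq_sum_of_fintype] at h1
    simp only [ContinuousMap.sum_apply, ContinuousMap.mul_apply]
    rw [← Finset.sum_mul, h1, one_mul]
  have hpg : ∀ (i : F) x, |(p i * g) x| ≤ |g x| := by
    intro i x
    rw [ContinuousMap.mul_apply, abs_mul, abs_of_nonneg (p.nonneg i x)]
    exact mul_le_of_le_one_left (abs_nonneg _) (p.le_one i x)
  have hi : ∀ i : F, |ν (p i * g)| ≤ e i + ‖ν‖ * δ := by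
    intro i
    have hn : ‖p i * g‖ ≤ 1 := by
      rw [ContinuousMap.norm_le _ zero_le_one]
      exact fun x => (hpg i x).trans ((g.norm_coe_le_norm x).trans hg)
    obtain ⟨v, hv, hvk, hv0, hvd⟩ := exists_trunc (p i * g) hn
      ((hpg i i).trans_lt (hgF i i.2))
    have h1 := hU i v hv hvk (fun x hx => hv0 x (by
      have : p i x = 0 := by
        by_contra hne
        exact hx (hp i (subset_tsupport _ hne))
      simp [this]))
    have h2 : |ν (p i * g - v)| ≤ ‖ν‖ * δ :=
      (ν.le_opNorm _).trans (mul_le_mul_of_nonneg_left hvd (norm_nonneg _))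
    have h3 : ν (p i * g) = ν v + ν (p i * g - v) := by rw [← map_add]; simp
    rw [h3]
    exact (abs_add_le _ _).trans (add_le_add h1 h2)
  have hfin : F.card * ‖ν‖ * δ ≤ ε / 2 := by
    linarith
  calc |ν g| = |∑ i : F, ν (p i * g)| := by rw [← map_sum, ← hsum]
    _ ≤ ∑ i : F, |ν (p i * g)| := Finset.abs_sum_le_sum_abs _ _
    _ ≤ ∑ i : F, (e i + ‖ν‖ * δ) := Finset.sum_le_sum fun i _ => hi i
    _ = ∑ k ∈ F, e k + F.card * ‖ν‖ * δ := by
      rw [Finset.sum_add_distrib, Finset.sum_coe_sort F e]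
      simp [mul_assoc]
    _ ≤ ε := by linarith [hesum F (Set.subset_univ _)]

/-- If `s` is an atom of none of the functionals `f ↦ T₁ f k`, it is not an atom of
`f ↦ ν (T₁ f)` either. -/
lemma exists_nhds_small {K : Type*} [TopologicalSpace K] [CompactSpace K] [T2Space K] [Countable K]
    (T₁ : C(X, ℝ) →L[ℝ] C(K, ℝ)) (ν : C(K, ℝ) →L[ℝ] ℝ) (s : X)
    (hs : ∀ k, s ∉ ⋃ n : ℕ, bigAtoms ((ContinuousMap.evalCLM ℝ k).comp T₁) (1 / ((n : ℝ) + 1)))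
    {ε : ℝ} (hε : 0 < ε) :
    ∃ V : Set X, IsOpen V ∧ s ∈ V ∧
      ∀ h : C(X, ℝ), ‖h‖ ≤ 1 → (∀ x ∉ V, h x = 0) → |ν (T₁ h)| ≤ ε := by
  set M := ‖T₁‖ + 1 with hM
  have hM0 : 0 < M := by positivity
  obtain ⟨F, δ, hδ, hF⟩ := exists_finset_small ν (div_pos hε hM0)
  obtain ⟨n, hn⟩ := exists_nat_one_div_lt (mul_pos hδ hM0)
  have hk : ∀ k, ∃ U : Set X, IsOpen U ∧ s ∈ U ∧
      ∀ h : C(X, ℝ), ‖h‖ ≤ 1 → (∀ x ∉ U, h x = 0) → |T₁ h k| ≤ 1 / ((n : ℝ) + 1) := by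
    intro k
    by_contra! hcon
    exact hs k (Set.mem_iUnion.2 ⟨n, hcon⟩)
  choose U hUo hsU hU using hk
  refine ⟨⋂ k ∈ F, U k, isOpen_biInter_finset fun k _ => hUo k,
    Set.mem_iInter₂.2 fun k _ => hsU k, fun h hh h0 => ?_⟩
  have h1 : ‖M⁻¹ • T₁ h‖ ≤ 1 := by
    rw [norm_smul, norm_inv, Real.norm_of_nonneg hM0.le, inv_mul_le_iff₀ hM0, mul_one]
    have := T₁.le_opNorm h
    have := mul_le_mul_of_nonneg_left hh (norm_nonneg T₁)
    linarith
  have h2 := hF (M⁻¹ • T₁ h) h1 (fun k hk => by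
    have := hU k h hh (fun x hx => h0 x fun hx' => hx (Set.mem_iInter₂.1 hx' k hk))
    rw [ContinuousMap.smul_apply, smul_eq_mul, abs_mul, abs_of_pos (inv_pos.2 hM0),
      inv_mul_lt_iff₀ hM0]
    linarith)
  rw [map_smul, smul_eq_mul, abs_mul, abs_of_pos (inv_pos.2 hM0), inv_mul_le_iff₀ hM0,
    mul_div_cancel₀ _ hM0.ne'] at h2
  exact h2

/-! ### The Daugavet equation -/

lemma dense_compl_of_countable [T2Space X] [PerfectSpace X] {A : Set X} (hA : A.Countable) :
    Dense Aᶜ := by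
  have : Aᶜ = ⋂ a ∈ A, {a}ᶜ := by
    ext x
    simp only [Set.mem_compl_iff, Set.mem_iInter, Set.mem_singleton_iff]
    exact ⟨fun hx a ha h => hx (h ▸ ha), fun h hx => h x hx rfl⟩
  rw [this]
  exact dense_biInter_of_isOpen (fun a _ => isOpen_compl_singleton) hA
    (fun a _ => dense_compl_singleton a)

end Daugavet

open Daugavet in
theorem daugavet_of_factors_through_CK {S : Type*} [TopologicalSpace S] [CompactSpace S]
    [T2Space S] [PerfectSpace S] [Nonempty S]
    {K : Type*} [TopologicalSpace K] [CompactSpace K] [T2Space K] [Countable K]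
    (T : C(S, ℝ) →L[ℝ] C(S, ℝ))
    (T₁ : C(S, ℝ) →L[ℝ] C(K, ℝ)) (T₂ : C(K, ℝ) →L[ℝ] C(S, ℝ))
    (hT : T = T₂.comp T₁) :
    ‖ContinuousLinearMap.id ℝ C(S, ℝ) + T‖ = 1 + ‖T‖ := by
  apply le_antisymm
  · refine (norm_add_le (ContinuousLinearMap.id ℝ C(S, ℝ)) T).trans ?_
    gcongr
    exact ContinuousLinearMap.norm_id_le
  refine le_of_forall_pos_le_add fun η hη => ?_
  set ε := η / 3 with hε
  have hε0 : 0 < ε := by positivity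
  -- A function in the unit ball and a point where its image nearly attains the norm of `T`.
  obtain ⟨f, hf, s₀, hs₀⟩ : ∃ f : C(S, ℝ), ‖f‖ ≤ 1 ∧ ∃ s₀, ‖T‖ - ε < T f s₀ := by
    obtain ⟨f, hf, hfT⟩ := T.exists_lt_apply_of_lt_opNorm (sub_lt_self ‖T‖ hε0)
    obtain ⟨s, hs⟩ : ∃ s, ‖T‖ - ε < |T f s| := by
      by_contra! hcon
      exact absurd ((ContinuousMap.norm_le_of_nonempty _).2 hcon) (not_le.2 hfT)
    rcases lt_abs.1 hs with h | h
    · exact ⟨f, hf.le, s, h⟩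
    · exact ⟨-f, by simpa using hf.le, s, by simpa using h⟩
  have hA : (⋃ k : K, ⋃ n : ℕ,
      bigAtoms ((ContinuousMap.evalCLM ℝ k).comp T₁) (1 / ((n : ℝ) + 1))).Countable :=
    Set.countable_iUnion fun k => countable_atoms _
  obtain ⟨s, hsA, hs⟩ := (dense_compl_of_countable hA).exists_mem_open
    (isOpen_lt continuous_const (T f).continuous) ⟨s₀, hs₀⟩
  obtain ⟨V, hVo, hsV, hV⟩ := exists_nhds_small T₁ ((ContinuousMap.evalCLM ℝ s).comp T₂) s
    (fun k hk => hsA (Set.mem_iUnion.2 ⟨k, hk⟩)) hε0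
  obtain ⟨p, hp0, hp1, hp⟩ := exists_continuous_zero_one_of_isClosed hVo.isClosed_compl
    isClosed_singleton (Set.disjoint_singleton_right.2 (not_not.2 hsV))
  have hps : p s = 1 := hp1 rfl
  have hfx : ∀ x, |f x| ≤ 1 := fun x => (f.norm_coe_le_norm x).trans hf
  -- `f + 2 • h = (1 - p) * f + p` is the modification of `f` near `s`, with value `1` at `s`.
  set h : C(S, ℝ) := (1 / 2 : ℝ) • (p * (1 - f)) with hh
  have hhx : ∀ x, h x = 1 / 2 * (p x * (1 - f x)) := fun x => rfl
  have hh1 : ‖h‖ ≤ 1 := by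
    rw [ContinuousMap.norm_le _ zero_le_one]
    intro x
    have h1 := abs_le.1 (hfx x)
    have h2 := hp x
    rw [hhx, Real.norm_eq_abs, abs_le]
    constructor <;> nlinarith [h2.1, h2.2]
  have hTh : |T h s| ≤ ε := by
    have := hV h hh1 (fun x hx => by rw [hhx, hp0 hx]; simp)
    rw [hT]
    exact this
  have hg1 : ‖f + (2 : ℝ) • h‖ ≤ 1 := by
    rw [ContinuousMap.norm_le _ zero_le_one]
    intro x
    have h1 := abs_le.1 (hfx x)
    have h2 := hp x
    rw [ContinuousMap.add_apply, ContinuousMap.smul_apply, smul_eq_mul, hhx, Real.norm_eq_abs,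
      abs_le]
    constructor <;> nlinarith [h2.1, h2.2]
  have hval : (ContinuousLinearMap.id ℝ C(S, ℝ) + T) (f + (2 : ℝ) • h) s
      = 1 + T f s + 2 * T h s := by
    simp only [_root_.add_apply, ContinuousLinearMap.id_apply, map_add, map_smul,
      ContinuousMap.add_apply, ContinuousMap.smul_apply, smul_eq_mul, hhx, hps]
    ring
  have hle : (ContinuousLinearMap.id ℝ C(S, ℝ) + T) (f + (2 : ℝ) • h) s
      ≤ ‖ContinuousLinearMap.id ℝ C(S, ℝ) + T‖ := by
    refine (le_abs_self _).trans ((ContinuousMap.norm_coe_le_norm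
      ((ContinuousLinearMap.id ℝ C(S, ℝ) + T) (f + (2 : ℝ) • h)) s).trans ?_)
    exact (ContinuousLinearMap.le_opNorm _ _).trans (mul_le_of_le_one_right (norm_nonneg _) hg1)
  have h4 := (abs_le.1 hTh).1
  have h5 : ‖T‖ - ε < T f s := hs
  linarith
end

section
/- Let S be a compact Hausdorff space and let T : C(S, ℂ) → C(S, ℂ) be a bounded linear operator on the Banach space of complex-valued continuous functions on S with the supremum norm. Then max over complex λ with |λ| = 1 of ‖I + λT‖ equals 1 + ‖T‖. -/
/-!
The upper bound `‖I + λT‖ ≤ 1 + ‖T‖` is the triangle inequality. For the lower bound, choose `f` in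
the unit ball and a point `s` with `|Tf(s)|` close to `‖T‖`. The value `f(s)` lies in the closed
unit disc, so it is a convex combination of two unimodular numbers `w` and `-w`. With a bump
function `h` at `s`, supported where `f` is close to `f(s)`, the functions
`f + (±w - f(s)) h` have norm at most `1 + ε`, take the values `±w` at `s`, and have `f` as a convex
combination. Hence one of them, say `g`, satisfies `|Tg(s)| ≥ |Tf(s)|`, while `|g(s)| = 1`
(`exists_unimodular_at`). Choosing the unimodular `λ` that aligns `λ Tg(s)` with `g(s)` gives
`|(g + λTg)(s)| = 1 + |Tg(s)|` (`exists_almost_daugavet`). The maximum is attained because the unit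
circle is compact.
-/

open Topology

lemma exists_phase (c : ℂ) : ∃ w : ℂ, ‖w‖ = 1 ∧ c = (‖c‖ : ℂ) * w := by
  refine ⟨Complex.exp (Complex.arg c * Complex.I), Complex.norm_exp_ofReal_mul_I _, ?_⟩
  exact (Complex.norm_mul_exp_arg_mul_I c).symm

lemma exists_aligning_phase (a b : ℂ) : ∃ lam : ℂ, ‖lam‖ = 1 ∧ ‖a + lam * b‖ = ‖a‖ + ‖b‖ := by
  obtain ⟨u, hu, ha⟩ := exists_phase a
  obtain ⟨v, hv, hb⟩ := exists_phase b
  have hv0 : v ≠ 0 := by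
    rintro rfl
    simp at hv
  refine ⟨u / v, by simp [hu, hv], ?_⟩
  have key : a + u / v * b = ((‖a‖ + ‖b‖ : ℝ) : ℂ) * u := by
    have h1 : u / v * b = (‖b‖ : ℂ) * u := by
      conv_lhs => rw [hb]
      field_simp
    rw [h1]
    conv_lhs => rw [ha]
    simp
    ring
  rw [key, norm_mul, hu, mul_one, Complex.norm_real, Real.norm_of_nonneg (by positivity)]

/-- Moving the value of `f` at `s` to a prescribed number `w` of the unit disc with a bump function
supported where `f` is `ε`-close to `f s` costs at most `ε` in norm. -/
lemma norm_perturb_le {S : Type*} [TopologicalSpace S] [CompactSpace S]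
    (f : C(S, ℂ)) (hf : ‖f‖ ≤ 1) (s : S) {ε : ℝ} (hε : 0 < ε) (h : C(S, ℂ)) (k : S → ℝ)
    (hk : ∀ x, k x ∈ Set.Icc (0 : ℝ) 1) (hhk : ∀ x, h x = (k x : ℂ))
    (hsupp : ∀ x, ε ≤ ‖f x - f s‖ → k x = 0) (w : ℂ) (hw : ‖w‖ ≤ 1) :
    ‖f + (w - f s) • h‖ ≤ 1 + ε := by
  rw [ContinuousMap.norm_le _ (by positivity)]
  intro x
  have hfx : ∀ y, ‖f y‖ ≤ 1 := fun y => (f.norm_coe_le_norm y).trans hf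
  simp only [ContinuousMap.add_apply, ContinuousMap.smul_apply, smul_eq_mul, hhk]
  by_cases hx : ε ≤ ‖f x - f s‖
  · rw [hsupp x hx]
    simp only [Complex.ofReal_zero, mul_zero, add_zero]
    linarith [hfx x]
  · obtain ⟨h0, h1⟩ := hk x
    have e : f x + (w - f s) * (k x : ℂ)
        = (f x - f s) + (((1 - k x : ℝ) : ℂ) * f s + (k x : ℂ) * w) := by
      push_cast
      ring
    have n1 : ‖((1 - k x : ℝ) : ℂ) * f s‖ ≤ 1 - k x := by
      rw [norm_mul, Complex.norm_real, Real.norm_of_nonneg (by linarith)]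
      exact mul_le_of_le_one_right (by linarith) (hfx s)
    have n2 : ‖(k x : ℂ) * w‖ ≤ k x := by
      rw [norm_mul, Complex.norm_real, Real.norm_of_nonneg h0]
      exact mul_le_of_le_one_right h0 hw
    rw [e]
    refine (norm_add_le _ _).trans ?_
    linarith [norm_add_le (((1 - k x : ℝ) : ℂ) * f s) ((k x : ℂ) * w), not_le.1 hx]

/-- A function in the unit ball can be replaced by one that is unimodular at `s`, without decreasing
the modulus of a linear functional and with an arbitrarily small increase of the norm. -/
lemma exists_unimodular_at {S : Type*} [TopologicalSpace S] [CompactSpace S] [T2Space S]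
    (φ : C(S, ℂ) →ₗ[ℂ] ℂ) (f : C(S, ℂ)) (hf : ‖f‖ ≤ 1) (s : S) {ε : ℝ} (hε : 0 < ε) :
    ∃ g : C(S, ℂ), ‖g‖ ≤ 1 + ε ∧ ‖g s‖ = 1 ∧ ‖φ f‖ ≤ ‖φ g‖ := by
  have hcl : IsClosed {x | ε ≤ ‖f x - f s‖} := isClosed_le continuous_const (by fun_prop)
  obtain ⟨k, hk0, hk1, hk⟩ := exists_continuous_zero_one_of_isClosed hcl
    (isClosed_singleton (x := s)) (by simp [hε])
  let h : C(S, ℂ) := ⟨fun x => (k x : ℂ), by fun_prop⟩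
  have hs : h s = 1 := by
    have : k s = 1 := hk1 rfl
    simp [h, this]
  obtain ⟨w, hw, hc⟩ := exists_phase (f s)
  have hr : ‖f s‖ ≤ 1 := (f.norm_coe_le_norm s).trans hf
  have hbound := norm_perturb_le f hf s hε h k hk (fun _ => rfl) (fun x hx => hk0 hx)
  set r := ‖f s‖
  have hr0 : 0 ≤ r := norm_nonneg _
  set g₁ := f + (w - f s) • h with hg₁
  set g₂ := f + (-w - f s) • h with hg₂
  have hcomb : f = (((1 + r) / 2 : ℝ) : ℂ) • g₁ + (((1 - r) / 2 : ℝ) : ℂ) • g₂ := by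
    ext x
    simp only [hg₁, hg₂, ContinuousMap.add_apply, ContinuousMap.smul_apply, smul_eq_mul]
    rw [hc]
    push_cast
    ring
  by_cases h1 : ‖φ f‖ ≤ ‖φ g₁‖
  · exact ⟨g₁, hbound w hw.le, by simp [hg₁, hs, hw], h1⟩
  · refine ⟨g₂, hbound (-w) (by simp [hw]), by simp [hg₂, hs, hw], ?_⟩
    by_contra h2
    push Not at h1 h2
    have hle : ‖φ f‖ ≤ (1 + r) / 2 * ‖φ g₁‖ + (1 - r) / 2 * ‖φ g₂‖ := by
      conv_lhs => rw [hcomb]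
      rw [map_add, map_smul, map_smul]
      refine (norm_add_le _ _).trans ?_
      rw [norm_smul, norm_smul, Complex.norm_real, Complex.norm_real,
        Real.norm_of_nonneg (by linarith), Real.norm_of_nonneg (by linarith)]
    nlinarith

/-- The equality of the theorem up to `ε`, for a `λ` depending on `ε`. -/
lemma exists_almost_daugavet {S : Type*} [TopologicalSpace S] [CompactSpace S] [T2Space S]
    [Nonempty S] (T : C(S, ℂ) →L[ℂ] C(S, ℂ)) {ε : ℝ} (hε : 0 < ε) :
    ∃ lam : ℂ, ‖lam‖ = 1 ∧
      1 + ‖T‖ - ε ≤ ‖ContinuousLinearMap.id ℂ C(S, ℂ) + lam • T‖ * (1 + ε) := by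
  obtain ⟨f, hf, hTf⟩ := T.exists_lt_apply_of_lt_opNorm (sub_lt_self ‖T‖ hε)
  obtain ⟨s, hs⟩ : ∃ s, ‖T‖ - ε < ‖T f s‖ := by
    by_contra hcon
    push Not at hcon
    exact absurd ((ContinuousMap.norm_le_of_nonempty _).2 hcon) (not_le.2 hTf)
  let φ : C(S, ℂ) →ₗ[ℂ] ℂ :=
    { toFun := fun g => T g s
      map_add' := by simp
      map_smul' := by simp }
  obtain ⟨g, hg, hgs, hφ⟩ := exists_unimodular_at φ f hf.le s hε
  change ‖T f s‖ ≤ ‖T g s‖ at hφ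
  obtain ⟨lam, hlam, heq⟩ := exists_aligning_phase (g s) (T g s)
  refine ⟨lam, hlam, ?_⟩
  calc 1 + ‖T‖ - ε ≤ ‖g s + lam * T g s‖ := by rw [heq, hgs]; linarith
    _ = ‖(ContinuousLinearMap.id ℂ C(S, ℂ) + lam • T) g s‖ := by simp
    _ ≤ ‖(ContinuousLinearMap.id ℂ C(S, ℂ) + lam • T) g‖ := ContinuousMap.norm_coe_le_norm _ s
    _ ≤ ‖ContinuousLinearMap.id ℂ C(S, ℂ) + lam • T‖ * ‖g‖ := ContinuousLinearMap.le_opNorm _ g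
    _ ≤ _ := by gcongr

theorem daugavet_complex_max {S : Type*} [TopologicalSpace S] [CompactSpace S] [T2Space S]
    [Nonempty S] (T : C(S, ℂ) →L[ℂ] C(S, ℂ)) :
    IsGreatest {x : ℝ | ∃ lam : ℂ, ‖lam‖ = 1 ∧
      x = ‖ContinuousLinearMap.id ℂ C(S, ℂ) + lam • T‖} (1 + ‖T‖) := by
  have upper : ∀ lam : ℂ, ‖lam‖ = 1 →
      ‖ContinuousLinearMap.id ℂ C(S, ℂ) + lam • T‖ ≤ 1 + ‖T‖ := by
    intro lam hlam
    refine (norm_add_le _ _).trans ?_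
    rw [norm_smul, hlam, one_mul]
    gcongr
    exact ContinuousLinearMap.norm_id_le
  constructor
  · obtain ⟨lam, hlam, hmax⟩ := (isCompact_sphere (0 : ℂ) 1).exists_isMaxOn
      ⟨1, by simp⟩ (f := fun lam : ℂ => ‖ContinuousLinearMap.id ℂ C(S, ℂ) + lam • T‖)
      (by fun_prop)
    have hlam1 : ‖lam‖ = 1 := by simpa using hlam
    refine ⟨lam, hlam1, le_antisymm ?_ (upper lam hlam1)⟩
    set M := ‖ContinuousLinearMap.id ℂ C(S, ℂ) + lam • T‖ with hM
    have hM0 : 0 ≤ M := norm_nonneg _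
    refine le_of_forall_pos_le_add fun δ hδ => ?_
    -- `ε = δ / (1 + M)` turns the error `ε (1 + M)` into `δ`.
    have hε : 0 < δ / (1 + M) := by positivity
    obtain ⟨mu, hmu, hle⟩ := exists_almost_daugavet T hε
    have hmuM : ‖ContinuousLinearMap.id ℂ C(S, ℂ) + mu • T‖ ≤ M := hmax (by simpa using hmu)
    have h1 := hle.trans (mul_le_mul_of_nonneg_right hmuM (by linarith))
    have h2 : δ / (1 + M) * (1 + M) = δ := by field_simp
    linarith
  · rintro x ⟨lam, hlam, rfl⟩
    exact upper lam hlam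
end
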